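/- Let Ω ⊂ ℝⁿ be a bounded open convex set with nonempty interior, and let f be a continuous function on the closure of Ω that is positive and subharmonic on Ω (Δf ≥ 0). Then ∫_Ω f dx ≤ (|Ω|^{1/n} / (ω_n^{1/n} √n)) ∫_{∂Ω} f dσ, where ω_n is the volume of the unit ball in ℝⁿ. -/

import Mathlib

open MeasureTheory

/-- The Laplacian of `f : ℝⁿ → ℝ`, as the sum of the second partial derivatives. -/
noncomputable def laplacian {n : ℕ} (f : EuclideanSpace ℝ (Fin n) → ℝ)
    (x : EuclideanSpace ℝ (Fin n)) : ℝ :=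
  ∑ i : Fin n,
    fderiv ℝ (fun y => fderiv ℝ f y (EuclideanSpace.single i (1 : ℝ))) x
      (EuclideanSpace.single i (1 : ℝ))


section PL
open Set Pointwise ENNReal

theorem bm_one_compact {A B : Set ℝ} (hA : IsCompact A) (hB : IsCompact B)
    (hAn : A.Nonempty) (hBn : B.Nonempty) :
    volume A + volume B ≤ volume (A + B) := by
  obtain ⟨a, haA, ha⟩ := hA.exists_isGreatest hAn
  obtain ⟨b, hbB, hb⟩ := hB.exists_isLeast hBn
  have h1 : (fun x => x + b) '' A ∪ (fun x => a + x) '' B ⊆ A + B := by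
    rintro _ (⟨x, hx, rfl⟩ | ⟨x, hx, rfl⟩)
    · exact Set.add_mem_add hx hbB
    · exact Set.add_mem_add haA hx
  have hBm : MeasurableSet ((fun x => a + x) '' B) := (hB.image (by fun_prop)).measurableSet
  have h2 : AEDisjoint volume ((fun x => x + b) '' A) ((fun x => a + x) '' B) := by
    refine measure_mono_null (t := {a + b}) ?_ (by simp)
    rintro _ ⟨⟨x, hx, rfl⟩, ⟨y, hy, hxy⟩⟩
    have := ha hx
    have := hb hy
    simp only [mem_singleton_iff] at *
    linarith
  calc volume A + volume B = volume ((fun x => x + b) '' A) + volume ((fun x => a + x) '' B) := by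
        congr 1
        · simp
        · simp
    _ = volume ((fun x => x + b) '' A ∪ (fun x => a + x) '' B) :=
        (measure_union₀ hBm.nullMeasurableSet h2).symm
    _ ≤ _ := measure_mono h1

theorem bm_one {A B : Set ℝ} (hA : MeasurableSet A) (hB : MeasurableSet B)
    (hAn : A.Nonempty) (hBn : B.Nonempty) :
    volume A + volume B ≤ volume (A + B) := by
  obtain ⟨a0, ha0⟩ := hAn
  obtain ⟨b0, hb0⟩ := hBn
  have key : ∀ K L : Set ℝ, K ⊆ A → IsCompact K → L ⊆ B → IsCompact L →
      volume K + volume L ≤ volume (A + B) := by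
    intro K L hK hKc hL hLc
    have := bm_one_compact (hKc.union isCompact_singleton) (hLc.union isCompact_singleton)
      (A := K ∪ {a0}) (B := L ∪ {b0}) ⟨a0, by simp⟩ ⟨b0, by simp⟩
    refine le_trans (add_le_add (measure_mono subset_union_left) (measure_mono subset_union_left))
      (this.trans (measure_mono ?_))
    apply Set.add_subset_add <;> apply union_subset <;> simp_all
  rcases eq_or_ne (volume A) 0 with hA0 | hA0
  · rw [hA0, zero_add, hB.measure_eq_iSup_isCompact]
    simp only [iSup_le_iff]
    intro L hL hLc
    simpa using key ∅ L (empty_subset _) isCompact_empty hL hLc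
  rcases eq_or_ne (volume B) 0 with hB0 | hB0
  · rw [hB0, add_zero, hA.measure_eq_iSup_isCompact]
    simp only [iSup_le_iff]
    intro L hL hLc
    simpa using key L ∅ hL hLc (empty_subset _) isCompact_empty
  refine le_of_forall_lt fun x hx => ?_
  obtain ⟨y, hy, z, hz, hxyz⟩ := ENNReal.exists_lt_add_of_lt_add hx hA0 hB0
  obtain ⟨K, hK, hKc, hK2⟩ := hA.exists_lt_isCompact hy
  obtain ⟨L, hL, hLc, hL2⟩ := hB.exists_lt_isCompact hz
  exact hxyz.trans_le ((add_le_add hK2.le hL2.le).trans (key K L hK hKc hL hLc))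

/-- Normalised one-dimensional Prékopa–Leindler. -/
theorem pl_norm {lam : ℝ} (h0 : 0 < lam) (h1 : lam < 1) {f g h : ℝ → ℝ}
    (hf : Measurable f) (hg : Measurable g) (hh : Measurable h)
    (hf0 : ∀ x, 0 ≤ f x) (hg0 : ∀ x, 0 ≤ g x) (hh0 : ∀ x, 0 ≤ h x)
    (hf1 : ∀ x, f x ≤ 1) (hg1 : ∀ x, g x ≤ 1)
    (hfs : ∀ s < 1, ∃ x, s < f x) (hgs : ∀ s < 1, ∃ x, s < g x)
    (H : ∀ x y s, 0 < s → s < f x → s < g y → s ≤ h (lam * x + (1 - lam) * y)) :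
    ENNReal.ofReal lam * (∫⁻ x, ENNReal.ofReal (f x)) +
      ENNReal.ofReal (1 - lam) * (∫⁻ x, ENNReal.ofReal (g x)) ≤ ∫⁻ x, ENNReal.ofReal (h x) := by
  rw [lintegral_eq_lintegral_meas_lt _ (Filter.Eventually.of_forall hf0) hf.aemeasurable,
    lintegral_eq_lintegral_meas_lt _ (Filter.Eventually.of_forall hg0) hg.aemeasurable,
    lintegral_eq_lintegral_meas_le _ (Filter.Eventually.of_forall hh0) hh.aemeasurable]
  have mf : Measurable (fun t => volume {a | t < f a}) :=
    Antitone.measurable (fun s t hst => measure_mono fun a ha => lt_of_le_of_lt hst ha)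
  have mg : Measurable (fun t => volume {a | t < g a}) :=
    Antitone.measurable (fun s t hst => measure_mono fun a ha => lt_of_le_of_lt hst ha)
  rw [← lintegral_const_mul _ mf, ← lintegral_const_mul _ mg,
    ← lintegral_add_left (mf.const_mul _)]
  refine setLIntegral_mono' measurableSet_Ioi ?_
  intro s hs
  rcases le_or_gt 1 s with h1s | h1s
  · have e1 : {a | s < f a} = ∅ := by
      ext a; simp; linarith [hf1 a]
    have e2 : {a | s < g a} = ∅ := by
      ext a; simp; linarith [hg1 a]
    simp [e1, e2]
  · have hA : MeasurableSet {a | s < f a} := measurableSet_lt measurable_const hf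
    have hB : MeasurableSet {a | s < g a} := measurableSet_lt measurable_const hg
    have l0 : 0 < 1 - lam := by linarith
    have key := bm_one (A := lam • {a | s < f a}) (B := (1 - lam) • {a | s < g a})
      (hA.const_smul_of_ne_zero h0.ne') (hB.const_smul_of_ne_zero l0.ne')
      (show Set.Nonempty {a | s < f a} from hfs s h1s).smul_set
      (show Set.Nonempty {a | s < g a} from hgs s h1s).smul_set
    simp only [Measure.addHaar_smul, Module.finrank_self, pow_one, abs_of_pos h0,
      abs_of_pos l0] at key
    refine key.trans (measure_mono ?_)
    rintro _ ⟨_, ⟨x, hx, rfl⟩, _, ⟨y, hy, rfl⟩, rfl⟩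
    exact H x y s hs hx hy

theorem ennreal_amgm {lam : ℝ} (h0 : 0 < lam) (h1 : lam < 1) (x y : ℝ≥0∞) :
    x ^ lam * y ^ (1 - lam) ≤ ENNReal.ofReal lam * x + ENNReal.ofReal (1 - lam) * y := by
  have l0 : 0 < 1 - lam := by linarith
  rcases eq_or_ne x ⊤ with rfl | hx
  · rw [ENNReal.mul_top (by simpa using h0)]; simp
  rcases eq_or_ne y ⊤ with rfl | hy
  · rw [ENNReal.mul_top (by simpa using h1)]; simp
  lift x to NNReal using hx
  lift y to NNReal using hy
  have := NNReal.geom_mean_le_arith_mean2_weighted lam.toNNReal (1 - lam).toNNReal x y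
    (by rw [← Real.toNNReal_add h0.le l0.le]; simp)
  rw [Real.coe_toNNReal _ h0.le, Real.coe_toNNReal _ l0.le] at this
  rw [← ENNReal.coe_rpow_of_nonneg _ h0.le, ← ENNReal.coe_rpow_of_nonneg _ l0.le]
  unfold ENNReal.ofReal
  exact_mod_cast this

end PL


section PL
open Set Pointwise ENNReal

theorem ennreal_div_rpow {lam : ℝ} (h0 : 0 < lam) (h1 : lam < 1) (x y a b : ℝ≥0∞)
    (ha : a ≠ 0) (hb : b ≠ 0) (ha' : a ≠ ⊤) (hb' : b ≠ ⊤) :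
    (x / a) ^ lam * (y / b) ^ (1 - lam) = (x ^ lam * y ^ (1 - lam)) / (a ^ lam * b ^ (1 - lam)) := by
  have l0 : 0 < 1 - lam := by linarith
  rw [ENNReal.div_rpow_of_nonneg _ _ h0.le, ENNReal.div_rpow_of_nonneg _ _ l0.le]
  simp only [div_eq_mul_inv]
  rw [ENNReal.mul_inv]
  · ring
  · left; simp [ha, ha']
  · left; simp [ha, ha', h0.le]

theorem pl_one_bdd {lam : ℝ} (h0 : 0 < lam) (h1 : lam < 1) {f g h : ℝ → ℝ≥0∞}
    (hf : Measurable f) (hg : Measurable g) (hh : Measurable h) (C : ℝ≥0∞) (hC : C ≠ ⊤)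
    (hfC : ∀ x, f x ≤ C) (hgC : ∀ x, g x ≤ C)
    (H : ∀ x y, f x ^ lam * g y ^ (1 - lam) ≤ h (lam * x + (1 - lam) * y)) :
    (∫⁻ x, f x) ^ lam * (∫⁻ x, g x) ^ (1 - lam) ≤ ∫⁻ x, h x := by
  have l0 : 0 < 1 - lam := by linarith
  set a := ⨆ x, f x with ha_def
  set b := ⨆ x, g x with hb_def
  have hfa : ∀ x, f x ≤ a := le_iSup f
  have hgb : ∀ x, g x ≤ b := le_iSup g
  have ha' : a ≠ ⊤ := ne_top_of_le_ne_top hC (iSup_le hfC)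
  have hb' : b ≠ ⊤ := ne_top_of_le_ne_top hC (iSup_le hgC)
  rcases eq_or_ne a 0 with ha | ha
  · have : f = fun _ => 0 := funext fun x => le_antisymm ((hfa x).trans ha.le) bot_le
    simp [this, h0]
  rcases eq_or_ne b 0 with hb | hb
  · have : g = fun _ => 0 := funext fun x => le_antisymm ((hgb x).trans hb.le) bot_le
    simp [this, l0]
  set c := a ^ lam * b ^ (1 - lam) with hc_def
  have hc : c ≠ 0 := by
    simp [hc_def, ha, ha', hb, hb']
  have hc' : c ≠ ⊤ := by
    apply ENNReal.mul_ne_top <;> apply ENNReal.rpow_ne_top_of_nonneg <;> first | assumption | linarith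
  have hfa1 : ∀ x, f x / a ≤ 1 := fun x => ENNReal.div_le_of_le_mul (by simpa using hfa x)
  have hgb1 : ∀ x, g x / b ≤ 1 := fun x => ENNReal.div_le_of_le_mul (by simpa using hgb x)
  have sup_aux : ∀ (f : ℝ → ℝ≥0∞) (a : ℝ≥0∞), a ≠ 0 → a ≠ ⊤ → a = ⨆ x, f x → (∀ x, f x / a ≤ 1) →
      ∀ s < (1:ℝ), ∃ x, s < (f x / a).toReal := by
    intro f a ha ha' hfa h1 s hs
    have : ENNReal.ofReal s * a < ⨆ x, f x := by
      rw [← hfa]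
      calc ENNReal.ofReal s * a < 1 * a := by
            apply ENNReal.mul_lt_mul_left ha ha'
            simpa using hs
        _ = a := one_mul a
    obtain ⟨x, hx⟩ := lt_iSup_iff.1 this
    refine ⟨x, ?_⟩
    by_contra! hcon
    have h2 := ENNReal.ofReal_le_ofReal hcon
    rw [ENNReal.ofReal_toReal (ne_top_of_le_ne_top one_ne_top (h1 x)),
      ENNReal.div_le_iff ha ha'] at h2
    exact absurd hx (not_lt.2 h2)
  have key := pl_norm h0 h1 (f := fun x => (f x / a).toReal) (g := fun x => (g x / b).toReal)
    (h := fun x => (min (h x / c) 1).toReal) (by fun_prop) (by fun_prop) (by fun_prop)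
    (fun x => toReal_nonneg) (fun x => toReal_nonneg) (fun x => toReal_nonneg)
    (fun x => ENNReal.toReal_le_of_le_ofReal zero_le_one (by simpa using hfa1 x))
    (fun x => ENNReal.toReal_le_of_le_ofReal zero_le_one (by simpa using hgb1 x))
    (sup_aux f a ha ha' rfl hfa1) (sup_aux g b hb hb' rfl hgb1) ?_
  · have e1 : ∀ x, ENNReal.ofReal ((f x / a).toReal) = f x / a := fun x =>
      ENNReal.ofReal_toReal (ne_top_of_le_ne_top one_ne_top (hfa1 x))
    have e2 : ∀ x, ENNReal.ofReal ((g x / b).toReal) = g x / b := fun x =>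
      ENNReal.ofReal_toReal (ne_top_of_le_ne_top one_ne_top (hgb1 x))
    have e3 : ∀ x, ENNReal.ofReal ((min (h x / c) 1).toReal) ≤ h x / c := fun x =>
      ENNReal.ofReal_toReal_le.trans (min_le_left _ _)
    simp only [e1, e2] at key
    have key2 := (ennreal_amgm h0 h1 (∫⁻ x, f x / a) (∫⁻ x, g x / b)).trans
      (key.trans (lintegral_mono e3))
    simp only [div_eq_mul_inv] at key2
    rw [lintegral_mul_const _ hf, lintegral_mul_const _ hg, lintegral_mul_const _ hh] at key2
    simp only [← div_eq_mul_inv] at key2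
    rw [ennreal_div_rpow h0 h1 _ _ _ _ ha hb ha' hb'] at key2
    rwa [ENNReal.div_le_iff hc hc', ENNReal.div_mul_cancel hc hc'] at key2
  · intro x y s hs hsf hsg
    have t1 : ENNReal.ofReal s ≤ f x / a :=
      (ENNReal.ofReal_le_iff_le_toReal (ne_top_of_le_ne_top one_ne_top (hfa1 x))).2 hsf.le
    have t2 : ENNReal.ofReal s ≤ g y / b :=
      (ENNReal.ofReal_le_iff_le_toReal (ne_top_of_le_ne_top one_ne_top (hgb1 y))).2 hsg.le
    refine (ENNReal.ofReal_le_iff_le_toReal (ne_top_of_le_ne_top one_ne_top (min_le_right _ _))).1 ?_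
    refine le_min ?_ (t1.trans (hfa1 x))
    calc ENNReal.ofReal s = ENNReal.ofReal s ^ lam * ENNReal.ofReal s ^ (1 - lam) := by
          rw [← ENNReal.rpow_add _ _ (by simpa using hs) ENNReal.ofReal_ne_top]; simp
      _ ≤ (f x / a) ^ lam * (g y / b) ^ (1 - lam) := by gcongr
      _ = (f x ^ lam * g y ^ (1 - lam)) / c := ennreal_div_rpow h0 h1 _ _ _ _ ha hb ha' hb'
      _ ≤ _ := by gcongr; exact H x y

theorem pl_one {lam : ℝ} (h0 : 0 < lam) (h1 : lam < 1) {f g h : ℝ → ℝ≥0∞}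
    (hf : Measurable f) (hg : Measurable g) (hh : Measurable h)
    (H : ∀ x y, f x ^ lam * g y ^ (1 - lam) ≤ h (lam * x + (1 - lam) * y)) :
    (∫⁻ x, f x) ^ lam * (∫⁻ x, g x) ^ (1 - lam) ≤ ∫⁻ x, h x := by
  have l0 : 0 < 1 - lam := by linarith
  rcases eq_or_ne (∫⁻ x, f x) 0 with hf0 | hf0
  · simp [hf0, h0]
  rcases eq_or_ne (∫⁻ x, g x) 0 with hg0 | hg0
  · simp [hg0, l0]
  have tend : ∀ f : ℝ → ℝ≥0∞, Measurable f →
      Filter.Tendsto (fun k : ℕ => ∫⁻ x, min (f x) k) Filter.atTop (nhds (∫⁻ x, f x)) := by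
    intro f hf
    apply lintegral_tendsto_of_tendsto_of_monotone
    · intro k; exact (hf.min measurable_const).aemeasurable
    · refine Filter.Eventually.of_forall fun x k l hkl => ?_
      dsimp only
      gcongr
    · refine Filter.Eventually.of_forall fun x => ?_
      have := (tendsto_const_nhds (x := f x)).min ENNReal.tendsto_nat_nhds_top
      simpa using this
  have lim := ENNReal.Tendsto.mul (((ENNReal.continuous_rpow_const (y := lam)).tendsto _).comp (tend f hf))
    (Or.inl (by simp [hf0, h0.le, h0])) (((ENNReal.continuous_rpow_const (y := 1 - lam)).tendsto _).comp (tend g hg))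
    (Or.inl (by simp [hg0, l0, h1.le]))
  refine le_of_tendsto' lim fun k => ?_
  refine pl_one_bdd h0 h1 (hf.min measurable_const) (hg.min measurable_const) hh k (by simp)
    (fun x => min_le_right _ _) (fun x => min_le_right _ _) fun x y => le_trans ?_ (H x y)
  gcongr <;> exact min_le_left _ _

end PL


section PL
open Set Pointwise ENNReal

theorem pl_pi {lam : ℝ} (h0 : 0 < lam) (h1 : lam < 1) : ∀ (n : ℕ) {f g h : (Fin n → ℝ) → ℝ≥0∞}
    (_ : Measurable f) (_ : Measurable g) (_ : Measurable h)
    (_ : ∀ x y, f x ^ lam * g y ^ (1 - lam) ≤ h (lam • x + (1 - lam) • y)),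
    (∫⁻ x, f x) ^ lam * (∫⁻ x, g x) ^ (1 - lam) ≤ ∫⁻ x, h x := by
  intro n
  induction n with
  | zero =>
    intro f g h hf hg hh H
    rw [Measure.volume_pi_eq_dirac]
    simp only [lintegral_dirac]
    convert H isEmptyElim isEmptyElim using 2
  | succ n ih =>
    intro f g h hf hg hh H
    have hmp := (volume_preserving_piFinSuccAbove (fun _ : Fin (n+1) => ℝ) 0).symm
    set e := (MeasurableEquiv.piFinSuccAbove (fun _ : Fin (n+1) => ℝ) 0).symm with he
    have red : ∀ f : (Fin (n+1) → ℝ) → ℝ≥0∞, Measurable f →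
        ∫⁻ x, f x = ∫⁻ x : ℝ, ∫⁻ y : Fin n → ℝ, f (e (x, y)) := by
      intro f hf
      rw [← hmp.lintegral_comp hf]
      exact lintegral_prod _ (hf.comp e.measurable).aemeasurable
    rw [red f hf, red g hg, red h hh]
    have mm : ∀ f : (Fin (n+1) → ℝ) → ℝ≥0∞, Measurable f →
        Measurable (fun x : ℝ => ∫⁻ y : Fin n → ℝ, f (e (x, y))) := by
      intro f hf
      exact (hf.comp e.measurable).lintegral_prod_right'
    refine pl_one h0 h1 (mm f hf) (mm g hg) (mm h hh) ?_
    intro x y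
    refine ih (hf.comp (e.measurable.comp measurable_prodMk_left))
      (hg.comp (e.measurable.comp measurable_prodMk_left))
      (hh.comp (e.measurable.comp measurable_prodMk_left)) ?_
    intro u v
    refine (H (e (x, u)) (e (y, v))).trans (le_of_eq ?_)
    congr 1
    ext i
    simp only [he, MeasurableEquiv.piFinSuccAbove, MeasurableEquiv.symm_mk, MeasurableEquiv.coe_mk]
    refine Fin.cases ?_ (fun j => ?_) i <;> simp [Fin.insertNthEquiv]

theorem pl_euclid {lam : ℝ} (h0 : 0 < lam) (h1 : lam < 1) (n : ℕ)
    {f g h : EuclideanSpace ℝ (Fin n) → ℝ≥0∞}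
    (hf : Measurable f) (hg : Measurable g) (hh : Measurable h)
    (H : ∀ x y, f x ^ lam * g y ^ (1 - lam) ≤ h (lam • x + (1 - lam) • y)) :
    (∫⁻ x, f x) ^ lam * (∫⁻ x, g x) ^ (1 - lam) ≤ ∫⁻ x, h x := by
  have hmp := PiLp.volume_preserving_toLp (Fin n)
  rw [← hmp.lintegral_comp hf, ← hmp.lintegral_comp hg, ← hmp.lintegral_comp hh]
  refine pl_pi h0 h1 n (hf.comp hmp.measurable) (hg.comp hmp.measurable) (hh.comp hmp.measurable) ?_
  intro x y
  exact H _ _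

theorem pow_add_ge (a b : ℝ) (ha : 0 ≤ a) (hb : 0 ≤ b) (n : ℕ) :
    a ^ n + n * a ^ (n - 1) * b ≤ (a + b) ^ n := by
  induction n with
  | zero => simp
  | succ n ih =>
    rcases n with _ | n
    · simp
    · have := mul_le_mul_of_nonneg_right ih (add_nonneg ha hb)
      rw [pow_succ (a + b)]
      refine le_trans ?_ this
      simp only [Nat.add_sub_cancel] at *
      push_cast
      have : 0 ≤ (n + 1 : ℝ) * a ^ n * b * b := by positivity
      simp only [pow_succ] at *
      nlinarith [this]

/-- Isoperimetric inequality, infinitesimal Brunn–Minkowski form. -/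
theorem iso_thickening (n : ℕ) (hn : 0 < n) (A : Set (EuclideanSpace ℝ (Fin n))) (hA : IsOpen A)
    (hA0 : volume A ≠ 0) (hAf : volume A ≠ ⊤) (r : ℝ) (hr : 0 < r) :
    ENNReal.ofReal ((volume A).toReal + r * (n *
      (volume (Metric.ball (0 : EuclideanSpace ℝ (Fin n)) 1)).toReal ^ ((n : ℝ)⁻¹) *
      ((volume A).toReal ^ ((n : ℝ)⁻¹)) ^ (n - 1))) ≤ volume (Metric.thickening r A) := by
  set w := (volume (Metric.ball (0 : EuclideanSpace ℝ (Fin n)) 1)).toReal with hw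
  have hwt : volume (Metric.ball (0 : EuclideanSpace ℝ (Fin n)) 1) ≠ ⊤ := measure_ball_lt_top.ne
  have hw0 : 0 < w := ENNReal.toReal_pos (Metric.measure_ball_pos _ _ one_pos).ne' hwt
  set m := (volume A).toReal with hm
  have hm0 : 0 < m := ENNReal.toReal_pos hA0 hAf
  have hn' : (n : ℝ) ≠ 0 := by positivity
  set a := m ^ ((n : ℝ)⁻¹) with ha
  set b := r * w ^ ((n : ℝ)⁻¹) with hb
  have ha0 : 0 < a := by positivity
  have hb0 : 0 < b := by positivity
  have ham : a ^ n = m := Real.rpow_inv_natCast_pow hm0.le hn.ne'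
  have hbm : b ^ n = r ^ n * w := by rw [hb, mul_pow, Real.rpow_inv_natCast_pow hw0.le hn.ne']
  set lam := a / (a + b) with hlam
  have h0 : 0 < lam := by positivity
  have h1' : 1 - lam = b / (a + b) := by rw [hlam]; field_simp; ring
  have l0 : 0 < 1 - lam := by rw [h1']; positivity
  have h1 : lam < 1 := by linarith
  have key := pl_euclid h0 h1 n (f := indicator (lam⁻¹ • A) 1) 
    (g := indicator ((1 - lam)⁻¹ • Metric.ball (0 : EuclideanSpace ℝ (Fin n)) r) 1) (h := indicator (Metric.thickening r A) 1)
    (measurable_one.indicator (hA.measurableSet.const_smul_of_ne_zero (by positivity)))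
    (measurable_one.indicator (Metric.isOpen_ball.measurableSet.const_smul_of_ne_zero (by positivity)))
    (measurable_one.indicator Metric.isOpen_thickening.measurableSet) ?_
  · rw [lintegral_indicator_one (hA.measurableSet.const_smul_of_ne_zero (by positivity)),
      lintegral_indicator_one (Metric.isOpen_ball.measurableSet.const_smul_of_ne_zero (by positivity)),
      lintegral_indicator_one Metric.isOpen_thickening.measurableSet,
      Measure.addHaar_smul, Measure.addHaar_smul, Measure.addHaar_ball_of_pos _ _ hr,
      finrank_euclideanSpace_fin] at key
    refine le_trans ?_ key
    have e1 : ENNReal.ofReal |lam⁻¹ ^ n| * volume A = ENNReal.ofReal ((a + b) ^ n) := by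
      rw [← ENNReal.ofReal_toReal hAf, ← hm, ← ENNReal.ofReal_mul (by positivity),
        abs_of_pos (by positivity), ← ham, ← mul_pow]
      congr 2
      rw [hlam]; field_simp
    have e2 : ENNReal.ofReal |(1 - lam)⁻¹ ^ n| * (ENNReal.ofReal (r ^ n) * volume (Metric.ball (0 : EuclideanSpace ℝ (Fin n)) 1))
        = ENNReal.ofReal ((a + b) ^ n) := by
      rw [← ENNReal.ofReal_toReal hwt, ← hw, ← ENNReal.ofReal_mul (by positivity),
        ← ENNReal.ofReal_mul (by positivity),
        abs_of_pos (by positivity), ← hbm, ← mul_pow]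
      congr 2
      rw [h1']; field_simp
    rw [e1, e2, ← ENNReal.rpow_add _ _ (by simp; positivity) ENNReal.ofReal_ne_top]
    simp only [add_sub_cancel, ENNReal.rpow_one]
    apply ENNReal.ofReal_le_ofReal
    refine le_trans (le_of_eq ?_) (pow_add_ge a b ha0.le hb0.le n)
    rw [ham, hb]; ring
  · intro x y
    by_cases hx : x ∈ lam⁻¹ • A
    · by_cases hy : y ∈ (1 - lam)⁻¹ • Metric.ball (0 : EuclideanSpace ℝ (Fin n)) r
      · obtain ⟨p, hp, rfl⟩ := hx
        obtain ⟨q, hq, rfl⟩ := hy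
        have : lam • lam⁻¹ • p + (1 - lam) • (1 - lam)⁻¹ • q ∈ Metric.thickening r A := by
          rw [smul_inv_smul₀ h0.ne', smul_inv_smul₀ l0.ne', Metric.mem_thickening_iff]
          refine ⟨p, hp, ?_⟩
          simpa [dist_eq_norm] using hq
        simp [this, smul_mem_smul_set hp, smul_mem_smul_set hq]
      · simp [hy, l0]
    · simp [hx, h0]

end PL


section Poisson

abbrev Eu (n : ℕ) := EuclideanSpace ℝ (Fin n)

noncomputable def bas {n : ℕ} (i : Fin n) : Eu n := EuclideanSpace.single i (1 : ℝ)

noncomputable def nbAvg {n : ℕ} (h : ℝ) (g : Eu n → ℝ) (x : Eu n) : ℝ :=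
  (∑ i, (g (x + h • bas i) + g (x - h • bas i))) / (2 * n)

open Classical in
noncomputable def pstep {n : ℕ} (Ω : Set (Eu n)) (F : Eu n → ℝ) (h : ℝ) (g : Eu n → ℝ) (x : Eu n) : ℝ :=
  if x ∈ Ω then nbAvg h g x + h ^ 2 / (2 * n) * F x else 0

noncomputable def pit {n : ℕ} (Ω : Set (Eu n)) (F : Eu n → ℝ) (h : ℝ) : ℕ → Eu n → ℝ
  | 0 => fun _ => 0
  | k + 1 => pstep Ω F h (pit Ω F h k)

variable {n : ℕ}

theorem norm_bas (i : Fin n) : ‖(bas i : Eu n)‖ = 1 := by simp [bas]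

theorem nbAvg_le (hn : 0 < n) {h : ℝ} {g g' : Eu n → ℝ} {x y : Eu n}
    (H : ∀ i, g (x + h • bas i) ≤ g' (y + h • bas i) ∧ g (x - h • bas i) ≤ g' (y - h • bas i)) :
    nbAvg h g x ≤ nbAvg h g' y := by
  unfold nbAvg
  gcongr with i
  · exact (H i).1
  · exact (H i).2

theorem nbAvg_add (h : ℝ) (g g' : Eu n → ℝ) (x : Eu n) :
    nbAvg h (fun y => g y + g' y) x = nbAvg h g x + nbAvg h g' x := by
  unfold nbAvg
  rw [← add_div, ← Finset.sum_add_distrib]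
  congr 1
  exact Finset.sum_congr rfl fun i _ => by ring

theorem nbAvg_smul (h c : ℝ) (g : Eu n → ℝ) (x : Eu n) :
    nbAvg h (fun y => c * g y) x = c * nbAvg h g x := by
  unfold nbAvg
  rw [← mul_div_assoc, Finset.mul_sum]
  congr 1
  exact Finset.sum_congr rfl fun i _ => by ring

theorem nbAvg_const (hn : 0 < n) (h c : ℝ) (x : Eu n) : nbAvg h (fun _ => c) x = c := by
  unfold nbAvg
  have : (n : ℝ) ≠ 0 := by positivity
  simp
  field_simp
  ring

theorem nbAvg_nonneg {h : ℝ} {g : Eu n → ℝ} {x : Eu n} (hg : ∀ y, 0 ≤ g y) : 0 ≤ nbAvg h g x := by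
  unfold nbAvg
  have : 0 ≤ ∑ i, (g (x + h • bas i) + g (x - h • bas i)) :=
    Finset.sum_nonneg fun i _ => add_nonneg (hg _) (hg _)
  positivity

theorem pit_nonneg {Ω : Set (Eu n)} {F : Eu n → ℝ} {h : ℝ} (hF0 : ∀ x, 0 ≤ F x) (k : ℕ) (x : Eu n) :
    0 ≤ pit Ω F h k x := by
  induction k generalizing x with
  | zero => exact le_refl _
  | succ k ih =>
    simp only [pit, pstep]
    split_ifs
    · have := nbAvg_nonneg (h := h) (x := x) ih
      have := hF0 x
      positivity
    · exact le_refl _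

theorem pit_mono (hn : 0 < n) {Ω : Set (Eu n)} {F : Eu n → ℝ} {h : ℝ} (hF0 : ∀ x, 0 ≤ F x) (x : Eu n) :
    Monotone fun k => pit Ω F h k x := by
  apply monotone_nat_of_le_succ
  intro k
  induction k generalizing x with
  | zero => exact pit_nonneg hF0 _ _
  | succ k ih =>
    rw [pit, pit]
    unfold pstep
    split_ifs
    · gcongr
      exact nbAvg_le hn fun i => ⟨ih _, ih _⟩
    · exact le_refl _

theorem pit_compare (hn : 0 < n) {Ω : Set (Eu n)} {F : Eu n → ℝ} {h : ℝ} (G : Eu n → ℝ) (S : Set (Eu n))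
    (h0 : ∀ q ∈ S, 0 ≤ G q)
    (h2 : ∀ q ∈ S, q ∈ Ω → nbAvg h G q + h ^ 2 / (2 * n) * F q ≤ G q)
    (h3 : ∀ q ∈ S, q ∈ Ω → ∀ i, ∀ s, (s = h ∨ s = -h) →
      (q + s • bas i ∈ S ∨ ∀ k, pit Ω F h k (q + s • bas i) ≤ G (q + s • bas i))) (k : ℕ) :
    ∀ q ∈ S, pit Ω F h k q ≤ G q := by
  induction k with
  | zero => exact h0
  | succ k ih =>
    intro q hq
    rw [pit]
    unfold pstep
    split_ifs with hqΩ
    · refine le_trans ?_ (h2 q hq hqΩ)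
      gcongr
      have key : ∀ i s, (s = h ∨ s = -h) → pit Ω F h k (q + s • bas i) ≤ G (q + s • bas i) := by
        intro i s hs
        rcases h3 q hq hqΩ i s hs with h | h
        · exact ih _ h
        · exact h k
      refine nbAvg_le hn fun i => ⟨key i h (Or.inl rfl), ?_⟩
      have := key i (-h) (Or.inr rfl)
      simpa [sub_eq_add_neg] using this
    · exact h0 q hq

theorem nbAvg_inner_comp (hn : 0 < n) (h c : ℝ) (ν x q : Eu n) (t : ℝ) (hν : ‖ν‖ = 1) :
    nbAvg h (fun p => t * (inner ℝ ν (p - x) + c) - (inner ℝ ν (p - x) + c) ^ 2 / 2) q =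
      t * (inner ℝ ν (q - x) + c) - (inner ℝ ν (q - x) + c) ^ 2 / 2 - h ^ 2 / (2 * n) := by
  unfold nbAvg
  have hn' : (n : ℝ) ≠ 0 := by positivity
  have hs : ∑ i, ν i ^ 2 = 1 := by
    have := EuclideanSpace.real_norm_sq_eq ν
    rw [hν] at this; simpa using this.symm
  have e : ∀ i : Fin n, inner ℝ ν (bas i) = ν i := fun i => by
    simp [bas, EuclideanSpace.inner_single_right]
  set L := inner ℝ ν (q - x) with hL
  have e1 : ∀ i : Fin n, inner ℝ ν (q + h • bas i - x) = L + h * ν i := fun i => by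
    rw [add_sub_right_comm, inner_add_right, inner_smul_right, e]
  have e2 : ∀ i : Fin n, inner ℝ ν (q - h • bas i - x) = L - h * ν i := fun i => by
    rw [sub_right_comm, inner_sub_right, inner_smul_right, e]
  simp only [e1, e2]
  have e3 : ∀ i : Fin n, (t * (L + h * ν i + c) - (L + h * ν i + c) ^ 2 / 2 +
      (t * (L - h * ν i + c) - (L - h * ν i + c) ^ 2 / 2)) =
      2 * (t * (L + c) - (L + c) ^ 2 / 2) - h ^ 2 * ν i ^ 2 := fun i => by ring
  simp only [e3]
  rw [Finset.sum_sub_distrib, ← Finset.mul_sum, ← Finset.mul_sum, hs]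
  simp
  field_simp

theorem nbAvg_normsq (hn : 0 < n) (h c : ℝ) (x q : Eu n) :
    nbAvg h (fun p => (c - ‖p - x‖ ^ 2) / (2 * n)) q =
      (c - ‖q - x‖ ^ 2) / (2 * n) - h ^ 2 / (2 * n) := by
  unfold nbAvg
  have hn' : (n : ℝ) ≠ 0 := by positivity
  have e1 : ∀ i : Fin n, ‖q + h • bas i - x‖ ^ 2 + ‖q - h • bas i - x‖ ^ 2 = 2 * ‖q - x‖ ^ 2 + 2 * h ^ 2 := fun i => by
    have := parallelogram_law_with_norm ℝ (q - x) (h • bas i)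
    rw [add_sub_right_comm, sub_right_comm]
    simp only [norm_smul, norm_bas] at this
    have hh : ‖h‖ * ‖h‖ = h ^ 2 := by rw [← sq, Real.norm_eq_abs, sq_abs]
    nlinarith
  have e3 : ∀ i : Fin n, ((c - ‖q + h • bas i - x‖ ^ 2) / (2 * n) + (c - ‖q - h • bas i - x‖ ^ 2) / (2 * n)) =
      (2 * (c - ‖q - x‖ ^ 2) - 2 * h ^ 2) / (2 * n) := fun i => by
    rw [← add_div]; congr 1; linarith [e1 i]
  simp only [e3]
  simp
  field_simp

theorem pit_bdd (hn : 0 < n) {Ω : Set (Eu n)} {F : Eu n → ℝ} {h : ℝ} (hh0 : 0 ≤ h) (hh1 : h ≤ 1)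
    (hF1 : ∀ x, F x ≤ 1) (x0 : Eu n) (D : ℝ) (hD : ∀ x ∈ Ω, ‖x - x0‖ ≤ D) (hD0 : 0 ≤ D) (k : ℕ) (x : Eu n) :
    pit Ω F h k x ≤ (D + 1) ^ 2 := by
  have hn1 : (1 : ℝ) ≤ n := by exact_mod_cast hn
  by_cases hx : x ∈ Ω
  · have := pit_compare hn (Ω := Ω) (F := F) (h := h) (fun p => ((D + 1) ^ 2 - ‖p - x0‖ ^ 2) / (2 * n))
      {q | ‖q - x0‖ ≤ D + 1} ?_ ?_ ?_ k x ?_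
    · refine this.trans ?_
      rw [div_le_iff₀ (by positivity)]
      nlinarith [sq_nonneg (‖x - x0‖), sq_nonneg (D + 1)]
    · intro q hq
      simp only [Set.mem_setOf_eq] at hq
      have : ‖q - x0‖ ^ 2 ≤ (D + 1) ^ 2 := by gcongr
      apply div_nonneg <;> [linarith; positivity]
    · intro q _ _
      rw [nbAvg_normsq hn]
      have : h ^ 2 / (2 * n) * F q ≤ h ^ 2 / (2 * n) * 1 := by gcongr; exact hF1 q
      linarith
    · intro q _ hq i s hs
      left
      simp only [Set.mem_setOf_eq]
      have : ‖s • (bas i : Eu n)‖ ≤ 1 := by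
        rw [norm_smul, norm_bas]
        rcases hs with rfl | rfl <;> simp [abs_of_nonneg hh0, hh1]
      rw [add_sub_right_comm]
      exact (norm_add_le _ _).trans (add_le_add (hD q hq) this)
    · simp only [Set.mem_setOf_eq]; linarith [hD x hx]
  · have : pit Ω F h k x = 0 := by cases k <;> simp [pit, pstep, hx]
    rw [this]; positivity

theorem support_normal {Ω : Set (Eu n)} (hΩo : IsOpen Ω) (hΩc : Convex ℝ Ω) {x y : Eu n} (hx : x ∉ Ω)
    (hy : y ∈ Ω) : ∃ ν : Eu n, ‖ν‖ = 1 ∧ ∀ q ∈ Ω, 0 < inner ℝ ν (q - x) := by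
  obtain ⟨f, hf⟩ := geometric_hahn_banach_point_open hΩc hΩo hx
  set g := (InnerProductSpace.toDual ℝ (Eu n)).symm f with hg
  have hgf : ∀ z, inner ℝ g z = f z := fun z => by simp [hg]
  have hpos : ∀ q ∈ Ω, 0 < inner ℝ g (q - x) := fun q hq => by
    rw [hgf, map_sub]; linarith [hf q hq]
  have hg0 : g ≠ 0 := by
    intro h0
    have := hpos y hy
    simp [h0] at this
  refine ⟨‖g‖⁻¹ • g, by simp [norm_smul, hg0], fun q hq => ?_⟩
  rw [inner_smul_left]
  have := hpos q hq
  have := norm_pos_iff.2 hg0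
  simp only [map_inv₀, conj_trivial]
  positivity

theorem pit_barrier (hn : 0 < n) {Ω : Set (Eu n)} (hΩo : IsOpen Ω) (hΩc : Convex ℝ Ω)
    {F : Eu n → ℝ} {h : ℝ} (hh0 : 0 < h)
    (hF1 : ∀ x, F x ≤ 1) (M : ℝ) (hM0 : 0 ≤ M) (hM : ∀ k x, pit Ω F h k x ≤ M)
    {x y : Eu n} (hx : x ∉ Ω) (k : ℕ) :
    pit Ω F h k y ≤ (√(2 * M) + h) * (‖y - x‖ + h) := by
  set t := √(2 * M) + h with ht
  have ht0 : 0 < t := by positivity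
  have hsq : √(2 * M) ^ 2 = 2 * M := Real.sq_sqrt (by positivity)
  have hs0 : 0 ≤ √(2 * M) := by positivity
  have htsq : 2 * M + h ^ 2 ≤ t ^ 2 := by rw [ht]; nlinarith
  by_cases hy : y ∈ Ω
  swap
  · have : pit Ω F h k y = 0 := by cases k <;> simp [pit, pstep, hy]
    rw [this]; positivity
  obtain ⟨ν, hν, hpos⟩ := support_normal hΩo hΩc hx hy
  have hle : inner ℝ ν (y - x) ≤ ‖y - x‖ := by
    have := real_inner_le_norm ν (y - x)
    rwa [hν, one_mul] at this
  rcases le_or_gt (inner ℝ ν (y - x) + h) t with hcase | hcase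
  · have := pit_compare hn (Ω := Ω) (F := F) (h := h)
      (fun p => t * (inner ℝ ν (p - x) + h) - (inner ℝ ν (p - x) + h) ^ 2 / 2)
      {q | 0 ≤ inner ℝ ν (q - x) + h ∧ inner ℝ ν (q - x) + h ≤ t} ?_ ?_ ?_ k y ?_
    · refine this.trans ?_
      have : t * (inner ℝ ν (y - x) + h) ≤ t * (‖y - x‖ + h) := by gcongr
      linarith [sq_nonneg (inner ℝ ν (y - x) + h)]
    · rintro q ⟨hq1, hq2⟩
      nlinarith
    · intro q _ _
      rw [nbAvg_inner_comp hn _ _ _ _ _ _ hν]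
      have : h ^ 2 / (2 * n) * F q ≤ h ^ 2 / (2 * n) * 1 := by gcongr; exact hF1 q
      linarith
    · rintro q ⟨hq1, hq2⟩ hq i s hs
      have e : inner ℝ ν (q + s • bas i - x) = inner ℝ ν (q - x) + s * ν i := by
        rw [add_sub_right_comm, inner_add_right, inner_smul_right]
        simp [bas, EuclideanSpace.inner_single_right]
      have hνi : |ν i| ≤ 1 := by
        have := PiLp.norm_apply_le ν i
        rwa [hν] at this
      have hsν : |s * ν i| ≤ h := by
        rw [abs_mul]
        have : |s| = h := by rcases hs with rfl | rfl <;> simp [abs_of_pos hh0]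
        rw [this]; nlinarith [abs_nonneg (ν i)]
      have hq0 := hpos q hq
      rw [abs_le] at hsν
      simp only [Set.mem_setOf_eq, e]
      by_cases hc : inner ℝ ν (q - x) + s * ν i + h ≤ t
      · left; exact ⟨by linarith, hc⟩
      · right
        intro k
        refine (hM k _).trans ?_
        push Not at hc
        set z := inner ℝ ν (q - x) + s * ν i + h with hz
        have hz1 : z - t ≤ h := by linarith
        have : (z - t) ^ 2 ≤ h ^ 2 := by
          apply pow_le_pow_left₀ <;> linarith
        nlinarith
    · exact ⟨by linarith [hpos y hy], hcase⟩
  · refine (hM k y).trans ?_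
    have : t * t ≤ t * (‖y - x‖ + h) := by gcongr; linarith
    nlinarith

end Poisson


section Poisson
variable {n : ℕ}
open Filter Topology

/-- Discrete solution. -/
noncomputable def pv (Ω : Set (Eu n)) (F : Eu n → ℝ) (h : ℝ) (x : Eu n) : ℝ := ⨆ k, pit Ω F h k x

structure PSetup (n : ℕ) (Ω : Set (Eu n)) (D : ℝ) : Prop where
  hn : 0 < n
  ho : IsOpen Ω
  hc : Convex ℝ Ω
  hD0 : 0 ≤ D
  hD : ∃ x0, ∀ x ∈ Ω, ‖x - x0‖ ≤ D

variable {Ω : Set (Eu n)} {D : ℝ} {F : Eu n → ℝ} {h : ℝ}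

theorem pv_bddAbove (P : PSetup n Ω D) (hF1 : ∀ x, F x ≤ 1) (hh0 : 0 < h) (hh1 : h ≤ 1) (x : Eu n) :
    BddAbove (Set.range fun k => pit Ω F h k x) := by
  obtain ⟨x0, hx0⟩ := P.hD
  refine ⟨(D + 1) ^ 2, ?_⟩
  rintro _ ⟨k, rfl⟩
  exact pit_bdd P.hn hh0.le hh1 hF1 x0 D hx0 P.hD0 k x

theorem pv_tendsto (P : PSetup n Ω D) (hF0 : ∀ x, 0 ≤ F x) (hF1 : ∀ x, F x ≤ 1) (hh0 : 0 < h) (hh1 : h ≤ 1) (x : Eu n) :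
    Tendsto (fun k => pit Ω F h k x) atTop (𝓝 (pv Ω F h x)) :=
  tendsto_atTop_ciSup (pit_mono P.hn hF0 x) (pv_bddAbove P hF1 hh0 hh1 x)

theorem pit_le_pv (P : PSetup n Ω D) (hF1 : ∀ x, F x ≤ 1) (hh0 : 0 < h) (hh1 : h ≤ 1) (k : ℕ) (x : Eu n) :
    pit Ω F h k x ≤ pv Ω F h x := le_ciSup (pv_bddAbove P hF1 hh0 hh1 x) k

theorem pv_nonneg (hF0 : ∀ x, 0 ≤ F x) (x : Eu n) : 0 ≤ pv Ω F h x :=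
  Real.iSup_nonneg fun k => pit_nonneg hF0 k x

theorem pv_le (P : PSetup n Ω D) (hF1 : ∀ x, F x ≤ 1) (hh0 : 0 < h) (hh1 : h ≤ 1) (x : Eu n) :
    pv Ω F h x ≤ (D + 1) ^ 2 := by
  obtain ⟨x0, hx0⟩ := P.hD
  exact ciSup_le fun k => pit_bdd P.hn hh0.le hh1 hF1 x0 D hx0 P.hD0 k x

theorem pv_off {x : Eu n} (hx : x ∉ Ω) : pv Ω F h x = 0 := by
  have : ∀ k, pit Ω F h k x = 0 := by intro k; cases k <;> simp [pit, pstep, hx]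
  simp [pv, this]

theorem pv_eq (P : PSetup n Ω D) (hF0 : ∀ x, 0 ≤ F x) (hF1 : ∀ x, F x ≤ 1) (hh0 : 0 < h) (hh1 : h ≤ 1)
    {x : Eu n} (hx : x ∈ Ω) : pv Ω F h x = nbAvg h (pv Ω F h) x + h ^ 2 / (2 * n) * F x := by
  have h1 := (tendsto_add_atTop_iff_nat 1).2 (pv_tendsto P hF0 hF1 hh0 hh1 x)
  refine tendsto_nhds_unique h1 ?_
  simp only [pit, pstep, if_pos hx]
  refine Tendsto.add_const _ ?_
  unfold nbAvg
  refine Tendsto.div_const ?_ _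
  refine tendsto_finset_sum _ fun i _ => ?_
  exact (pv_tendsto P hF0 hF1 hh0 hh1 _).add (pv_tendsto P hF0 hF1 hh0 hh1 _)

theorem pv_measurable (hΩ : MeasurableSet Ω) (hF : Measurable F) : Measurable (pv Ω F h) := by
  apply Measurable.iSup
  intro k
  induction k with
  | zero => exact measurable_const
  | succ k ih =>
    rw [pit]
    unfold pstep
    refine Measurable.ite hΩ ?_ measurable_const
    refine Measurable.add ?_ (hF.const_mul _)
    unfold nbAvg
    refine Measurable.div_const ?_ _
    refine Finset.measurable_sum _ fun i _ => ?_
    exact (ih.comp (measurable_add_const _)).add (ih.comp (measurable_sub_const _))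

theorem pv_lip (P : PSetup n Ω D) (hF0 : ∀ x, 0 ≤ F x) (hF1 : ∀ x, F x ≤ 1) (hh0 : 0 < h) (hh1 : h ≤ 1)
    (L : ℝ) (hL0 : 0 ≤ L) (hL : ∀ x y, F x - F y ≤ L * ‖x - y‖) (M : ℝ) (hM : ∀ x, pv Ω F h x ≤ M)
    (x z : Eu n) :
    pv Ω F h (x + z) ≤ pv Ω F h x + (√(2 * M) + h) * (‖z‖ + h) + L * ‖z‖ * (D + 1) ^ 2 := by
  have hM0 : 0 ≤ M := (pv_nonneg hF0 x).trans (hM x)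
  have t0 : 0 ≤ (√(2 * M) + h) * (‖z‖ + h) := by positivity
  have I0 : ∀ x : Eu n, (0 : ℝ) ≤ (fun _ => 1) x := fun _ => zero_le_one
  have I1 : ∀ x : Eu n, (fun _ => (1 : ℝ)) x ≤ 1 := fun _ => le_rfl
  have key : ∀ k x, pit Ω F h k (x + z) ≤ pv Ω F h x + (√(2 * M) + h) * (‖z‖ + h) +
      L * ‖z‖ * pv Ω (fun _ => 1) h x := by
    intro k
    induction k with
    | zero =>
      intro x
      have := pv_nonneg (Ω := Ω) (h := h) hF0 x
      have := pv_nonneg (Ω := Ω) (h := h) (F := fun _ => 1) I0 x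
      rw [pit]; positivity
    | succ k ih =>
      intro x
      by_cases hx : x ∈ Ω
      swap
      · have := pit_barrier P.hn P.ho P.hc hh0 hF1 M hM0
          (fun k x => (pit_le_pv P hF1 hh0 hh1 k x).trans (hM x)) hx (k + 1) (y := x + z)
        rw [pv_off hx, pv_off hx]
        simpa using this
      by_cases hxz : x + z ∈ Ω
      swap
      · have := pv_nonneg (Ω := Ω) (h := h) hF0 x
        have := pv_nonneg (Ω := Ω) (h := h) (F := fun _ => 1) I0 x
        rw [pit, pstep, if_neg hxz]; positivity
      rw [pv_eq P hF0 hF1 hh0 hh1 hx, pv_eq P I0 I1 hh0 hh1 hx, pit, pstep, if_pos hxz]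
      have h1 : nbAvg h (pit Ω F h k) (x + z) ≤ nbAvg h (fun x => pv Ω F h x + ((√(2 * M) + h) * (‖z‖ + h) +
          L * ‖z‖ * pv Ω (fun _ => 1) h x)) x := by
        refine nbAvg_le P.hn fun i => ?_
        have a := ih (x + h • bas i)
        have b := ih (x - h • bas i)
        rw [add_right_comm] at a
        rw [← add_sub_right_comm] at b
        constructor <;> linarith
      rw [nbAvg_add, nbAvg_add, nbAvg_const P.hn, nbAvg_smul] at h1
      have h2 : F (x + z) ≤ F x + L * ‖z‖ := by
        have := hL (x + z) x
        simp at this; linarith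
      have h3 : h ^ 2 / (2 * n) * F (x + z) ≤ h ^ 2 / (2 * n) * (F x + L * ‖z‖) := by gcongr
      linarith
  refine ciSup_le fun k => (key k x).trans ?_
  have := pv_le P (F := fun _ => (1 : ℝ)) I1 hh0 hh1 x
  gcongr

end Poisson


section Poisson
variable {n : ℕ}
open Filter Topology

noncomputable def pd2 (φ : Eu n → ℝ) (e x : Eu n) : ℝ := fderiv ℝ (fun y => fderiv ℝ φ y e) x e

theorem laplacian_eq_pd2 (φ : Eu n → ℝ) (x : Eu n) : laplacian φ x = ∑ i, pd2 φ (bas i) x := rfl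

theorem contDiff_pd1 {φ : Eu n → ℝ} {m k : WithTop ℕ∞} (hφ : ContDiff ℝ k φ) (hm : m + 1 ≤ k) (e : Eu n) :
    ContDiff ℝ m (fun y => fderiv ℝ φ y e) :=
  (hφ.fderiv_right hm).clm_apply contDiff_const

theorem continuous_pd2 {φ : Eu n → ℝ} (hφ : ContDiff ℝ 2 φ) (e : Eu n) : Continuous (pd2 φ e) := by
  have h1 : ContDiff ℝ 1 (fun y => fderiv ℝ φ y e) := contDiff_pd1 hφ (by norm_num) e
  exact (contDiff_pd1 (m := 0) h1 (by norm_num) e).continuous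

theorem hasCompactSupport_pd1 {φ : Eu n → ℝ} (hc : HasCompactSupport φ) (e : Eu n) :
    HasCompactSupport (fun y => fderiv ℝ φ y e) :=
  hc.fderiv_apply (𝕜 := ℝ) e

theorem hasCompactSupport_pd2 {φ : Eu n → ℝ} (hc : HasCompactSupport φ) (e : Eu n) :
    HasCompactSupport (pd2 φ e) := hasCompactSupport_pd1 (hasCompactSupport_pd1 hc e) e

theorem second_diff {φ : Eu n → ℝ} (hφ : ContDiff ℝ 2 φ) (hc : HasCompactSupport φ) (e : Eu n) (he : ‖e‖ = 1)
    (η : ℝ) (hη : 0 < η) : ∃ δ > 0, ∀ h, 0 < h → h < δ → ∀ x,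
      |φ (x + h • e) + φ (x - h • e) - 2 * φ x - h ^ 2 * pd2 φ e x| ≤ η * h ^ 2 := by
  have huc : UniformContinuous (pd2 φ e) :=
    (continuous_pd2 hφ e).uniformContinuous_of_tendsto_cocompact
      ((hasCompactSupport_pd2 hc e).is_zero_at_infty)
  obtain ⟨δ, hδ, H⟩ := Metric.uniformContinuous_iff.1 huc (η / 2) (by positivity)
  refine ⟨δ, hδ, fun h hh0 hhδ x => ?_⟩
  have h1 : ContDiff ℝ 1 (fun y => fderiv ℝ φ y e) := contDiff_pd1 hφ (by norm_num) e
  have d1 : ∀ y, HasFDerivAt φ (fderiv ℝ φ y) y := fun y =>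
    (hφ.differentiable (by norm_num) y).hasFDerivAt
  have d2 : ∀ y, HasFDerivAt (fun y => fderiv ℝ φ y e) (fderiv ℝ (fun y => fderiv ℝ φ y e) y) y := fun y =>
    (h1.differentiable (by norm_num) y).hasFDerivAt
  have lp : ∀ s : ℝ, HasDerivAt (fun s : ℝ => x + s • e) e s := fun s => by
    simpa using ((hasDerivAt_id s).smul_const e).const_add x
  have lm : ∀ s : ℝ, HasDerivAt (fun s : ℝ => x - s • e) (-e) s := fun s => by
    simpa using ((hasDerivAt_id s).smul_const e).const_sub x
  set g := fun y => fderiv ℝ φ y e with hg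
  have A : ∀ s : ℝ, HasDerivAt (fun s => φ (x + s • e) + φ (x - s • e) - s ^ 2 * pd2 φ e x)
      (g (x + s • e) - g (x - s • e) - 2 * s * pd2 φ e x) s := fun s => by
    have := (((d1 _).comp_hasDerivAt s (lp s)).add ((d1 _).comp_hasDerivAt s (lm s))).sub
      ((hasDerivAt_pow 2 s).mul_const (pd2 φ e x))
    refine this.congr_deriv ?_
    simp [hg, sub_eq_add_neg]
  have B : ∀ s : ℝ, HasDerivAt (fun s => g (x + s • e) - g (x - s • e) - 2 * s * pd2 φ e x)
      (pd2 φ e (x + s • e) + pd2 φ e (x - s • e) - 2 * pd2 φ e x) s := fun s => by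
    have := (((d2 _).comp_hasDerivAt s (lp s)).sub ((d2 _).comp_hasDerivAt s (lm s))).sub
      (((hasDerivAt_id s).const_mul 2).mul_const (pd2 φ e x))
    refine this.congr_deriv ?_
    simp [pd2, hg]
  have hB : ∀ s ∈ Set.Icc 0 h, ‖pd2 φ e (x + s • e) + pd2 φ e (x - s • e) - 2 * pd2 φ e x‖ ≤ η := by
    intro s hs
    have a1 := H (a := x + s • e) (b := x) (by simp [norm_smul, he, abs_of_nonneg hs.1]; linarith [hs.2])
    have a2 := H (a := x - s • e) (b := x) (by simp [dist_eq_norm, norm_smul, he, abs_of_nonneg hs.1]; linarith [hs.2])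
    rw [Real.dist_eq, abs_lt] at a1 a2
    rw [Real.norm_eq_abs, abs_le]
    constructor <;> linarith [a1.1, a1.2, a2.1, a2.2]
  have hA : ∀ s ∈ Set.Icc 0 h, ‖g (x + s • e) - g (x - s • e) - 2 * s * pd2 φ e x‖ ≤ η * h := by
    intro s hs
    have := Convex.norm_image_sub_le_of_norm_hasDerivWithin_le (fun t ht => (B t).hasDerivWithinAt) hB
      (convex_Icc 0 h) (Set.left_mem_Icc.2 hh0.le) hs
    simp at this
    rw [Real.norm_eq_abs]
    refine this.trans ?_
    rw [abs_of_nonneg hs.1]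
    gcongr
    exact hs.2
  have := Convex.norm_image_sub_le_of_norm_hasDerivWithin_le (fun t ht => (A t).hasDerivWithinAt) hA
      (convex_Icc 0 h) (Set.left_mem_Icc.2 hh0.le) (Set.right_mem_Icc.2 hh0.le)
  rw [Real.norm_eq_abs, sub_zero, Real.norm_eq_abs, abs_of_pos hh0] at this
  calc _ = _ := by congr 1; simp; ring
    _ ≤ _ := this
    _ = _ := by ring

theorem nbAvg_lap (hn : 0 < n) {φ : Eu n → ℝ} (hφ : ContDiff ℝ 2 φ) (hc : HasCompactSupport φ)
    (η : ℝ) (hη : 0 < η) : ∃ δ > 0, ∀ h, 0 < h → h < δ → ∀ x,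
      |2 * n / h ^ 2 * (nbAvg h φ x - φ x) - laplacian φ x| ≤ n * η := by
  have hn' : (n : ℝ) ≠ 0 := by positivity
  choose δ hδ H using fun i : Fin n => second_diff hφ hc (bas i) (norm_bas i) η hη
  obtain ⟨i0, -, hi0⟩ := Finset.exists_min_image Finset.univ δ ⟨⟨0, hn⟩, Finset.mem_univ _⟩
  refine ⟨δ i0, hδ i0, fun h hh0 hh x => ?_⟩
  have e : 2 * n / h ^ 2 * (nbAvg h φ x - φ x) - laplacian φ x =
      ∑ i, (φ (x + h • bas i) + φ (x - h • bas i) - 2 * φ x - h ^ 2 * pd2 φ (bas i) x) / h ^ 2 := by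
    rw [laplacian_eq_pd2, ← Finset.sum_div]
    simp only [Finset.sum_sub_distrib, ← Finset.mul_sum]
    unfold nbAvg
    simp
    field_simp
  rw [e]
  refine (Finset.abs_sum_le_sum_abs _ _).trans ?_
  calc _ ≤ ∑ i : Fin n, η := by
        refine Finset.sum_le_sum fun i _ => ?_
        rw [abs_div, abs_of_pos (by positivity : 0 < h ^ 2), div_le_iff₀ (by positivity)]
        exact H i h hh0 (hh.trans_le (hi0 i (Finset.mem_univ _))) x
    _ = _ := by simp

theorem continuous_laplacian {φ : Eu n → ℝ} (hφ : ContDiff ℝ 2 φ) : Continuous (laplacian φ) := by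
  have : laplacian φ = fun x => ∑ i, pd2 φ (bas i) x := funext fun x => rfl
  rw [this]
  exact continuous_finset_sum _ fun i _ => continuous_pd2 hφ _

theorem hasCompactSupport_laplacian {φ : Eu n → ℝ} (hc : HasCompactSupport φ) :
    HasCompactSupport (laplacian φ) := by
  have hsub : ∀ x, x ∉ tsupport φ → laplacian φ x = 0 := by
    intro x hx
    rw [laplacian_eq_pd2]
    refine Finset.sum_eq_zero fun i _ => ?_
    refine image_eq_zero_of_notMem_tsupport fun h => hx ?_
    exact tsupport_fderiv_apply_subset ℝ _ (tsupport_fderiv_apply_subset ℝ _ h)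
  exact HasCompactSupport.intro hc hsub

theorem integral_nbAvg {φ v : Eu n → ℝ} {h : ℝ} (hφ : Continuous φ) (hc : HasCompactSupport φ)
    (hv : Measurable v) (C : ℝ) (hC : ∀ x, |v x| ≤ C) :
    ∫ x, φ x * nbAvg h v x = ∫ x, nbAvg h φ x * v x := by
  have I1 : ∀ {w : Eu n → ℝ} {ψ : Eu n → ℝ}, Continuous ψ → HasCompactSupport ψ → Measurable w → (∀ x, |w x| ≤ C) →
      Integrable (fun x => ψ x * w x) := by
    intro w ψ hψ hψc hw hwC
    exact (hψ.integrable_of_hasCompactSupport hψc).mul_bdd (c := C) hw.aestronglyMeasurable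
      (Eventually.of_forall hwC)
  have J1 : ∀ a : Eu n, Integrable (fun x => φ x * v (x + a)) := fun a =>
    I1 hφ hc (hv.comp (measurable_add_const a)) (fun x => hC _)
  have hcs : ∀ a : Eu n, HasCompactSupport (fun x => φ (x + a)) := fun a =>
    hc.comp_homeomorph (Homeomorph.addRight a)
  have J2 : ∀ a : Eu n, Integrable (fun x => φ (x + a) * v x) := fun a =>
    I1 (hφ.comp (continuous_add_right a)) (hcs a) hv hC
  have S1 : ∀ a : Eu n, ∫ x, φ x * v (x + a) = ∫ x, φ (x - a) * v x := fun a => by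
    have := integral_add_right_eq_self (μ := (volume : Measure (Eu n))) (fun x => φ (x - a) * v x) a
    rw [← this]; simp
  have S2 : ∀ a : Eu n, ∫ x, φ x * v (x - a) = ∫ x, φ (x + a) * v x := fun a => by
    have := S1 (-a); simpa [sub_eq_add_neg] using this
  unfold nbAvg
  simp only [sub_eq_add_neg, ← smul_neg] at *
  have L : ∀ x, φ x * ((∑ i, (v (x + h • bas i) + v (x + h • -bas i))) / (2 * n)) =
      (∑ i, (φ x * v (x + h • bas i) + φ x * v (x + h • -bas i))) / (2 * n) := fun x => by
    rw [mul_div_assoc', Finset.mul_sum]; simp only [mul_add]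
  have R : ∀ x, ((∑ i, (φ (x + h • bas i) + φ (x + h • -bas i))) / (2 * n)) * v x =
      (∑ i, (φ (x + h • bas i) * v x + φ (x + h • -bas i) * v x)) / (2 * n) := fun x => by
    rw [div_mul_eq_mul_div, Finset.sum_mul]; simp only [add_mul]
  simp only [L, R]
  rw [integral_div, integral_div]
  congr 1
  have K1 : ∀ a b : Eu n, Integrable (fun x => φ x * v (x + a) + φ x * v (x + b)) := fun a b =>
    (J1 a).add (J1 b)
  have K2 : ∀ a b : Eu n, Integrable (fun x => φ (x + a) * v x + φ (x + b) * v x) := fun a b =>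
    (J2 a).add (J2 b)
  rw [integral_finset_sum _ fun i _ => K1 _ _, integral_finset_sum _ fun i _ => K2 _ _]
  refine Finset.sum_congr rfl fun i _ => ?_
  rw [integral_add (J1 _) (J1 _), integral_add (J2 _) (J2 _), S1, S1, add_comm]
  simp

end Poisson


section Poisson
variable {n : ℕ}
open Filter Topology

variable {Ω : Set (Eu n)} {D : ℝ} {F : Eu n → ℝ}

theorem poisson_exists (P : PSetup n Ω D) (hF0 : ∀ x, 0 ≤ F x) (hF1 : ∀ x, F x ≤ 1)
    (L : ℝ) (hL0 : 0 ≤ L) (hL : ∀ x y, F x - F y ≤ L * ‖x - y‖) :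
    ∃ v : Eu n → ℝ, (∀ x, 0 ≤ v x) ∧ (∀ x, v x ≤ (D + 1) ^ 2) ∧ (∀ x, x ∉ Ω → v x = 0) ∧
      (∀ M, (∀ x, v x ≤ M) → ∀ x y, v x - v y ≤ (√(2 * M) + L * (D + 1) ^ 2) * ‖x - y‖) ∧
      (∀ φ : Eu n → ℝ, ContDiff ℝ 2 φ → HasCompactSupport φ → tsupport φ ⊆ Ω →
        ∫ x, v x * laplacian φ x = - ∫ x, φ x * F x) := by
  set S := (D + 1) ^ 2 with hS
  have hS0 : 0 ≤ S := by positivity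
  obtain ⟨x0, hx0⟩ := P.hD
  have hΩb : Ω ⊆ Metric.closedBall x0 D := fun x hx => by
    simpa [dist_eq_norm] using hx0 x hx
  have hFc : Continuous F := by
    refine LipschitzWith.continuous (K := ⟨L, hL0⟩) (LipschitzWith.of_le_add_mul _ fun x y => ?_)
    have := hL x y
    rw [dist_eq_norm]
    change F x ≤ F y + L * ‖x - y‖
    linarith
  let U : Ultrafilter ℕ := hyperfilter ℕ
  have hU : (U : Filter ℕ) ≤ atTop := Nat.hyperfilter_le_atTop
  let hj : ℕ → ℝ := fun j => 1 / ((j : ℝ) + 1)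
  have hj0 : ∀ j, 0 < hj j := fun j => by positivity
  have hj1 : ∀ j, hj j ≤ 1 := fun j => by
    rw [div_le_one (by positivity)]; linarith [(Nat.cast_nonneg j : (0 : ℝ) ≤ j)]
  have hjt : Tendsto hj U (𝓝 0) := tendsto_one_div_add_atTop_nhds_zero_nat.mono_left hU
  let vj : ℕ → Eu n → ℝ := fun j => pv Ω F (hj j)
  have vj0 : ∀ j x, 0 ≤ vj j x := fun j x => pv_nonneg hF0 x
  have vjS : ∀ j x, vj j x ≤ S := fun j x => pv_le P hF1 (hj0 j) (hj1 j) x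
  have vjoff : ∀ j x, x ∉ Ω → vj j x = 0 := fun j x hx => pv_off hx
  have vjm : ∀ j, Measurable (vj j) := fun j => pv_measurable P.ho.measurableSet hFc.measurable
  have vjl : ∀ j M, (∀ x, vj j x ≤ M) → ∀ x y, vj j x - vj j y ≤
      (√(2 * M) + hj j) * (‖x - y‖ + hj j) + L * ‖x - y‖ * S := by
    intro j M hM x y
    have := pv_lip P hF0 hF1 (hj0 j) (hj1 j) L hL0 hL M hM y (x - y)
    rw [add_sub_cancel] at this
    simp only [vj]
    linarith
  have ex : ∀ x, ∃ l, Tendsto (fun j => vj j x) U (𝓝 l) := by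
    intro x
    obtain ⟨l, -, hl⟩ := (isCompact_Icc (a := (0 : ℝ)) (b := S)).ultrafilter_le_nhds (U.map fun j => vj j x) (by
      rw [le_principal_iff]
      exact Filter.mem_map.2 (Filter.univ_mem' fun j => ⟨vj0 j x, vjS j x⟩))
    exact ⟨l, hl⟩
  choose v hv using ex
  have v0 : ∀ x, 0 ≤ v x := fun x => ge_of_tendsto' (hv x) fun j => vj0 j x
  have vS : ∀ x, v x ≤ S := fun x => le_of_tendsto' (hv x) fun j => vjS j x
  have voff : ∀ x, x ∉ Ω → v x = 0 := fun x hx => by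
    refine tendsto_nhds_unique (hv x) ?_
    simp only [vjoff _ x hx]; exact tendsto_const_nhds
  have limlip : ∀ M x y, (∀ᶠ j in (U : Filter ℕ), ∀ x, vj j x ≤ M) →
      v x - v y ≤ (√(2 * M) + L * S) * ‖x - y‖ := by
    intro M x y hM
    have t1 : Tendsto (fun j => (√(2 * M) + hj j) * (‖x - y‖ + hj j) + L * ‖x - y‖ * S) U
        (𝓝 ((√(2 * M) + 0) * (‖x - y‖ + 0) + L * ‖x - y‖ * S)) :=
      ((tendsto_const_nhds.add hjt).mul (tendsto_const_nhds.add hjt)).add tendsto_const_nhds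
    have := le_of_tendsto_of_tendsto ((hv x).sub (hv y)) t1 (hM.mono fun j hj => vjl j M hj x y)
    linarith
  have vlip : ∀ x y, v x - v y ≤ (√(2 * S) + L * S) * ‖x - y‖ := fun x y =>
    limlip S x y (Eventually.of_forall vjS)
  have unif : ∀ η > 0, ∀ᶠ j in (U : Filter ℕ), ∀ x, |vj j x - v x| ≤ η := by
    intro η hη
    by_contra hcon
    rw [← Ultrafilter.eventually_not] at hcon
    have : ∀ j, ∃ x, x ∈ closure Ω ∪ {x0} ∧ ((¬ ∀ x, |vj j x - v x| ≤ η) → η < |vj j x - v x|) := by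
      intro j
      by_cases h : ∀ x, |vj j x - v x| ≤ η
      · exact ⟨x0, by simp, fun h' => absurd h h'⟩
      · push Not at h
        obtain ⟨x, hx⟩ := h
        refine ⟨x, ?_, fun _ => hx⟩
        left
        by_contra hx'
        have hx2 : x ∉ Ω := fun h => hx' (subset_closure h)
        rw [vjoff j x hx2, voff x hx2] at hx
        simp at hx; linarith
    choose xs hxs1 hxs2 using this
    have hcomp : IsCompact (closure Ω ∪ {x0}) :=
      ((isCompact_closedBall x0 D).of_isClosed_subset isClosed_closure
        (closure_minimal hΩb Metric.isClosed_closedBall)).union isCompact_singleton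
    obtain ⟨x, -, hx⟩ := hcomp.ultrafilter_le_nhds (U.map xs) (by
      rw [le_principal_iff]
      exact Filter.mem_map.2 (Filter.univ_mem' hxs1))
    have hx' : Tendsto xs U (𝓝 x) := hx
    have hd : Tendsto (fun j => ‖xs j - x‖) U (𝓝 0) := tendsto_iff_norm_sub_tendsto_zero.1 hx'
    have hd2 : Tendsto (fun j => |vj j x - v x|) U (𝓝 0) := by
      have := ((hv x).sub_const (v x)).abs; simpa using this
    have t1 : Tendsto (fun j => ((√(2 * S) + hj j) * (‖xs j - x‖ + hj j) + L * ‖xs j - x‖ * S) +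
        |vj j x - v x| + (√(2 * S) + L * S) * ‖xs j - x‖) U
        (𝓝 (((√(2 * S) + 0) * (0 + 0) + L * 0 * S) + 0 + (√(2 * S) + L * S) * 0)) :=
      ((((tendsto_const_nhds.add hjt).mul (hd.add hjt)).add ((hd.const_mul _).mul_const _)).add hd2).add
        (hd.const_mul _)
    have : η ≤ ((√(2 * S) + 0) * (0 + 0) + L * 0 * S) + 0 + (√(2 * S) + L * S) * 0 := by
      refine ge_of_tendsto t1 (hcon.mono fun j hj' => ?_)
      refine (hxs2 j hj').le.trans ?_
      have a1 := vjl j S (vjS j) (xs j) x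
      have a2 := vjl j S (vjS j) x (xs j)
      have a3 := vlip (xs j) x
      have a4 := vlip x (xs j)
      rw [norm_sub_rev x] at a2 a4
      have a5 := abs_le.1 (le_refl |vj j x - v x|)
      rw [abs_le]
      constructor <;> linarith [a5.1, a5.2]
    simp at this
    linarith
  have vcont : Continuous v := by
    have hK : 0 ≤ √(2 * S) + L * S := by positivity
    refine LipschitzWith.continuous (K := ⟨_, hK⟩) (LipschitzWith.of_le_add_mul _ fun x y => ?_)
    have := vlip x y
    rw [dist_eq_norm]
    change v x ≤ v y + (√(2 * S) + L * S) * ‖x - y‖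
    linarith
  refine ⟨v, v0, vS, voff, ?_, ?_⟩
  · intro M hM x y
    have t : Tendsto (fun η => (√(2 * (M + η)) + L * S) * ‖x - y‖) (𝓝[>] 0)
        (𝓝 ((√(2 * (M + 0)) + L * S) * ‖x - y‖)) := by
      refine Tendsto.mono_left ?_ nhdsWithin_le_nhds
      exact Continuous.tendsto (f := fun η => (√(2 * (M + η)) + L * S) * ‖x - y‖) (by fun_prop) 0
    rw [add_zero] at t
    refine ge_of_tendsto t ?_
    filter_upwards [self_mem_nhdsWithin] with η hη
    refine limlip _ x y ((unif η hη).mono fun j hj x => ?_)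
    linarith [hM x, (abs_le.1 (hj x)).2]
  · intro φ hφ hc hsupp
    have hφc := hφ.continuous
    have lapc := continuous_laplacian hφ
    have lapi : Integrable (laplacian φ) := lapc.integrable_of_hasCompactSupport (hasCompactSupport_laplacian hc)
    have hvol : volume Ω ≠ ⊤ := ((Metric.isBounded_closedBall.subset hΩb).measure_lt_top).ne
    have bnd : ∀ η > 0, |(∫ x, v x * laplacian φ x) - (- ∫ x, φ x * F x)| ≤
        η * (n * S * volume.real Ω + ∫ x, |laplacian φ x|) := by
      intro η hη
      obtain ⟨δ, hδ, Hδ⟩ := nbAvg_lap P.hn hφ hc η hη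
      obtain ⟨j, hj1', hj2⟩ := ((unif η hη).and (hjt.eventually_lt_const hδ)).exists
      set h := hj j with hh
      have hh0 : 0 < h := hj0 j
      have hn' : (n : ℝ) ≠ 0 := by have := P.hn; positivity
      have eqn : ∀ x, φ x * (vj j x - nbAvg h (vj j) x) = h ^ 2 / (2 * n) * (φ x * F x) := by
        intro x
        by_cases hx : x ∈ Ω
        · have := pv_eq P hF0 hF1 hh0 (hj1 j) hx
          have e : vj j x - nbAvg h (vj j) x = h ^ 2 / (2 * n) * F x := by
            simp only [vj, ← hh]; linarith
          rw [e]; ring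
        · have : φ x = 0 := image_eq_zero_of_notMem_tsupport fun h => hx (hsupp h)
          simp [this]
      have vjabs : ∀ x, |vj j x| ≤ S := fun x => by rw [abs_of_nonneg (vj0 j x)]; exact vjS j x
      have iφv : Integrable (fun x => φ x * vj j x) :=
        (hφc.integrable_of_hasCompactSupport hc).mul_bdd (c := S) (vjm j).aestronglyMeasurable
          (Eventually.of_forall vjabs)
      have nbm : Measurable (nbAvg h (vj j)) := by
        unfold nbAvg
        refine Measurable.div_const ?_ _
        refine Finset.measurable_sum _ fun i _ => ?_
        exact ((vjm j).comp (measurable_add_const _)).add ((vjm j).comp (measurable_sub_const _))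
      have nbb : ∀ x, |nbAvg h (vj j) x| ≤ S := fun x => by
        rw [abs_of_nonneg (nbAvg_nonneg (vj0 j))]
        have := nbAvg_le P.hn (h := h) (g := vj j) (g' := fun _ => S) (x := x) (y := x) fun i => ⟨vjS j _, vjS j _⟩
        rwa [nbAvg_const P.hn] at this
      have iφnb : Integrable (fun x => φ x * nbAvg h (vj j) x) :=
        (hφc.integrable_of_hasCompactSupport hc).mul_bdd (c := S) nbm.aestronglyMeasurable
          (Eventually.of_forall nbb)
      have nbφc : Continuous (nbAvg h φ) := by unfold nbAvg; fun_prop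
      have vji : Integrable (vj j) := by
        have : vj j = Ω.indicator (vj j) := by
          ext x; by_cases hx : x ∈ Ω <;> simp [hx, vjoff j x]
        rw [this, integrable_indicator_iff P.ho.measurableSet]
        exact Measure.integrableOn_of_bounded (M := S) hvol (vjm j).aestronglyMeasurable
          (Eventually.of_forall vjabs)
      have iψv : Integrable (fun x => nbAvg h φ x * vj j x) := by
        obtain ⟨C, hC⟩ := hc.exists_bound_of_continuous hφc
        refine vji.bdd_mul (c := C) nbφc.aestronglyMeasurable (Eventually.of_forall fun x => ?_)
        have b1 := nbAvg_le P.hn (h := h) (g := φ) (g' := fun _ => C) (x := x) (y := x)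
          fun i => ⟨(le_abs_self _).trans (hC _), (le_abs_self _).trans (hC _)⟩
        have b2 := nbAvg_le P.hn (h := h) (g := fun _ => -C) (g' := φ) (x := x) (y := x)
          fun i => ⟨(abs_le.1 (hC _)).1, (abs_le.1 (hC _)).1⟩
        rw [nbAvg_const P.hn] at b1 b2
        rw [Real.norm_eq_abs, abs_le]; exact ⟨b2, b1⟩
      have E1 : ∫ x, (2 * n / h ^ 2 * (nbAvg h φ x - φ x)) * vj j x = - ∫ x, φ x * F x := by
        have e1 : ∀ x, (2 * n / h ^ 2 * (nbAvg h φ x - φ x)) * vj j x =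
            2 * n / h ^ 2 * (nbAvg h φ x * vj j x - φ x * vj j x) := fun x => by ring
        simp only [e1]
        rw [integral_const_mul, integral_sub iψv iφv, ← integral_nbAvg hφc hc (vjm j) S vjabs,
          ← integral_sub iφnb iφv]
        have e2 : ∀ x, φ x * nbAvg h (vj j) x - φ x * vj j x = - (h ^ 2 / (2 * n)) * (φ x * F x) := fun x => by
          linarith [eqn x]
        simp only [e2]
        rw [integral_const_mul]
        field_simp
      have iA : Integrable (fun x => (2 * n / h ^ 2 * (nbAvg h φ x - φ x)) * vj j x) := by
        have e1 : ∀ x, (2 * n / h ^ 2 * (nbAvg h φ x - φ x)) * vj j x =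
            2 * n / h ^ 2 * (nbAvg h φ x * vj j x - φ x * vj j x) := fun x => by ring
        simp only [e1]
        exact (iψv.sub iφv).const_mul _
      have iB : Integrable (fun x => v x * laplacian φ x) :=
        lapi.bdd_mul (c := S) vcont.aestronglyMeasurable (Eventually.of_forall fun x => by
          rw [Real.norm_eq_abs, abs_of_nonneg (v0 x)]; exact vS x)
      rw [← E1, ← integral_sub iB iA]
      have iG : Integrable (fun x => Ω.indicator (fun _ => n * η * S) x + η * |laplacian φ x|) := by
        refine Integrable.add ?_ (lapi.abs.const_mul _)
        rw [integrable_indicator_iff P.ho.measurableSet]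
        exact integrableOn_const hvol
      rw [← Real.norm_eq_abs]
      refine (norm_integral_le_of_norm_le iG (Eventually.of_forall fun x => ?_)).trans (le_of_eq ?_)
      · have a1 := Hδ h hh0 hj2 x
        have a2 := hj1' x
        have e : v x * laplacian φ x - 2 * n / h ^ 2 * (nbAvg h φ x - φ x) * vj j x =
          -(2 * n / h ^ 2 * (nbAvg h φ x - φ x) - laplacian φ x) * vj j x - (vj j x - v x) * laplacian φ x := by ring
        rw [e]
        refine (norm_sub_le _ _).trans (add_le_add ?_ ?_)
        · by_cases hx : x ∈ Ω
          · rw [Set.indicator_of_mem hx, norm_mul, norm_neg]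
            exact mul_le_mul a1 (vjabs x) (norm_nonneg _) (by positivity)
          · simp [hx, vjoff j x hx]
        · rw [norm_mul]
          exact mul_le_mul_of_nonneg_right a2 (norm_nonneg _)
      · rw [integral_add ?_ (lapi.abs.const_mul _), integral_indicator_const _ P.ho.measurableSet,
          integral_const_mul]
        · simp; ring
        · rw [integrable_indicator_iff P.ho.measurableSet]
          exact integrableOn_const hvol
    have C0 : 0 ≤ (n * S * volume.real Ω + ∫ x, |laplacian φ x|) := by positivity
    have : |(∫ x, v x * laplacian φ x) - (- ∫ x, φ x * F x)| ≤ 0 := by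
      refine le_of_forall_pos_le_add fun ε hε => ?_
      set C := (n * S * volume.real Ω + ∫ x, |laplacian φ x|)
      refine (bnd (ε / (C + 1)) (by positivity)).trans ?_
      rw [div_mul_eq_mul_div, div_le_iff₀ (by positivity)]
      nlinarith
    exact sub_eq_zero.1 (abs_nonpos_iff.1 this)

end Poisson


section Talenti
open Filter Topology

theorem talenti_ode (m : ℕ) (ρ : ℝ → ℝ) (s T c : ℝ) (hsT : s < T) (hc : 0 < c)
    (hpos : ∀ a, s ≤ a → a ≤ T → 0 < ρ a) (hanti : ∀ a b, s ≤ a → a ≤ b → b ≤ T → ρ b ≤ ρ a)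
    (H : ∀ a b, s ≤ a → a < b → b ≤ T → c * ρ b ^ (2 * m) * (b - a) ≤ ρ a ^ (2 * m + 1) * (ρ a - ρ b)) :
    2 * c * (T - s) ≤ ρ s ^ 2 := by
  have hT : 0 < ρ T := hpos T hsT.le le_rfl
  have main : ∀ δ, 0 < δ → δ < 1 → 2 * c * (1 - δ) ^ (2 * m + 1) * (T - s) ≤ ρ s ^ 2 := by
    intro δ h0 h1
    obtain ⟨N, hN⟩ := exists_nat_gt (2 * c * (T - s) / (δ * ρ T ^ 2))
    have hN0 : (0 : ℝ) < N := lt_of_le_of_lt (div_nonneg (by nlinarith) (by positivity)) hN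
    set d := (T - s) / N with hd
    have hd0 : 0 < d := div_pos (by linarith) hN0
    have hdN : d * N = T - s := by rw [hd]; field_simp
    have hsmall : 2 * c * d ≤ δ * ρ T ^ 2 := by
      rw [div_lt_iff₀ (by positivity)] at hN
      have : 2 * c * d * N < δ * ρ T ^ 2 * N := by rw [mul_assoc, hdN]; linarith
      exact (lt_of_mul_lt_mul_right this hN0.le).le
    have step : ∀ a b, s ≤ a → a < b → b ≤ T → b - a = d →
        2 * c * (1 - δ) ^ (2 * m + 1) * d ≤ ρ a ^ 2 - ρ b ^ 2 := by
      intro a b ha hab hb hd'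
      have pa := hpos a ha (hab.le.trans hb)
      have pb := hpos b (ha.trans hab.le) hb
      have hle := hanti a b ha hab.le hb
      have haT := hanti a T ha (hab.le.trans hb) le_rfl
      have hp1 : (1 - δ) ^ (2 * m + 1) ≤ 1 := pow_le_one₀ (by linarith) (by linarith)
      rcases le_or_gt ((1 - δ) * ρ a) (ρ b) with hq | hq
      · have h := H a b ha hab hb
        rw [hd'] at h
        have h2 : ((1 - δ) * ρ a) ^ (2 * m) ≤ ρ b ^ (2 * m) :=
          pow_le_pow_left₀ (by nlinarith) hq _
        rw [mul_pow] at h2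
        have h3 : c * ((1 - δ) ^ (2 * m) * ρ a ^ (2 * m)) * d ≤ ρ a ^ (2 * m + 1) * (ρ a - ρ b) :=
          le_trans (by gcongr) h
        have h4 : c * (1 - δ) ^ (2 * m) * d ≤ ρ a * (ρ a - ρ b) := by
          have : (c * (1 - δ) ^ (2 * m) * d) * ρ a ^ (2 * m) ≤ (ρ a * (ρ a - ρ b)) * ρ a ^ (2 * m) := by
            calc _ = c * ((1 - δ) ^ (2 * m) * ρ a ^ (2 * m)) * d := by ring
              _ ≤ _ := h3
              _ = _ := by ring
          exact le_of_mul_le_mul_right this (by positivity)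
        have h5 : 0 ≤ c * (1 - δ) ^ (2 * m) * d := by
          have : 0 ≤ 1 - δ := by linarith
          positivity
        rw [pow_succ]
        calc 2 * c * ((1 - δ) ^ (2 * m) * (1 - δ)) * d = (c * (1 - δ) ^ (2 * m) * d) * (2 * (1 - δ)) := by ring
          _ ≤ (ρ a * (ρ a - ρ b)) * (2 * (1 - δ)) := by
            apply mul_le_mul_of_nonneg_right h4; linarith
          _ ≤ (ρ a - ρ b) * (ρ a + ρ b) := by
            rw [mul_comm (ρ a), mul_assoc]
            apply mul_le_mul_of_nonneg_left _ (by linarith)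
            nlinarith
          _ = _ := by ring
      · calc 2 * c * (1 - δ) ^ (2 * m + 1) * d ≤ 2 * c * 1 * d := by gcongr
          _ ≤ δ * ρ T ^ 2 := by linarith
          _ ≤ δ * ρ a ^ 2 := by gcongr
          _ ≤ ρ a ^ 2 - ((1 - δ) * ρ a) ^ 2 := by nlinarith [mul_pos h0 (mul_pos pa pa), mul_pos (sub_pos.2 h1) (mul_pos pa pa), mul_pos (mul_pos h0 (sub_pos.2 h1)) (mul_pos pa pa)]
          _ ≤ _ := by
            have : ρ b ^ 2 ≤ ((1 - δ) * ρ a) ^ 2 := pow_le_pow_left₀ pb.le hq.le _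
            linarith
    have ind : ∀ k : ℕ, k ≤ N → 2 * c * (1 - δ) ^ (2 * m + 1) * (d * k) ≤ ρ s ^ 2 - ρ (s + d * k) ^ 2 := by
      intro k
      induction k with
      | zero => simp
      | succ k ih =>
        intro hk
        have hkN : ((k + 1 : ℕ) : ℝ) ≤ N := by exact_mod_cast hk
        have h1 := ih (by omega)
        have h2 := step (s + d * k) (s + d * (k + 1 : ℕ)) (by nlinarith [(Nat.cast_nonneg k : (0 : ℝ) ≤ k)])
          (by push_cast; nlinarith) (by nlinarith) (by push_cast; ring)
        push_cast at *
        linarith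
    have := ind N le_rfl
    rw [hdN, add_sub_cancel] at this
    nlinarith
  have t : Tendsto (fun δ : ℝ => 2 * c * (1 - δ) ^ (2 * m + 1) * (T - s)) (𝓝[>] 0)
      (𝓝 (2 * c * (1 - 0) ^ (2 * m + 1) * (T - s))) := by
    refine Tendsto.mono_left ?_ nhdsWithin_le_nhds
    exact Continuous.tendsto (f := fun δ : ℝ => 2 * c * (1 - δ) ^ (2 * m + 1) * (T - s)) (by fun_prop) 0
  simp only [sub_zero, one_pow, mul_one] at t
  refine le_of_tendsto t ?_
  filter_upwards [Ioo_mem_nhdsGT (zero_lt_one)] with δ hδ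
  exact main δ hδ.1 hδ.2

theorem clm_norm_sq {n : ℕ} (L : Eu n →L[ℝ] ℝ) : ‖L‖ ^ 2 = ∑ i, (L (bas i)) ^ 2 := by
  set g := (InnerProductSpace.toDual ℝ (Eu n)).symm L with hg
  have hgL : ∀ z, inner ℝ g z = L z := fun z => by simp [hg]
  have : ‖g‖ = ‖L‖ := by simp [hg]
  rw [← this, EuclideanSpace.real_norm_sq_eq]
  refine Finset.sum_congr rfl fun i _ => ?_
  rw [← hgL]
  simp [bas, EuclideanSpace.inner_single_right]

end Talenti


section Talenti
open Filter Topology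
variable {n : ℕ}

theorem energy_identity {w : Eu n → ℝ} (hw : ContDiff ℝ 2 w) (hc : HasCompactSupport w)
    {Φ Ψ : ℝ → ℝ} (hΦ : ∀ s, HasDerivAt Φ (Ψ s) s) (hΨ : Continuous Ψ) :
    ∫ x, Ψ (w x) * ‖fderiv ℝ w x‖ ^ 2 = - ∫ x, Φ (w x) * laplacian w x := by
  have hΦc : Continuous Φ := continuous_iff_continuousAt.2 fun s => (hΦ s).continuousAt
  have hwd : ∀ x, HasFDerivAt w (fderiv ℝ w x) x := fun x =>
    (hw.differentiable (by norm_num) x).hasFDerivAt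
  have hfd : ∀ x, HasFDerivAt (fun y => Φ (w y)) (Ψ (w x) • fderiv ℝ w x) x := fun x =>
    (hΦ (w x)).comp_hasFDerivAt x (hwd x)
  have g1 : ∀ e : Eu n, ContDiff ℝ 1 (fun y => fderiv ℝ w y e) := fun e =>
    contDiff_pd1 hw (by norm_num) e
  have hfde : ∀ x e, fderiv ℝ (fun y => Φ (w y)) x e = Ψ (w x) * fderiv ℝ w x e := fun x e => by
    rw [(hfd x).fderiv]; simp
  have I1 : ∀ e : Eu n, Integrable (fun x => Ψ (w x) * fderiv ℝ w x e * fderiv ℝ w x e) := fun e => by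
    refine Continuous.integrable_of_hasCompactSupport ?_ ?_
    · exact ((hΨ.comp hw.continuous).mul (g1 e).continuous).mul (g1 e).continuous
    · exact (hasCompactSupport_pd1 hc e).mul_left
  have I2 : ∀ e : Eu n, Integrable (fun x => Φ (w x) * pd2 w e x) := fun e => by
    refine Continuous.integrable_of_hasCompactSupport ?_ ?_
    · exact (hΦc.comp hw.continuous).mul (continuous_pd2 hw e)
    · exact (hasCompactSupport_pd2 hc e).mul_left
  have I3 : ∀ e : Eu n, Integrable (fun x => Φ (w x) * fderiv ℝ w x e) := fun e => by
    refine Continuous.integrable_of_hasCompactSupport ?_ ?_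
    · exact (hΦc.comp hw.continuous).mul (g1 e).continuous
    · exact (hasCompactSupport_pd1 hc e).mul_left
  have key : ∀ e : Eu n, ∫ x, Φ (w x) * pd2 w e x = - ∫ x, Ψ (w x) * fderiv ℝ w x e * fderiv ℝ w x e := by
    intro e
    have := integral_mul_fderiv_eq_neg_fderiv_mul_of_integrable (μ := (volume : Measure (Eu n)))
      (f := fun y => Φ (w y)) (g := fun y => fderiv ℝ w y e) (v := e)
      (by simpa only [hfde] using I1 e) (I2 e) (I3 e) (fun x _ => (hfd x).differentiableAt)
      (fun x _ => (g1 e).differentiable (by norm_num) x)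
    simp only [hfde] at this
    exact this
  have eL : ∀ x, Φ (w x) * laplacian w x = ∑ i, Φ (w x) * pd2 w (bas i) x := fun x => by
    rw [laplacian_eq_pd2, Finset.mul_sum]
  have eR : ∀ x, Ψ (w x) * ‖fderiv ℝ w x‖ ^ 2 =
      ∑ i, Ψ (w x) * fderiv ℝ w x (bas i) * fderiv ℝ w x (bas i) := fun x => by
    rw [clm_norm_sq, Finset.mul_sum]
    exact Finset.sum_congr rfl fun i _ => by ring
  simp only [eL, eR]
  rw [integral_finset_sum _ fun i _ => I1 _, integral_finset_sum _ fun i _ => I2 _,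
    ← Finset.sum_neg_distrib]
  exact Finset.sum_congr rfl fun i _ => by rw [key]; simp

theorem bump_prim (a b : ℝ) (hab : a < b) (Ψ : ℝ → ℝ) (hΨ : Continuous Ψ) (h0 : ∀ s, 0 ≤ Ψ s)
    (h1 : ∀ s, Ψ s ≤ 1) (hs : ∀ s, (s ≤ a ∨ b ≤ s) → Ψ s = 0) :
    ∃ Φ : ℝ → ℝ, (∀ s, HasDerivAt Φ (Ψ s) s) ∧ (∀ s, s ≤ a → Φ s = 0) ∧ (∀ s, 0 ≤ Φ s) ∧
      (∀ s, Φ s ≤ b - a) := by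
  have hd : ∀ s, HasDerivAt (fun s => ∫ t in a..s, Ψ t) (Ψ s) s := fun s =>
    intervalIntegral.integral_hasDerivAt_right (hΨ.intervalIntegrable _ _)
      hΨ.stronglyMeasurable.stronglyMeasurableAtFilter hΨ.continuousAt
  have hz : ∀ s, s ≤ a → ∫ t in a..s, Ψ t = 0 := by
    intro s hsa
    rw [intervalIntegral.integral_symm, neg_eq_zero]
    refine intervalIntegral.integral_zero_ae (Eventually.of_forall fun t ht => ?_)
    rw [Set.uIoc_of_le hsa] at ht
    exact hs t (Or.inl ht.2)
  have hle : ∀ s, a ≤ s → s ≤ b → ∫ t in a..s, Ψ t ≤ b - a := by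
    intro s h1s h2s
    have := intervalIntegral.integral_mono_on (μ := volume) h1s (hΨ.intervalIntegrable _ _)
      (g := fun _ => (1:ℝ)) (continuous_const.intervalIntegrable _ _) (fun t _ => h1 t)
    simp at this
    linarith
  refine ⟨fun s => ∫ t in a..s, Ψ t, hd, hz, fun s => ?_, fun s => ?_⟩
  · rcases le_total s a with h | h
    · exact (hz s h).ge
    · exact intervalIntegral.integral_nonneg h fun t _ => h0 t
  · rcases le_total s a with h | h
    · dsimp only; rw [hz s h]; linarith
    rcases le_total s b with h' | h'
    · exact hle s h h'
    · have := intervalIntegral.integral_add_adjacent_intervals (hΨ.intervalIntegrable a b)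
        (hΨ.intervalIntegrable b s) (μ := volume)
      have hz2 : ∫ t in b..s, Ψ t = 0 := by
        refine intervalIntegral.integral_zero_ae (Eventually.of_forall fun t ht => ?_)
        rw [Set.uIoc_of_le h'] at ht
        exact hs t (Or.inr ht.1.le)
      dsimp only
      rw [← this, hz2, add_zero]
      exact hle b hab.le le_rfl

theorem vol_superlevel_lt_top {w : Eu n → ℝ} (hc : HasCompactSupport w) (a : ℝ) (ha : 0 ≤ a) :
    volume {x | a < w x} < ⊤ := by
  refine lt_of_le_of_lt (measure_mono ?_) hc.isCompact.measure_lt_top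
  intro x hx
  refine subset_tsupport _ ?_
  simp only [Set.mem_setOf_eq, Function.mem_support] at *
  linarith

theorem energy_bound {w : Eu n → ℝ} (hw : ContDiff ℝ 2 w) (hc : HasCompactSupport w)
    (a b : ℝ) (ha : 0 ≤ a) (hab : a < b) (hlap : ∀ x, a < w x → - laplacian w x ≤ 1) :
    ∫ x in {x | a < w x ∧ w x < b}, ‖fderiv ℝ w x‖ ^ 2 ≤ (b - a) * (volume {x | a < w x}).toReal := by
  have hwc := hw.continuous
  have fdc : Continuous (fderiv ℝ w) := hw.continuous_fderiv (by norm_num)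
  have fdcs : HasCompactSupport (fun x => ‖fderiv ℝ w x‖ ^ 2) :=
    (hc.fderiv ℝ).comp_left (g := fun L => ‖L‖ ^ 2) (by simp)
  have fdi : Integrable (fun x => ‖fderiv ℝ w x‖ ^ 2) :=
    (fdc.norm.pow 2).integrable_of_hasCompactSupport fdcs
  have hfin := vol_superlevel_lt_top hc a ha
  have mS : MeasurableSet {x | a < w x} := (isOpen_lt continuous_const hwc).measurableSet
  let Ψ : ℕ → ℝ → ℝ := fun k s => max 0 (min 1 (k * min (s - a) (b - s)))
  have Ψc : ∀ k, Continuous (Ψ k) := fun k => by fun_prop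
  have Ψ0 : ∀ k s, 0 ≤ Ψ k s := fun k s => le_max_left _ _
  have Ψ1 : ∀ k s, Ψ k s ≤ 1 := fun k s => max_le zero_le_one (min_le_left _ _)
  have Ψz : ∀ k s, (s ≤ a ∨ b ≤ s) → Ψ k s = 0 := fun k s hs => by
    apply max_eq_left
    refine (min_le_right _ _).trans (mul_nonpos_of_nonneg_of_nonpos (Nat.cast_nonneg k) ?_)
    rcases hs with h | h
    · exact (min_le_left _ _).trans (by linarith)
    · exact (min_le_right _ _).trans (by linarith)
  have bd : ∀ k, ∫ x, Ψ k (w x) * ‖fderiv ℝ w x‖ ^ 2 ≤ (b - a) * (volume {x | a < w x}).toReal := by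
    intro k
    obtain ⟨Φ, hΦ, hΦz, hΦ0, hΦ1⟩ := bump_prim a b hab (Ψ k) (Ψc k) (Ψ0 k) (Ψ1 k) (Ψz k)
    rw [energy_identity hw hc hΦ (Ψc k), ← integral_neg]
    have hΦc : Continuous Φ := continuous_iff_continuousAt.2 fun s => (hΦ s).continuousAt
    have : (b - a) * (volume {x | a < w x}).toReal =
        ∫ x, Set.indicator {x | a < w x} (fun _ => b - a) x := by
      rw [integral_indicator_const _ mS]; simp [Measure.real, mul_comm]
    rw [this]
    refine integral_mono ?_ ?_ ?_
    · refine (Continuous.integrable_of_hasCompactSupport ?_ ?_).neg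
      · exact (hΦc.comp hwc).mul (continuous_laplacian hw)
      · exact (hasCompactSupport_laplacian hc).mul_left
    · rw [integrable_indicator_iff mS]
      exact integrableOn_const hfin.ne
    · intro x
      dsimp only
      by_cases hx : a < w x
      · rw [Set.indicator_of_mem (by exact hx)]
        nlinarith [hlap x hx, hΦ0 (w x), hΦ1 (w x)]
      · rw [Set.indicator_of_notMem (by exact hx), hΦz _ (not_lt.1 hx)]; simp
  have mT : MeasurableSet {x | a < w x ∧ w x < b} :=
    ((isOpen_lt continuous_const hwc).inter (isOpen_lt hwc continuous_const)).measurableSet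
  have lim : Tendsto (fun k => ∫ x, Ψ k (w x) * ‖fderiv ℝ w x‖ ^ 2) atTop
      (𝓝 (∫ x in {x | a < w x ∧ w x < b}, ‖fderiv ℝ w x‖ ^ 2)) := by
    rw [← integral_indicator mT]
    refine tendsto_integral_of_dominated_convergence (fun x => ‖fderiv ℝ w x‖ ^ 2) ?_ fdi ?_ ?_
    · intro k
      exact (((Ψc k).comp hwc).mul (fdc.norm.pow 2)).aestronglyMeasurable
    · intro k
      refine Eventually.of_forall fun x => ?_
      rw [norm_mul, Real.norm_eq_abs, abs_of_nonneg (Ψ0 k _), Real.norm_eq_abs, abs_of_nonneg (by positivity)]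
      exact mul_le_of_le_one_left (by positivity) (Ψ1 k _)
    · refine Eventually.of_forall fun x => ?_
      by_cases hx : a < w x ∧ w x < b
      · rw [Set.indicator_of_mem (by exact hx)]
        refine tendsto_const_nhds.congr' ?_
        have hm : 0 < min (w x - a) (b - w x) := lt_min (by linarith [hx.1]) (by linarith [hx.2])
        obtain ⟨N, hN⟩ := exists_nat_gt (1 / min (w x - a) (b - w x))
        filter_upwards [eventually_ge_atTop N] with k hk
        have hk' : (N : ℝ) ≤ k := by exact_mod_cast hk
        rw [div_lt_iff₀ hm] at hN
        have : Ψ k (w x) = 1 := by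
          simp only [Ψ]
          rw [min_eq_left, max_eq_right zero_le_one]
          nlinarith
        rw [this, one_mul]
      · rw [Set.indicator_of_notMem (by exact hx)]
        have : ∀ k, Ψ k (w x) = 0 := fun k => Ψz k _ (by
          by_contra! h; exact hx ⟨h.1, h.2⟩)
        simp [this]
  exact le_of_tendsto' lim bd

end Talenti


section Talenti
open Filter Topology
variable {n : ℕ}

theorem taylor_bound {w : Eu n → ℝ} (hw : ContDiff ℝ 2 w) (hc : HasCompactSupport w) :
    ∃ C K : ℝ, 0 ≤ C ∧ 0 ≤ K ∧ (∀ x, ‖fderiv ℝ w x‖ ≤ K) ∧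
      ∀ x y, w y ≤ w x + ‖fderiv ℝ w x‖ * ‖y - x‖ + C * ‖y - x‖ ^ 2 := by
  have h1 : ContDiff ℝ 1 (fderiv ℝ w) := hw.fderiv_right (by norm_num)
  have hcs : HasCompactSupport (fderiv ℝ w) := hc.fderiv ℝ
  obtain ⟨C, hC⟩ := h1.lipschitzWith_of_hasCompactSupport hcs (by norm_num)
  obtain ⟨K, hK⟩ := hcs.exists_bound_of_continuous h1.continuous
  refine ⟨C, max K 0, C.2, le_max_right _ _, fun x => (hK x).trans (le_max_left _ _), fun x y => ?_⟩
  have hd : ∀ z ∈ Metric.closedBall x ‖y - x‖, HasFDerivWithinAt w (fderiv ℝ w z)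
      (Metric.closedBall x ‖y - x‖) z := fun z _ =>
    ((hw.differentiable (by norm_num)) z).hasFDerivAt.hasFDerivWithinAt
  have := (convex_closedBall x ‖y - x‖).norm_image_sub_le_of_norm_hasFDerivWithin_le'
    (φ := fderiv ℝ w x) (C := C * ‖y - x‖) hd (fun z hz => by
      have := hC.dist_le_mul z x
      rw [dist_eq_norm] at this
      exact this.trans (mul_le_mul_of_nonneg_left hz C.2))
    (Metric.mem_closedBall_self (norm_nonneg _)) (by simp [dist_eq_norm] : y ∈ _)
  have h3 := (abs_le.1 (by simpa [Real.norm_eq_abs] using this : |w y - w x - (fderiv ℝ w x y - fderiv ℝ w x x)| ≤ _)).2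
  have h4 := (le_abs_self _).trans ((fderiv ℝ w x).le_opNorm (y - x))
  rw [map_sub] at h4
  nlinarith

theorem coarea_step (hn : 0 < n) {w : Eu n → ℝ} (hw : Continuous w) (hc : HasCompactSupport w)
    {q : Eu n → ℝ} (hq : Continuous q) (a b r : ℝ) (ha : 0 ≤ a) (hab : a < b) (hr : 0 < r)
    (hb : volume {x | b < w x} ≠ 0)
    (hqs : HasCompactSupport (fun x => min (max (q x - a) 0) (b - a)))
    (hwq : ∀ x z, dist z x < r → w x ≤ q z) :
    (∫ x, min (max (w x - a) 0) (b - a)) + (b - a) * (r * (n * (volume (Metric.ball (0:EuclideanSpace ℝ (Fin n)) 1)).toReal ^ ((n:ℝ)⁻¹) * ((volume {x | b < w x}).toReal ^ ((n:ℝ)⁻¹)) ^ (n-1)))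
      ≤ ∫ x, min (max (q x - a) 0) (b - a) := by
  set P : ℝ := (n * (volume (Metric.ball (0:EuclideanSpace ℝ (Fin n)) 1)).toReal ^ ((n:ℝ)⁻¹) * ((volume {x | b < w x}).toReal ^ ((n:ℝ)⁻¹)) ^ (n-1)) with hP
  have hP0 : 0 ≤ P := by positivity
  have hws : HasCompactSupport (fun x => min (max (w x - a) 0) (b - a)) :=
    hc.comp_left (g := fun y => min (max (y - a) 0) (b - a)) (by
      simp only [zero_sub]; rw [max_eq_right (by linarith), min_eq_left (by linarith)])
  have c1 : Continuous (fun x => min (max (w x - a) 0) (b - a)) := by fun_prop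
  have c2 : Continuous (fun x => min (max (q x - a) 0) (b - a)) := by fun_prop
  have i1 := c1.integrable_of_hasCompactSupport (μ := volume) hws
  have i2 := c2.integrable_of_hasCompactSupport (μ := volume) hqs
  have n1 : ∀ x, 0 ≤ min (max (w x - a) 0) (b - a) := fun x =>
    le_min (le_max_right _ _) (by linarith)
  have n2 : ∀ x, 0 ≤ min (max (q x - a) 0) (b - a) := fun x =>
    le_min (le_max_right _ _) (by linarith)
  have key : (∫⁻ x, ENNReal.ofReal (min (max (w x - a) 0) (b - a))) + ENNReal.ofReal ((b-a) * (r * P))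
      ≤ ∫⁻ x, ENNReal.ofReal (min (max (q x - a) 0) (b - a)) := by
    rw [lintegral_eq_lintegral_meas_lt _ (Eventually.of_forall n1) c1.measurable.aemeasurable,
      lintegral_eq_lintegral_meas_lt _ (Eventually.of_forall n2) c2.measurable.aemeasurable]
    have e : ENNReal.ofReal ((b-a) * (r * P)) = ∫⁻ t in Set.Ioi (0:ℝ),
        (Set.Iio (b-a)).indicator (fun _ => ENNReal.ofReal (r * P)) t := by
      rw [lintegral_indicator measurableSet_Iio, setLIntegral_const,
        Measure.restrict_apply measurableSet_Iio, Set.inter_comm, Set.Ioi_inter_Iio, Real.volume_Ioo,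
        sub_zero, ← ENNReal.ofReal_mul (by positivity), mul_comm]
    rw [e, ← lintegral_add_right _ (measurable_const.indicator measurableSet_Iio)]
    refine setLIntegral_mono' measurableSet_Ioi fun t ht => ?_
    have ht : 0 < t := ht
    by_cases htb : t < b - a
    · rw [Set.indicator_of_mem (show t ∈ Set.Iio (b-a) from htb)]
      have s1 : {x | t < min (max (w x - a) 0) (b - a)} = {x | a + t < w x} := by
        ext x
        simp only [Set.mem_setOf_eq, lt_min_iff, lt_max_iff]
        constructor
        · rintro ⟨h | h, _⟩ <;> linarith
        · intro h; exact ⟨Or.inl (by linarith), htb⟩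
      have s2 : Metric.thickening r {x | a + t < w x} ⊆ {x | t < min (max (q x - a) 0) (b - a)} := by
        intro z hz
        obtain ⟨x, hx, hd⟩ := Metric.mem_thickening_iff.1 hz
        have := hwq x z hd
        have hx : a + t < w x := hx
        simp only [Set.mem_setOf_eq, lt_min_iff, lt_max_iff]
        exact ⟨Or.inl (by linarith), htb⟩
      rw [s1]
      have sub : {x | b < w x} ⊆ {x | a + t < w x} := fun x hx =>
        lt_trans (by linarith) (show b < w x from hx)
      have fin : volume {x | a + t < w x} ≠ ⊤ := (vol_superlevel_lt_top hc _ (by linarith)).ne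
      refine le_trans ?_ (measure_mono s2)
      refine le_trans ?_ (iso_thickening n hn {x | a + t < w x} (isOpen_lt continuous_const hw)
        (fun h => hb (measure_mono_null sub h)) fin r hr)
      rw [ENNReal.ofReal_add (by positivity) (by positivity), ENNReal.ofReal_toReal fin]
      refine add_le_add le_rfl (ENNReal.ofReal_le_ofReal ?_)
      refine mul_le_mul_of_nonneg_left ?_ hr.le
      have := ENNReal.toReal_mono fin (measure_mono sub)
      rw [hP]
      gcongr
    · rw [Set.indicator_of_notMem (show t ∉ Set.Iio (b-a) from htb), add_zero]
      refine measure_mono ?_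
      intro x hx
      exact absurd (lt_of_lt_of_le (show t < _ from hx) (min_le_right _ _)) htb
  rw [← ofReal_integral_eq_lintegral_ofReal i1 (Eventually.of_forall n1),
    ← ofReal_integral_eq_lintegral_ofReal i2 (Eventually.of_forall n2),
    ← ENNReal.ofReal_add (integral_nonneg n1) (mul_nonneg (by linarith) (by positivity))] at key
  exact (ENNReal.ofReal_le_ofReal_iff (integral_nonneg n2)).1 key

theorem coarea_ge (hn : 0 < n) {w : Eu n → ℝ} (hw : ContDiff ℝ 2 w) (hc : HasCompactSupport w)
    (a b : ℝ) (ha : 0 ≤ a) (hab : a < b) (hb : volume {x | b < w x} ≠ 0) :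
    (b - a) * (n * (volume (Metric.ball (0:EuclideanSpace ℝ (Fin n)) 1)).toReal ^ ((n:ℝ)⁻¹) * ((volume {x | b < w x}).toReal ^ ((n:ℝ)⁻¹)) ^ (n-1))
      ≤ ∫ x in {x | a < w x ∧ w x < b}, ‖fderiv ℝ w x‖ := by
  set P : ℝ := (n * (volume (Metric.ball (0:EuclideanSpace ℝ (Fin n)) 1)).toReal ^ ((n:ℝ)⁻¹) * ((volume {x | b < w x}).toReal ^ ((n:ℝ)⁻¹)) ^ (n-1)) with hP
  obtain ⟨C, K, hC, hK0, hK, hT⟩ := taylor_bound hw hc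
  have hwc := hw.continuous
  have fdc : Continuous (fderiv ℝ w) := hw.continuous_fderiv (by norm_num)
  set A : Set (Eu n) := {x | a < w x ∧ w x < b} with hA
  have hAm : MeasurableSet A :=
    ((isOpen_lt continuous_const hwc).inter (isOpen_lt hwc continuous_const)).measurableSet
  have hAf : volume A ≠ ⊤ := ((measure_mono (fun x hx => hx.1)).trans_lt
    (vol_superlevel_lt_top hc a ha)).ne
  have fdi : Integrable (fun x => ‖fderiv ℝ w x‖) :=
    fdc.norm.integrable_of_hasCompactSupport (hc.fderiv ℝ).norm
  set I := ∫ x in A, ‖fderiv ℝ w x‖ with hI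
  have main : ∀ r : ℝ, 0 < r → r * K + C * r ^ 2 < b - a →
      (b - a - (r * K + C * r ^ 2)) * P ≤ I + C * r * (volume A).toReal := by
    intro r hr hlt
    set θ := r * K + C * r ^ 2 with hθ
    have hθ0 : 0 ≤ θ := by positivity
    have hgθ : ∀ x, r * ‖fderiv ℝ w x‖ + C * r ^ 2 ≤ θ := fun x => by
      have := mul_le_mul_of_nonneg_left (hK x) hr.le
      linarith
    have hg0 : ∀ x, 0 ≤ r * ‖fderiv ℝ w x‖ + C * r ^ 2 := fun x => by positivity
    have qs : HasCompactSupport (fun x => min (max (w x + (r * ‖fderiv ℝ w x‖ + C * r ^ 2) - (a + θ)) 0) (b - (a + θ))) := by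
      refine HasCompactSupport.of_support_subset_isCompact hc.isCompact fun x hx => ?_
      by_contra hx'
      apply hx
      have h1 : w x = 0 := image_eq_zero_of_notMem_tsupport hx'
      have := hgθ x
      dsimp only
      rw [max_eq_right (by linarith), min_eq_left (by linarith)]
    have st := coarea_step hn hwc hc (q := fun x => w x + (r * ‖fderiv ℝ w x‖ + C * r ^ 2))
      (by fun_prop) (a + θ) b r (by linarith) (by linarith) hr hb qs (fun x z hd => by
        have h1 := hT z x
        have h2 : ‖x - z‖ ≤ r := by rw [← dist_eq_norm, dist_comm]; exact hd.le
        have h3 : ‖fderiv ℝ w z‖ * ‖x - z‖ ≤ r * ‖fderiv ℝ w z‖ := by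
          rw [mul_comm r]; exact mul_le_mul_of_nonneg_left h2 (norm_nonneg _)
        have h4 : C * ‖x - z‖ ^ 2 ≤ C * r ^ 2 := by gcongr
        linarith)
    have c2 : Continuous (fun x => min (max (w x + (r * ‖fderiv ℝ w x‖ + C * r ^ 2) - (a + θ)) 0) (b - (a + θ))) := by fun_prop
    have c1 : Continuous (fun x => min (max (w x - (a + θ)) 0) (b - (a + θ))) := by fun_prop
    have hws : HasCompactSupport (fun x => min (max (w x - (a + θ)) 0) (b - (a + θ))) :=
      hc.comp_left (g := fun y => min (max (y - (a + θ)) 0) (b - (a + θ))) (by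
        simp only [zero_sub]; rw [max_eq_right (by linarith), min_eq_left (by linarith)])
    have i1 := c1.integrable_of_hasCompactSupport (μ := volume) hws
    have i2 := c2.integrable_of_hasCompactSupport (μ := volume) qs
    have i3 : IntegrableOn (fun x => r * ‖fderiv ℝ w x‖ + C * r ^ 2) A :=
      (fdi.const_mul r).integrableOn.add (integrableOn_const hAf)
    have up : (∫ x, min (max (w x + (r * ‖fderiv ℝ w x‖ + C * r ^ 2) - (a + θ)) 0) (b - (a + θ))) ≤
        (∫ x, min (max (w x - (a + θ)) 0) (b - (a + θ))) + (r * I + C * r ^ 2 * (volume A).toReal) := by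
      have e : r * I + C * r ^ 2 * (volume A).toReal = ∫ x, A.indicator (fun x => r * ‖fderiv ℝ w x‖ + C * r ^ 2) x := by
        rw [integral_indicator hAm, integral_add (fdi.const_mul r).integrableOn (integrableOn_const hAf),
          integral_const_mul, setIntegral_const, smul_eq_mul, mul_comm (C * r ^ 2)]
        rfl
      rw [e, ← integral_add i1 ((integrable_indicator_iff hAm).2 i3)]
      refine integral_mono i2 (i1.add ((integrable_indicator_iff hAm).2 i3)) fun x => ?_
      have g1 := hg0 x
      have g2 := hgθ x
      dsimp only
      by_cases hx : x ∈ A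
      · simp only [Pi.add_apply, Set.indicator_of_mem hx]
        rcases le_total (w x - (a + θ)) 0 with h | h
        · rw [max_eq_right h, min_eq_left (by linarith : (0:ℝ) ≤ b - (a + θ))]
          refine (min_le_left _ _).trans (max_le (by linarith) (by linarith))
        · rw [max_eq_left h]
          rcases le_total (w x - (a + θ)) (b - (a + θ)) with h' | h'
          · rw [min_eq_left h']
            refine (min_le_left _ _).trans (max_le (by linarith) (by linarith))
          · rw [min_eq_right h']
            refine (min_le_right _ _).trans (by linarith)
      · simp only [Pi.add_apply, Set.indicator_of_notMem hx, add_zero]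
        rcases le_or_gt (w x) a with h | h
        · rw [max_eq_right (by linarith), max_eq_right (by linarith)]
        · have hb' : b ≤ w x := by
            by_contra hh
            exact hx ⟨h, not_le.1 hh⟩
          refine (min_le_right _ _).trans (le_min (le_max_of_le_left (by linarith)) le_rfl)
    have fin : r * ((b - (a + θ)) * P) ≤ r * (I + C * r * (volume A).toReal) := by
      have := st.trans up
      nlinarith
    have := le_of_mul_le_mul_left fin hr
    have e2 : b - a - θ = b - (a + θ) := by ring
    rw [e2]; exact this
  have t1 : Tendsto (fun r : ℝ => (b - a - (r * K + C * r ^ 2)) * P) (𝓝[>] 0) (𝓝 ((b - a) * P)) := by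
    have : Continuous (fun r : ℝ => (b - a - (r * K + C * r ^ 2)) * P) := by fun_prop
    have := this.tendsto 0
    simp only [zero_mul, ne_eq, OfNat.ofNat_ne_zero, not_false_eq_true, zero_pow, mul_zero, add_zero, sub_zero] at this
    exact this.mono_left nhdsWithin_le_nhds
  have t2 : Tendsto (fun r : ℝ => I + C * r * (volume A).toReal) (𝓝[>] 0) (𝓝 I) := by
    have : Continuous (fun r : ℝ => I + C * r * (volume A).toReal) := by fun_prop
    have := this.tendsto 0
    simp only [zero_mul, mul_zero, add_zero] at this
    exact this.mono_left nhdsWithin_le_nhds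
  refine le_of_tendsto_of_tendsto t1 t2 ?_
  have t3 : Tendsto (fun r : ℝ => r * K + C * r ^ 2) (𝓝[>] 0) (𝓝 0) := by
    have : Continuous (fun r : ℝ => r * K + C * r ^ 2) := by fun_prop
    have := this.tendsto 0
    simp only [zero_mul, ne_eq, OfNat.ofNat_ne_zero, not_false_eq_true, zero_pow, mul_zero, add_zero] at this
    exact this.mono_left nhdsWithin_le_nhds
  filter_upwards [t3.eventually (gt_mem_nhds (by linarith : (0:ℝ) < b - a)), self_mem_nhdsWithin] with r h1 h2
  exact main r h2 h1

end Talenti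


section Talenti
open Filter Topology
variable {n : ℕ}

theorem pow_sub_le (m : ℕ) (x y : ℝ) (hy : 0 ≤ y) (hyx : y ≤ x) :
    x ^ (m+1) - y ^ (m+1) ≤ (m+1) * x ^ m * (x - y) := by
  have hx : 0 ≤ x := hy.trans hyx
  induction m with
  | zero => simp
  | succ k ih =>
    have h1 : y ^ (k+1) ≤ x ^ (k+1) := by gcongr
    have h2 := mul_le_mul_of_nonneg_left ih hx
    have h3 : 0 ≤ (x^(k+1) - y^(k+1)) * (x - y) := mul_nonneg (by linarith) (by linarith)
    push_cast
    have e1 : x ^ (k+1+1) - y^(k+1+1) = x * (x^(k+1) - y^(k+1)) + y^(k+1) * (x-y) := by ring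
    rw [e1]
    have e2 : x * ((k+1) * x ^ k * (x - y)) = (k+1) * x^(k+1) * (x-y) := by ring
    nlinarith

theorem cs_set {A : Set (Eu n)} (hAf : volume A ≠ ⊤) {g : Eu n → ℝ}
    (h1 : IntegrableOn g A) (h2 : IntegrableOn (fun x => g x ^ 2) A) :
    (∫ x in A, g x) ^ 2 ≤ (volume A).toReal * ∫ x in A, g x ^ 2 := by
  have key : ∀ c : ℝ, 0 ≤ (volume A).toReal * (c * c) + (-2 * ∫ x in A, g x) * c + ∫ x in A, g x ^ 2 := by
    intro c
    have h0 : 0 ≤ ∫ x in A, (g x - c) ^ 2 := integral_nonneg fun x => sq_nonneg _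
    have e : ∫ x in A, (g x - c) ^ 2 = ∫ x in A, (g x ^ 2 + ((-2 * c) * g x + c * c)) := by
      congr 1; ext x; ring
    have hh : IntegrableOn (fun x => (-2 * c) * g x + c * c) A :=
      (h1.const_mul _).add (integrableOn_const hAf)
    rw [e, integral_add h2 hh,
      integral_add (h1.const_mul _) (integrableOn_const hAf), integral_const_mul, setIntegral_const,
      smul_eq_mul] at h0
    have : volume.real A = (volume A).toReal := rfl
    rw [this] at h0
    linarith
  have := discrim_le_zero key
  rw [discrim] at this
  nlinarith

theorem talenti_diff (hn : 0 < n) {w : Eu n → ℝ} (hw : ContDiff ℝ 2 w) (hc : HasCompactSupport w)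
    (a b : ℝ) (ha : 0 ≤ a) (hab : a < b) (hb : volume {x | b < w x} ≠ 0)
    (hlap : ∀ x, a < w x → - laplacian w x ≤ 1) :
    (b - a) * (n * (volume (Metric.ball (0:EuclideanSpace ℝ (Fin n)) 1)).toReal ^ ((n:ℝ)⁻¹) * ((volume {x | b < w x}).toReal ^ ((n:ℝ)⁻¹)) ^ (n-1)) ^ 2
    ≤ (volume {x | a < w x}).toReal * ((volume {x | a < w x}).toReal - (volume {x | b < w x}).toReal) := by
  have h1 := coarea_ge hn hw hc a b ha hab hb
  have h2 := energy_bound hw hc a b ha hab hlap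
  set P : ℝ := (n * (volume (Metric.ball (0:EuclideanSpace ℝ (Fin n)) 1)).toReal ^ ((n:ℝ)⁻¹) * ((volume {x | b < w x}).toReal ^ ((n:ℝ)⁻¹)) ^ (n-1)) with hP
  have hP0 : 0 ≤ P := by positivity
  have hwc := hw.continuous
  have fdc : Continuous (fderiv ℝ w) := hw.continuous_fderiv (by norm_num)
  set A : Set (Eu n) := {x | a < w x ∧ w x < b} with hA
  have hAm : MeasurableSet A :=
    ((isOpen_lt continuous_const hwc).inter (isOpen_lt hwc continuous_const)).measurableSet
  have fa := vol_superlevel_lt_top hc a ha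
  have hAf : volume A ≠ ⊤ := ((measure_mono (fun x hx => hx.1)).trans_lt fa).ne
  have fdi : Integrable (fun x => ‖fderiv ℝ w x‖) :=
    fdc.norm.integrable_of_hasCompactSupport (hc.fderiv ℝ).norm
  have fdcs : HasCompactSupport (fun x => ‖fderiv ℝ w x‖ ^ 2) :=
    (hc.fderiv ℝ).comp_left (g := fun L => ‖L‖ ^ 2) (by simp)
  have fdi2 : Integrable (fun x => ‖fderiv ℝ w x‖ ^ 2) :=
    (fdc.norm.pow 2).integrable_of_hasCompactSupport fdcs
  have h3 := cs_set hAf fdi.integrableOn fdi2.integrableOn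
  have fb := vol_superlevel_lt_top hc b (by linarith)
  have h4 : (volume A).toReal + (volume {x | b < w x}).toReal ≤ (volume {x | a < w x}).toReal := by
    rw [← ENNReal.toReal_add hAf fb.ne]
    refine ENNReal.toReal_mono fa.ne ?_
    rw [← measure_union _ (isOpen_lt continuous_const hwc).measurableSet]
    · refine measure_mono ?_
      rintro x (hx | hx)
      · exact hx.1
      · exact hab.trans hx
    · rw [Set.disjoint_left]
      intro x hx hx'
      exact lt_asymm hx.2 hx'
  have h5 : ((b - a) * P) ^ 2 ≤ (∫ x in A, ‖fderiv ℝ w x‖) ^ 2 := by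
    have : 0 ≤ (b - a) * P := mul_nonneg (by linarith) hP0
    gcongr
  have hV : 0 ≤ (volume A).toReal := ENNReal.toReal_nonneg
  have hVa : 0 ≤ (volume {x | a < w x}).toReal := ENNReal.toReal_nonneg
  have h6 : (volume A).toReal * (∫ x in A, ‖fderiv ℝ w x‖ ^ 2) ≤
      ((volume {x | a < w x}).toReal - (volume {x | b < w x}).toReal) * ((b - a) * (volume {x | a < w x}).toReal) := by
    refine mul_le_mul (by linarith) h2 (integral_nonneg fun x => by positivity) (by linarith)
  have h7 : (b - a) * ((b - a) * P ^ 2) ≤ (b - a) * ((volume {x | a < w x}).toReal * ((volume {x | a < w x}).toReal - (volume {x | b < w x}).toReal)) := by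
    calc (b - a) * ((b - a) * P ^ 2) = ((b - a) * P) ^ 2 := by ring
      _ ≤ _ := (h5.trans h3).trans h6
      _ = _ := by ring
  exact le_of_mul_le_mul_left h7 (by linarith)

theorem talenti (hn : 0 < n) {w : Eu n → ℝ} (hw : ContDiff ℝ 2 w) (hc : HasCompactSupport w)
    (s0 : ℝ) (hs0 : 0 ≤ s0) (hlap : ∀ x, s0 < w x → - laplacian w x ≤ 1) (x : Eu n) :
    2 * (n * ((volume (Metric.ball (0:EuclideanSpace ℝ (Fin n)) 1)).toReal ^ ((n:ℝ)⁻¹)) ^ 2) * (w x - s0)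
     ≤ ((volume {x | s0 < w x}).toReal ^ ((n:ℝ)⁻¹)) ^ 2 := by
  set κ := (volume (Metric.ball (0:EuclideanSpace ℝ (Fin n)) 1)).toReal ^ ((n:ℝ)⁻¹) with hκ
  have hn' : (0:ℝ) < n := by exact_mod_cast hn
  have hκ0 : 0 < κ := by
    refine Real.rpow_pos_of_pos (ENNReal.toReal_pos ?_ measure_ball_lt_top.ne) _
    exact (Metric.measure_ball_pos _ _ one_pos).ne'
  rcases le_or_gt (w x) s0 with hx | hx
  · have : 2 * (n * κ ^ 2) * (w x - s0) ≤ 0 := mul_nonpos_of_nonneg_of_nonpos (by positivity) (by linarith)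
    exact this.trans (by positivity)
  have hwc := hw.continuous
  obtain ⟨m, rfl⟩ : ∃ m, n = m + 1 := ⟨n - 1, by omega⟩
  set ρ : ℝ → ℝ := fun t => (volume {x | t < w x}).toReal ^ (((m+1:ℕ):ℝ)⁻¹) with hρ
  have hpos : ∀ t, s0 ≤ t → t < w x → 0 < ρ t := by
    intro t h1 h2
    refine Real.rpow_pos_of_pos (ENNReal.toReal_pos ?_ (vol_superlevel_lt_top hc t (by linarith)).ne) _
    exact ((isOpen_lt continuous_const hwc).measure_pos volume ⟨x, h2⟩).ne'
  have hmono : ∀ a b, s0 ≤ a → a ≤ b → ρ b ≤ ρ a := by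
    intro a b h1 h2
    refine Real.rpow_le_rpow ENNReal.toReal_nonneg ?_ (by positivity)
    refine ENNReal.toReal_mono (vol_superlevel_lt_top hc a (by linarith)).ne (measure_mono ?_)
    intro y hy
    exact lt_of_le_of_lt h2 hy
  have hpow : ∀ t, ρ t ^ (m+1) = (volume {x | t < w x}).toReal := by
    intro t
    exact Real.rpow_inv_natCast_pow ENNReal.toReal_nonneg (by omega)
  have hT : ∀ T, s0 < T → T < w x → 2 * (((m+1:ℕ):ℝ) * κ ^ 2) * (T - s0) ≤ ρ s0 ^ 2 := by
    intro T h1 h2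
    refine talenti_ode m ρ s0 T _ h1 (by positivity) (fun a ha hb => hpos a ha (by linarith))
      (fun a b ha hb _ => hmono a b ha hb) fun a b h3 h4 h5 => ?_
    have hb0 : volume {x | b < w x} ≠ 0 :=
      ((isOpen_lt continuous_const hwc).measure_pos volume ⟨x, by simpa using (by linarith : b < w x)⟩).ne'
    have d := talenti_diff hn hw hc a b (by linarith) h4 hb0 (fun y hy => hlap y (by linarith))
    rw [← hpow a, ← hpow b] at d
    have hra := hpos a h3 (by linarith)
    have hrb := hpos b (by linarith) (by linarith)
    have e : ((ρ b ^ (m+1)) ^ (((m+1:ℕ):ℝ)⁻¹)) = ρ b := Real.pow_rpow_inv_natCast hrb.le (by omega)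
    rw [e, Nat.add_sub_cancel] at d
    have ps := pow_sub_le m (ρ a) (ρ b) hrb.le (hmono a b h3 h4.le)
    have ps2 := mul_le_mul_of_nonneg_left ps (by positivity : 0 ≤ ρ a ^ (m+1))
    have d2 := d.trans ps2
    have : ((m+1:ℕ):ℝ) * (((m+1:ℕ):ℝ) * κ ^ 2 * ρ b ^ (2*m) * (b - a)) ≤ ((m+1:ℕ):ℝ) * (ρ a ^ (2*m+1) * (ρ a - ρ b)) := by
      refine le_trans (le_of_eq ?_) (d2.trans (le_of_eq ?_))
      · rw [hκ]; ring
      · push_cast; ring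
    exact le_of_mul_le_mul_left this hn'
  refine le_of_tendsto (x := 𝓝[<] (w x)) (f := fun T => 2 * (((m+1:ℕ):ℝ) * κ ^ 2) * (T - s0)) ?_ ?_
  · have : Continuous (fun T : ℝ => 2 * (((m+1:ℕ):ℝ) * κ ^ 2) * (T - s0)) := by fun_prop
    exact (this.tendsto _).mono_left nhdsWithin_le_nhds
  · filter_upwards [Ioo_mem_nhdsLT hx] with T h
    exact hT T h.1 h.2

end Talenti


section Mollify
open Filter Topology
variable {n : ℕ}

structure Moll (n : ℕ) (ε : ℝ) (ρ : Eu n → ℝ) : Prop where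
  he : 0 < ε
  sm : ∀ k : ℕ, ContDiff ℝ k ρ
  cs : HasCompactSupport ρ
  nn : ∀ x, 0 ≤ ρ x
  one : ∫ x, ρ x = 1
  ts : tsupport ρ ⊆ Metric.closedBall 0 ε

theorem moll_exists (n : ℕ) (ε : ℝ) (hε : 0 < ε) : ∃ ρ, Moll n ε ρ := by
  let φ : ContDiffBump (0 : Eu n) := ⟨ε / 2, ε, by linarith, by linarith⟩
  exact ⟨φ.normed volume, hε, fun k => φ.contDiff_normed (n := (k : ℕ∞)), φ.hasCompactSupport_normed,
    φ.nonneg_normed, φ.integral_normed, by rw [φ.tsupport_normed_eq]⟩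

/-- mollification -/
noncomputable def mol (v ρ : Eu n → ℝ) : Eu n → ℝ :=
  convolution v ρ (ContinuousLinearMap.mul ℝ ℝ) volume

theorem mol_def (v ρ : Eu n → ℝ) (x : Eu n) : mol v ρ x = ∫ t, v t * ρ (x - t) := convolution_mul
theorem mol_swap (v ρ : Eu n → ℝ) (x : Eu n) : mol v ρ x = ∫ t, v (x - t) * ρ t := convolution_mul_swap

theorem fderiv_mol {v ρ : Eu n → ℝ} (hv : Continuous v) (hρ : ContDiff ℝ 1 ρ) (hc : HasCompactSupport ρ)
    (x e : Eu n) : fderiv ℝ (mol v ρ) x e = mol v (fun y => fderiv ℝ ρ y e) x := by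
  have := hc.hasFDerivAt_convolution_right (ContinuousLinearMap.mul ℝ ℝ) (hv.locallyIntegrable (μ := volume)) hρ x
  rw [mol, this.fderiv, convolution_precompR_apply _ hv.locallyIntegrable (hc.fderiv ℝ)
    (hρ.continuous_fderiv (by norm_num))]
  rfl

theorem contDiff_mol {v ρ : Eu n → ℝ} (hv : Continuous v) (k : ℕ) (hρ : ContDiff ℝ k ρ) (hc : HasCompactSupport ρ) :
    ContDiff ℝ k (mol v ρ) :=
  hc.contDiff_convolution_right (n := (k : ℕ∞)) _ hv.locallyIntegrable hρ

theorem pd2_mol {v ρ : Eu n → ℝ} (hv : Continuous v) (hρ : ContDiff ℝ 2 ρ) (hc : HasCompactSupport ρ)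
    (x e : Eu n) : pd2 (mol v ρ) e x = mol v (pd2 ρ e) x := by
  unfold pd2
  have : (fun y => fderiv ℝ (mol v ρ) y e) = mol v (fun y => fderiv ℝ ρ y e) := by
    ext y; exact fderiv_mol hv (hρ.of_le (by norm_num)) hc y e
  rw [this, fderiv_mol hv (contDiff_pd1 hρ (by norm_num) e) (hasCompactSupport_pd1 hc e)]

theorem fderiv_reflect {ρ : Eu n → ℝ} (hρ : Differentiable ℝ ρ) (x y e : Eu n) :
    fderiv ℝ (fun y => ρ (x - y)) y e = - fderiv ℝ ρ (x - y) e := by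
  have h1 : HasFDerivAt (fun y : Eu n => x - y) (-(ContinuousLinearMap.id ℝ (Eu n))) y :=
    (hasFDerivAt_id y).const_sub x
  have := ((hρ (x - y)).hasFDerivAt).comp y h1
  have e2 : fderiv ℝ (fun y => ρ (x - y)) y = _ := this.fderiv
  rw [e2]; simp

theorem pd2_reflect {ρ : Eu n → ℝ} (hρ : ContDiff ℝ 2 ρ) (x y e : Eu n) :
    pd2 (fun y => ρ (x - y)) e y = pd2 ρ e (x - y) := by
  unfold pd2
  have : (fun y => fderiv ℝ (fun y => ρ (x - y)) y e) = fun y => -(fun z => fderiv ℝ ρ z e) (x - y) := by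
    ext y; exact fderiv_reflect (hρ.differentiable (by norm_num)) x y e
  have hd : Differentiable ℝ (fun z => fderiv ℝ ρ z e) := (contDiff_pd1 hρ (m := 1) (by norm_num) e).differentiable (by norm_num)
  rw [this]
  rw [fderiv_fun_neg, ContinuousLinearMap.neg_apply, fderiv_reflect hd, neg_neg]

theorem hcs_reflect {ρ : Eu n → ℝ} (hc : HasCompactSupport ρ) (x : Eu n) :
    HasCompactSupport (fun y => ρ (x - y)) :=
  hc.comp_homeomorph (Homeomorph.subLeft x)

theorem lap_mol {v ρ : Eu n → ℝ} (hv : Continuous v) (hρ : ContDiff ℝ 2 ρ) (hc : HasCompactSupport ρ)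
    (x : Eu n) : laplacian (mol v ρ) x = ∫ t, v t * laplacian (fun y => ρ (x - y)) t := by
  rw [laplacian_eq_pd2]
  simp only [laplacian_eq_pd2, pd2_mol hv hρ hc, pd2_reflect hρ, Finset.mul_sum, mol_def]
  refine (integral_finset_sum _ fun i _ => ?_).symm
  refine Continuous.integrable_of_hasCompactSupport ?_ ?_
  · exact hv.mul ((continuous_pd2 hρ _).comp (by fun_prop))
  · exact (hcs_reflect (hasCompactSupport_pd2 hc _) x).mul_left

theorem Moll.int {ε : ℝ} {ρ : Eu n → ℝ} (M : Moll n ε ρ) : Integrable ρ :=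
  (M.sm 0).continuous.integrable_of_hasCompactSupport M.cs

theorem Moll.supp {ε : ℝ} {ρ : Eu n → ℝ} (M : Moll n ε ρ) (t : Eu n) (h : ρ t ≠ 0) : ‖t‖ ≤ ε := by
  have := M.ts (subset_tsupport _ h)
  simpa using this

theorem Moll.int2 {ε : ℝ} {ρ v : Eu n → ℝ} (M : Moll n ε ρ) (hv : Continuous v) (x : Eu n) :
    Integrable (fun t => v (x - t) * ρ t) :=
  Continuous.integrable_of_hasCompactSupport ((hv.comp (by fun_prop)).mul (M.sm 0).continuous) M.cs.mul_left

theorem mol_le {ε : ℝ} {ρ v : Eu n → ℝ} (M : Moll n ε ρ) (hv : Continuous v) (x : Eu n) (c : ℝ)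
    (h : ∀ t, ‖t‖ ≤ ε → v (x - t) ≤ c) : mol v ρ x ≤ c := by
  rw [mol_swap]
  calc ∫ t, v (x - t) * ρ t ≤ ∫ t, c * ρ t := by
        refine integral_mono (M.int2 hv x) (M.int.const_mul c) fun t => ?_
        dsimp only
        by_cases h0 : ρ t = 0
        · simp [h0]
        · exact mul_le_mul_of_nonneg_right (h t (M.supp t h0)) (M.nn t)
    _ = c := by rw [integral_const_mul, M.one, mul_one]

theorem le_mol {ε : ℝ} {ρ v : Eu n → ℝ} (M : Moll n ε ρ) (hv : Continuous v) (x : Eu n) (c : ℝ)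
    (h : ∀ t, ‖t‖ ≤ ε → c ≤ v (x - t)) : c ≤ mol v ρ x := by
  rw [mol_swap]
  calc c = ∫ t, c * ρ t := by rw [integral_const_mul, M.one, mul_one]
    _ ≤ ∫ t, v (x - t) * ρ t := by
        refine integral_mono (M.int.const_mul c) (M.int2 hv x) fun t => ?_
        dsimp only
        by_cases h0 : ρ t = 0
        · simp [h0]
        · exact mul_le_mul_of_nonneg_right (h t (M.supp t h0)) (M.nn t)

theorem cont_of_lip {v : Eu n → ℝ} {K : ℝ} (hK : ∀ x y, v x - v y ≤ K * ‖x - y‖) : Continuous v := by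
  refine LipschitzWith.continuous (K := K.toNNReal) (LipschitzWith.of_le_add_mul _ fun x y => ?_)
  have := hK x y
  rw [dist_eq_norm]
  have h2 : K * ‖x - y‖ ≤ (K.toNNReal : ℝ) * ‖x - y‖ :=
    mul_le_mul_of_nonneg_right (Real.le_coe_toNNReal K) (norm_nonneg _)
  linarith

theorem mol_lip {ε : ℝ} {ρ v : Eu n → ℝ} (M : Moll n ε ρ) {K : ℝ} (hK : ∀ x y, v x - v y ≤ K * ‖x - y‖)
    (x y : Eu n) : mol v ρ x - mol v ρ y ≤ K * ‖x - y‖ := by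
  have hv := cont_of_lip hK
  rw [mol_swap, mol_swap, ← integral_sub (M.int2 hv x) (M.int2 hv y)]
  calc ∫ t, (v (x - t) * ρ t - v (y - t) * ρ t) ≤ ∫ t, (K * ‖x - y‖) * ρ t := by
        refine integral_mono ((M.int2 hv x).sub (M.int2 hv y)) (M.int.const_mul _) fun t => ?_
        have := hK (x - t) (y - t)
        rw [sub_sub_sub_cancel_right] at this
        have := mul_le_mul_of_nonneg_right this (M.nn t)
        dsimp only
        linarith
    _ = _ := by rw [integral_const_mul, M.one, mul_one]

theorem norm_fderiv_le {g : Eu n → ℝ} {K : ℝ} (hK0 : 0 ≤ K) (hK : ∀ x y, g x - g y ≤ K * ‖x - y‖) (x : Eu n) :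
    ‖fderiv ℝ g x‖ ≤ K := by
  have : LipschitzWith ⟨K, hK0⟩ g := LipschitzWith.of_le_add_mul _ fun x y => by
    have := hK x y
    rw [dist_eq_norm]; change g x ≤ g y + K * ‖x - y‖; linarith
  exact norm_fderiv_le_of_lipschitz ℝ this

theorem mol_close {ε : ℝ} {ρ v : Eu n → ℝ} (M : Moll n ε ρ) {K : ℝ} (hK0 : 0 ≤ K) (hK : ∀ x y, v x - v y ≤ K * ‖x - y‖)
    (x : Eu n) : |mol v ρ x - v x| ≤ K * ε := by
  have hv := cont_of_lip hK
  rw [abs_le]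
  constructor
  · have := le_mol M hv x (v x - K * ε) (fun t ht => by
      have := hK x (x - t)
      simp only [sub_sub_cancel] at this
      have := mul_le_mul_of_nonneg_left ht hK0
      linarith)
    linarith
  · have := mol_le M hv x (v x + K * ε) (fun t ht => by
      have := hK (x - t) x
      simp only [sub_sub_cancel_left, norm_neg] at this
      have := mul_le_mul_of_nonneg_left ht hK0
      linarith)
    linarith

theorem mol_weak {ε : ℝ} {ρ v F : Eu n → ℝ} (M : Moll n ε ρ) (hv : Continuous v) (Ω : Set (Eu n))
    (h : ∀ φ, ContDiff ℝ 2 φ → HasCompactSupport φ → tsupport φ ⊆ Ω → ∫ x, v x * laplacian φ x = -∫ x, φ x * F x)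
    (x : Eu n) (hx : Metric.closedBall x ε ⊆ Ω) :
    laplacian (mol v ρ) x = - ∫ t, ρ (x - t) * F t := by
  rw [lap_mol hv (M.sm 2) M.cs]
  refine h (fun y => ρ (x - y)) ((M.sm 2).comp (by fun_prop)) (hcs_reflect M.cs x) ?_
  refine (closure_minimal ?_ Metric.isClosed_closedBall).trans hx
  intro y hy
  have := M.supp _ hy
  rw [Metric.mem_closedBall, dist_comm, dist_eq_norm]; exact this

theorem Moll.one' {ε : ℝ} {ρ : Eu n → ℝ} (M : Moll n ε ρ) (x : Eu n) : ∫ t, ρ (x - t) = 1 := by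
  rw [integral_sub_left_eq_self ρ volume x, M.one]

theorem mol_hcs {ε : ℝ} {ρ v : Eu n → ℝ} (M : Moll n ε ρ) (hv : HasCompactSupport v) : HasCompactSupport (mol v ρ) :=
  HasCompactSupport.convolution (L := ContinuousLinearMap.mul ℝ ℝ) (μ := volume) hv M.cs

end Mollify


section Torsion
open Filter Topology
variable {n : ℕ}

/-- the sharp constant -/
noncomputable def tcon (n : ℕ) (V : ℝ) : ℝ :=
  V ^ ((n : ℝ)⁻¹) / ((volume (Metric.ball (0 : EuclideanSpace ℝ (Fin n)) 1)).toReal ^ ((n : ℝ)⁻¹) * Real.sqrt n)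

theorem kap_pos (n : ℕ) : 0 < (volume (Metric.ball (0:EuclideanSpace ℝ (Fin n)) 1)).toReal ^ ((n:ℝ)⁻¹) := by
  refine Real.rpow_pos_of_pos (ENNReal.toReal_pos ?_ measure_ball_lt_top.ne) _
  exact (Metric.measure_ball_pos _ _ one_pos).ne'

theorem tcon_nonneg (n : ℕ) (V : ℝ) (hV : 0 ≤ V) : 0 ≤ tcon n V := by
  have := kap_pos n
  unfold tcon; positivity

theorem PSetup.hcs {Ω : Set (Eu n)} {D : ℝ} (P : PSetup n Ω D) {v : Eu n → ℝ} (hv : ∀ x, x ∉ Ω → v x = 0) :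
    HasCompactSupport v := by
  obtain ⟨x0, h0⟩ := P.hD
  refine HasCompactSupport.of_support_subset_isCompact (isCompact_closedBall x0 D) fun x hx => ?_
  rw [Metric.mem_closedBall, dist_eq_norm]
  exact h0 x (by by_contra h; exact hx (hv x h))

theorem PSetup.vol {Ω : Set (Eu n)} {D : ℝ} (P : PSetup n Ω D) : volume Ω ≠ ⊤ := by
  obtain ⟨x0, h0⟩ := P.hD
  refine ((measure_mono (fun x hx => ?_)).trans_lt (isCompact_closedBall x0 D).measure_lt_top).ne
  rw [Metric.mem_closedBall, dist_eq_norm]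
  exact h0 x hx

theorem near_bdry {Ω : Set (Eu n)} {ε K : ℝ} {u ρ : Eu n → ℝ} (M : Moll n ε ρ) (hK0 : 0 ≤ K)
    (hK : ∀ x y, u x - u y ≤ K * ‖x - y‖) (hz : ∀ x, x ∉ Ω → u x = 0) (x y : Eu n) (hy : y ∉ Ω) :
    mol u ρ x ≤ K * (‖x - y‖ + ε) := by
  refine mol_le M (cont_of_lip hK) x _ fun t ht => ?_
  have h1 := hK (x - t) y
  rw [hz y hy] at h1
  have h2 : ‖x - t - y‖ ≤ ‖x - y‖ + ε := by
    have : x - t - y = (x - y) - t := by abel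
    rw [this]
    exact (norm_sub_le _ _).trans (by linarith)
  have := mul_le_mul_of_nonneg_left h2 hK0
  linarith

theorem torsion {Ω : Set (Eu n)} {D : ℝ} (P : PSetup n Ω D) :
    ∃ u : Eu n → ℝ, (∀ x, 0 ≤ u x) ∧ (∀ x, x ∉ Ω → u x = 0) ∧
      (∀ x y, u x - u y ≤ tcon n (volume Ω).toReal * ‖x - y‖) ∧
      (∀ φ, ContDiff ℝ 2 φ → HasCompactSupport φ → tsupport φ ⊆ Ω →
        ∫ x, u x * laplacian φ x = -∫ x, φ x * 1) := by
  have hn := P.hn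
  have hn' : (0:ℝ) < n := by exact_mod_cast hn
  obtain ⟨u, hu0, huM, huz, huL, huw⟩ := poisson_exists P (F := fun _ => 1) (fun _ => zero_le_one)
    (fun _ => le_rfl) 0 le_rfl (by simp)
  refine ⟨u, hu0, huz, ?_, huw⟩
  set κ := (volume (Metric.ball (0:EuclideanSpace ℝ (Fin n)) 1)).toReal ^ ((n:ℝ)⁻¹) with hκ
  have hκ0 : 0 < κ := kap_pos n
  set V := (volume Ω).toReal ^ ((n:ℝ)⁻¹) with hV
  have hV0 : 0 ≤ V := by positivity
  set K := √(2 * (D + 1) ^ 2) with hKd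
  have hK0 : 0 ≤ K := Real.sqrt_nonneg _
  have hK : ∀ x y, u x - u y ≤ K * ‖x - y‖ := fun x y => by
    have := huL _ huM x y
    rwa [zero_mul, add_zero] at this
  have hv := cont_of_lip hK
  have step : ∀ x, ∀ ε > 0, 2 * (n * κ ^ 2) * (u x - 3 * K * ε) ≤ V ^ 2 := by
    intro x ε hε
    obtain ⟨ρ, M⟩ := moll_exists n ε hε
    have hball : ∀ y, 2 * K * ε < mol u ρ y → Metric.closedBall y ε ⊆ Ω := by
      intro y hy z hz
      by_contra hzΩ
      have := near_bdry M hK0 hK huz y z hzΩ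
      rw [Metric.mem_closedBall, dist_comm, dist_eq_norm] at hz
      have := mul_le_mul_of_nonneg_left hz hK0
      linarith
    have T := talenti hn (contDiff_mol hv 2 (M.sm 2) M.cs) (mol_hcs M (P.hcs huz)) (2 * K * ε)
      (by positivity) (fun y hy => by
        rw [mol_weak M hv Ω huw y (hball y hy)]
        simp only [mul_one, neg_neg]
        exact (M.one' y).le) x
    have sub : {y | 2 * K * ε < mol u ρ y} ⊆ Ω := fun y hy =>
      hball y hy (Metric.mem_closedBall_self hε.le)
    have v1 := ENNReal.toReal_mono P.vol (measure_mono sub)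
    have v2 : ((volume {y | 2 * K * ε < mol u ρ y}).toReal ^ ((n:ℝ)⁻¹)) ^ 2 ≤ V ^ 2 := by
      rw [hV]; gcongr
    have c := (abs_le.1 (mol_close M hK0 hK x)).1
    refine le_trans (mul_le_mul_of_nonneg_left ?_ (by positivity)) (T.trans v2)
    linarith
  have bd : ∀ x, u x ≤ V ^ 2 / (2 * (n * κ ^ 2)) := by
    intro x
    rw [le_div_iff₀ (by positivity), mul_comm]
    refine le_of_tendsto (x := 𝓝[>] (0:ℝ)) (f := fun ε => 2 * (n * κ ^ 2) * (u x - 3 * K * ε)) ?_ ?_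
    · have : Continuous (fun ε => 2 * (n * κ ^ 2) * (u x - 3 * K * ε)) := by fun_prop
      have := this.tendsto 0
      simp only [mul_zero, sub_zero] at this
      exact this.mono_left nhdsWithin_le_nhds
    · filter_upwards [self_mem_nhdsWithin] with ε hε
      exact step x ε hε
  have e : √(2 * (V ^ 2 / (2 * (n * κ ^ 2)))) + 0 * (D + 1) ^ 2 = tcon n (volume Ω).toReal := by
    rw [zero_mul, add_zero]
    have : 2 * (V ^ 2 / (2 * (n * κ ^ 2))) = (V / (κ * √n)) ^ 2 := by
      rw [div_pow, mul_pow, Real.sq_sqrt hn'.le]; field_simp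
    rw [this, Real.sqrt_sq (by positivity)]
    rfl
  intro x y
  rw [← e]
  exact huL _ bd x y

end Torsion


section Flux
open Filter Topology
open scoped ENNReal
variable {m : ℕ}

structure Slc (m : ℕ) (e : Eu (m+1)) (Φ : ℝ × (Fin m → ℝ) → Eu (m+1)) (π : Eu (m+1) → (Fin m → ℝ)) : Prop where
  mp : MeasurePreserving Φ
  emb : MeasurableEmbedding Φ
  cont : Continuous Φ
  lin : ∀ t s y, Φ (t + s, y) = Φ (t, y) + s • e
  pi : ∀ t y, π (Φ (t, y)) = y
  lip : LipschitzWith 1 π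
  he : ‖e‖ = 1

theorem slc_exists (e : Eu (m+1)) (he : ‖e‖ = 1) : ∃ Φ π, Slc m e Φ π := by
  let T : Eu (m+1) ≃ₗᵢ[ℝ] Eu (m+1) := Submodule.reflection (ℝ ∙ (bas (0 : Fin (m+1)) - e))ᗮ
  have hT : T (bas 0) = e := Submodule.reflection_sub (by rw [norm_bas, he])
  let c := (MeasurableEquiv.piFinSuccAbove (fun _ : Fin (m+1) => ℝ) 0).symm
  have hc : ∀ t y, c (t, y) = Fin.cons t y := fun t y => by
    simp [c]; rfl
  have hmp : MeasurePreserving (fun p : ℝ × (Fin m → ℝ) => T (WithLp.toLp 2 (c p))) :=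
    T.measurePreserving.comp ((PiLp.volume_preserving_toLp (Fin (m+1))).comp
      (volume_preserving_piFinSuccAbove (fun _ : Fin (m+1) => ℝ) 0).symm)
  refine ⟨fun p => T (WithLp.toLp 2 (c p)), fun x j => (T.symm x) j.succ, hmp, ?_, ?_, ?_, ?_, ?_, he⟩
  · exact T.toHomeomorph.measurableEmbedding.comp
      ((MeasurableEquiv.toLp 2 (Fin (m+1) → ℝ)).measurableEmbedding.comp c.measurableEmbedding)
  · refine T.continuous.comp ((PiLp.continuous_toLp 2 _).comp ?_)
    rw [continuous_pi_iff]
    intro i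
    have : (fun a : ℝ × (Fin m → ℝ) => c a i) = fun a => (Fin.cons a.1 a.2 : Fin (m+1) → ℝ) i := by
      ext a; rw [← hc]
    rw [this]
    refine Fin.cases ?_ (fun j => ?_) i
    · simpa using continuous_fst
    · simp only [Fin.cons_succ]
      exact (continuous_apply j).comp continuous_snd
  · intro t s y
    rw [← hT, ← map_smul, ← map_add]
    congr 1
    ext i
    simp only [hc, PiLp.add_apply, PiLp.smul_apply, bas]
    refine Fin.cases ?_ (fun j => ?_) i <;> simp
  · intro t y
    ext j
    simp [hc]
  · refine LipschitzWith.of_dist_le_mul fun x y => ?_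
    rw [NNReal.coe_one, one_mul, dist_eq_norm, dist_eq_norm, pi_norm_le_iff_of_nonneg (norm_nonneg _)]
    intro j
    have := PiLp.norm_apply_le (p := 2) (T.symm (x - y)) j.succ
    rw [T.symm.norm_map] at this
    simpa using this

theorem Slc.neg {e : Eu (m+1)} {Φ : ℝ × (Fin m → ℝ) → Eu (m+1)} {π : Eu (m+1) → (Fin m → ℝ)}
    (S : Slc m e Φ π) : Slc m (-e) (fun p => Φ (-p.1, p.2)) π := by
  refine ⟨?_, ?_, ?_, ?_, ?_, S.lip, by rw [norm_neg, S.he]⟩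
  · have : MeasurePreserving (fun p : ℝ × (Fin m → ℝ) => (-p.1, p.2)) :=
      (Measure.measurePreserving_neg (volume : Measure ℝ)).prod (MeasurePreserving.id _)
    exact S.mp.comp this
  · have : MeasurableEmbedding (fun p : ℝ × (Fin m → ℝ) => (-p.1, p.2)) :=
      ((MeasurableEquiv.neg ℝ).prodCongr (MeasurableEquiv.refl _)).measurableEmbedding
    exact S.emb.comp this
  · exact S.cont.comp (by fun_prop)
  · intro t s y
    dsimp only
    rw [neg_add, S.lin, neg_smul, smul_neg]
  · intro t y; exact S.pi _ _

/-- top function -/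
noncomputable def topf (Ω : Set (Eu (m+1))) (Φ : ℝ × (Fin m → ℝ) → Eu (m+1)) (y : Fin m → ℝ) : ℝ :=
  sSup {t | Φ (t, y) ∈ Ω}

variable {e : Eu (m+1)} {Φ : ℝ × (Fin m → ℝ) → Eu (m+1)} {π : Eu (m+1) → (Fin m → ℝ)} {Ω : Set (Eu (m+1))}

theorem Slc.bdd (S : Slc m e Φ π) (hb : Bornology.IsBounded Ω) (y : Fin m → ℝ) : BddAbove {t | Φ (t, y) ∈ Ω} := by
  obtain ⟨R, hR⟩ := hb.exists_norm_le
  refine ⟨R + ‖Φ (0, y)‖, fun t ht => ?_⟩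
  have h1 := hR _ ht
  have h2 := S.lin 0 t y
  rw [zero_add] at h2
  have h3 : t • e = Φ (t, y) - Φ (0, y) := by rw [h2]; abel
  have h4 : ‖t • e‖ = |t| := by rw [norm_smul, S.he, mul_one, Real.norm_eq_abs]
  have h5 := norm_sub_le (Φ (t, y)) (Φ (0, y))
  rw [← h3, h4] at h5
  linarith [le_abs_self t]

theorem Slc.lt_top (S : Slc m e Φ π) (ho : IsOpen Ω) (hb : Bornology.IsBounded Ω) (t : ℝ) (y : Fin m → ℝ)
    (h : Φ (t, y) ∈ Ω) : t < topf Ω Φ y := by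
  have : IsOpen {t | Φ (t, y) ∈ Ω} := ho.preimage (S.cont.comp (by fun_prop))
  obtain ⟨δ, hδ, hs⟩ := Metric.isOpen_iff.1 this t h
  have h2 : t + δ / 2 ∈ {t | Φ (t, y) ∈ Ω} := hs (by simp [abs_of_pos hδ]; exact hδ)
  have := le_csSup (S.bdd hb y) h2
  unfold topf; linarith

theorem Slc.measurable_top (S : Slc m e Φ π) (ho : IsOpen Ω) (hb : Bornology.IsBounded Ω) : Measurable (topf Ω Φ) := by
  refine measurable_of_Ioi fun c => ?_
  have o1 : ∀ c : ℝ, IsOpen {y | ∃ t, c < t ∧ Φ (t, y) ∈ Ω} := fun c => by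
    have : {y | ∃ t, c < t ∧ Φ (t, y) ∈ Ω} = ⋃ t ∈ Set.Ioi c, {y | Φ (t, y) ∈ Ω} := by
      ext y; simp
    rw [this]
    exact isOpen_biUnion fun t _ => ho.preimage (S.cont.comp (by fun_prop))
  have o2 : IsOpen {y | ∃ t, Φ (t, y) ∈ Ω} := by
    have : {y | ∃ t, Φ (t, y) ∈ Ω} = ⋃ t, {y | Φ (t, y) ∈ Ω} := by
      ext y; simp
    rw [this]
    exact isOpen_iUnion fun t => ho.preimage (S.cont.comp (by fun_prop))
  have e1 : topf Ω Φ ⁻¹' Set.Ioi c = {y | ∃ t, c < t ∧ Φ (t, y) ∈ Ω} ∪ ({y | ∃ t, Φ (t, y) ∈ Ω}ᶜ ∩ {y | c < 0}) := by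
    ext y
    simp only [Set.mem_preimage, Set.mem_Ioi, Set.mem_union, Set.mem_setOf_eq, Set.mem_inter_iff, Set.mem_compl_iff]
    by_cases hy : ∃ t, Φ (t, y) ∈ Ω
    · simp only [hy, not_true_eq_false, false_and, or_false]
      constructor
      · intro h
        obtain ⟨t, ht, hct⟩ := exists_lt_of_lt_csSup hy h
        exact ⟨t, hct, ht⟩
      · rintro ⟨t, h1, h2⟩
        exact h1.trans (S.lt_top ho hb t y h2)
    · have h0 : topf Ω Φ y = 0 := by
        have : {t | Φ (t, y) ∈ Ω} = ∅ := by
          ext t; simp only [Set.mem_setOf_eq, Set.mem_empty_iff_false, iff_false]; exact fun h => hy ⟨t, h⟩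
        rw [topf, this, Real.sSup_empty]
      rw [h0]
      simp only [hy, not_false_eq_true, true_and]
      constructor
      · exact Or.inr
      · rintro (⟨t, _, h⟩ | h)
        · exact absurd ⟨t, h⟩ hy
        · exact h
  rw [e1]
  exact (o1 c).measurableSet.union (o2.measurableSet.compl.inter (MeasurableSet.const _))

/-- upper part of boundary -/
def upb (Ω : Set (Eu (m+1))) (e : Eu (m+1)) : Set (Eu (m+1)) := {x ∈ frontier Ω | ∃ s : ℝ, 0 < s ∧ x - s • e ∈ Ω}

theorem measurableSet_upb (ho : IsOpen Ω) (e : Eu (m+1)) : MeasurableSet (upb Ω e) := by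
  have : upb Ω e = frontier Ω ∩ ⋃ s ∈ Set.Ioi (0:ℝ), {x | x - s • e ∈ Ω} := by
    ext x; simp [upb]
  rw [this]
  refine isClosed_frontier.measurableSet.inter (IsOpen.measurableSet ?_)
  exact isOpen_biUnion fun t _ => ho.preimage (by fun_prop)

theorem disjoint_upb (ho : IsOpen Ω) (hc : Convex ℝ Ω) (e : Eu (m+1)) : Disjoint (upb Ω e) (upb Ω (-e)) := by
  rw [Set.disjoint_left]
  rintro x ⟨hx, s, hs, h1⟩ ⟨_, s', hs', h2⟩
  have : x ∈ Ω := by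
    have h := hc h1 h2 (a := s' / (s + s')) (b := s / (s + s')) (by positivity) (by positivity) (by field_simp; ring)
    convert h using 1
    have hne : s + s' ≠ 0 := by positivity
    have e1 : x = (s' / (s + s') + s / (s + s')) • x := by
      rw [← add_div, add_comm s' s, div_self hne, one_smul]
    simp only [smul_sub, smul_neg, smul_smul]
    nth_rewrite 1 [e1]
    rw [add_smul]
    have : s' / (s + s') * s = s / (s + s') * s' := by ring
    rw [this]; abel
  rw [ho.frontier_eq] at hx
  exact hx.2 this

theorem Slc.top_mem (S : Slc m e Φ π) (ho : IsOpen Ω) (hb : Bornology.IsBounded Ω) (y : Fin m → ℝ)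
    (hy : ∃ t, Φ (t, y) ∈ Ω) : Φ (topf Ω Φ y, y) ∈ upb Ω e := by
  have hcl : Φ (topf Ω Φ y, y) ∈ closure Ω := by
    have h1 : topf Ω Φ y ∈ closure {t | Φ (t, y) ∈ Ω} := csSup_mem_closure hy (S.bdd hb y)
    have hc : Continuous (fun t => Φ (t, y)) := S.cont.comp (by fun_prop)
    exact closure_mono (Set.image_subset_iff.2 (fun t ht => ht)) (image_closure_subset_closure_image hc ⟨_, h1, rfl⟩)
  refine ⟨?_, ?_⟩
  · rw [ho.frontier_eq]
    exact ⟨hcl, fun h => lt_irrefl _ (S.lt_top ho hb _ y h)⟩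
  · obtain ⟨t, ht⟩ := hy
    refine ⟨topf Ω Φ y - t, by linarith [S.lt_top ho hb t y ht], ?_⟩
    have := S.lin t (topf Ω Φ y - t) y
    rw [add_sub_cancel] at this
    rw [this, add_sub_cancel_right]; exact ht

theorem Slc.half (S : Slc m e Φ π) (ho : IsOpen Ω) (hb : Bornology.IsBounded Ω) (g : Eu (m+1) → ℝ≥0∞) (hg : Measurable g) :
    ∫⁻ y in {y | ∃ t, Φ (t, y) ∈ Ω}, g (Φ (topf Ω Φ y, y)) ≤ ∫⁻ x in upb Ω e, g x ∂(μH[(m : ℝ)]) := by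
  have mt : Measurable (fun y => Φ (topf Ω Φ y, y)) :=
    S.cont.measurable.comp ((S.measurable_top ho hb).prodMk measurable_id)
  rw [← lintegral_map hg mt]
  refine lintegral_mono' ?_ le_rfl
  refine Measure.le_iff.2 fun s hs => ?_
  rw [Measure.map_apply mt hs, Measure.restrict_apply (mt hs), Measure.restrict_apply hs]
  have : ((fun y => Φ (topf Ω Φ y, y)) ⁻¹' s ∩ {y | ∃ t, Φ (t, y) ∈ Ω}) ⊆ π '' (s ∩ upb Ω e) := by
    rintro y ⟨h1, h2⟩
    exact ⟨_, ⟨h1, S.top_mem ho hb y h2⟩, S.pi _ _⟩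
  refine (measure_mono this).trans ?_
  have h := S.lip.hausdorffMeasure_image_le (d := m) (by positivity) (s ∩ upb Ω e)
  have h2 : (μH[(m : ℝ)] : Measure (Fin m → ℝ)) = volume := by
    have := hausdorffMeasure_pi_real (ι := Fin m)
    rwa [Fintype.card_fin] at this
  rw [h2] at h
  simpa using h

end Flux


section Flux
open Filter Topology
open scoped ENNReal
variable {m : ℕ}
variable {e : Eu (m+1)} {Φ : ℝ × (Fin m → ℝ) → Eu (m+1)} {π : Eu (m+1) → (Fin m → ℝ)} {Ω : Set (Eu (m+1))}

theorem Slc.eq0 (S : Slc m e Φ π) (t : ℝ) (y : Fin m → ℝ) : Φ (t, y) = Φ (0, y) + t • e := by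
  have := S.lin 0 t y
  rwa [zero_add] at this

theorem Slc.slice (S : Slc m e Φ π) (ho : IsOpen Ω) (hb : Bornology.IsBounded Ω) (hc : Convex ℝ Ω) (y : Fin m → ℝ)
    (hy : ∃ t, Φ (t, y) ∈ Ω) :
    {t | Φ (t, y) ∈ Ω} = Set.Ioo (-topf Ω (fun p => Φ (-p.1, p.2)) y) (topf Ω Φ y) := by
  have hcv : Convex ℝ {t | Φ (t, y) ∈ Ω} := by
    intro t1 h1 t2 h2 α β ha hb' hab
    have := hc h1 h2 ha hb' hab
    have e1 : Φ (α • t1 + β • t2, y) = α • Φ (t1, y) + β • Φ (t2, y) := by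
      rw [S.eq0 t1, S.eq0 t2, S.eq0 (α • t1 + β • t2)]
      have e2 : Φ (0, y) = (α + β) • Φ (0, y) := by rw [hab, one_smul]
      nth_rewrite 1 [e2]
      simp only [smul_add, add_smul, smul_eq_mul, mul_smul]
      abel
    change Φ (_, y) ∈ Ω
    rw [e1]; exact this
  have hy' : ∃ t, Φ (-t, y) ∈ Ω := by
    obtain ⟨t, ht⟩ := hy
    exact ⟨-t, by simpa using ht⟩
  ext t
  constructor
  · intro ht
    refine ⟨?_, S.lt_top ho hb t y ht⟩
    have := S.neg.lt_top ho hb (-t) y (by simpa using ht)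
    linarith
  · rintro ⟨h1, h2⟩
    obtain ⟨t2, ht2, h2'⟩ := exists_lt_of_lt_csSup hy h2
    obtain ⟨t1, ht1, h1'⟩ := exists_lt_of_lt_csSup hy' (show -t < topf Ω (fun p => Φ (-p.1, p.2)) y by linarith)
    exact hcv.ordConnected.out (show -t1 ∈ {t | Φ (t, y) ∈ Ω} from ht1) ht2 ⟨by linarith, h2'.le⟩

theorem Slc.inner (S : Slc m e Φ π) (ho : IsOpen Ω) (hb : Bornology.IsBounded Ω) (hc : Convex ℝ Ω) (y : Fin m → ℝ)
    (hy : ∃ t, Φ (t, y) ∈ Ω) (g : Eu (m+1) → ℝ) (hg : ContDiff ℝ 1 g) :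
    ∫ t, Ω.indicator (fun x => fderiv ℝ g x e) (Φ (t, y)) =
      g (Φ (topf Ω Φ y, y)) - g (Φ (-topf Ω (fun p => Φ (-p.1, p.2)) y, y)) := by
  have hs := S.slice ho hb hc y hy
  have hlt : -topf Ω (fun p => Φ (-p.1, p.2)) y < topf Ω Φ y := by
    obtain ⟨t, ht⟩ := hy
    have : t ∈ {t | Φ (t, y) ∈ Ω} := ht
    rw [hs] at this
    exact this.1.trans this.2
  have e1 : ∀ t, Ω.indicator (fun x => fderiv ℝ g x e) (Φ (t, y)) =
      (Set.Ioo (-topf Ω (fun p => Φ (-p.1, p.2)) y) (topf Ω Φ y)).indicator (fun t => fderiv ℝ g (Φ (t, y)) e) t := by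
    intro t
    rw [← hs]; rfl
  simp only [e1]
  rw [integral_indicator measurableSet_Ioo, ← integral_Ioc_eq_integral_Ioo, ← intervalIntegral.integral_of_le hlt.le]
  refine intervalIntegral.integral_eq_sub_of_hasDerivAt (f := fun t => g (Φ (t, y))) (fun t _ => ?_) ?_
  · have h1 : HasDerivAt (fun t => Φ (t, y)) e t := by
      have : (fun t => Φ (t, y)) = fun t => Φ (0, y) + t • e := funext fun t => S.eq0 t y
      rw [this]
      simpa using ((hasDerivAt_id t).smul_const e).const_add (Φ (0, y))
    exact ((hg.differentiable (by norm_num)) (Φ (t, y))).hasFDerivAt.comp_hasDerivAt t h1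
  · refine Continuous.intervalIntegrable ?_ _ _
    exact ((hg.continuous_fderiv (by norm_num)).comp (S.cont.comp (by fun_prop))).clm_apply continuous_const

theorem Slc.flux (S : Slc m e Φ π) (ho : IsOpen Ω) (hb : Bornology.IsBounded Ω) (hc : Convex ℝ Ω)
    (hfin : (μH[(m : ℝ)] : Measure (Eu (m+1))) (frontier Ω) < ⊤) (g : Eu (m+1) → ℝ) (hg : ContDiff ℝ 1 g) :
    ∫ x in Ω, fderiv ℝ g x e ≤ ∫ x in frontier Ω, |g x| ∂(μH[(m : ℝ)]) := by
  have hcpt : IsCompact (closure Ω) := hb.isCompact_closure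
  have hfc : IsCompact (frontier Ω) := hcpt.of_isClosed_subset isClosed_frontier frontier_subset_closure
  have hce : Continuous (fun x => fderiv ℝ g x e) := (hg.continuous_fderiv (by norm_num)).clm_apply continuous_const
  have hint : IntegrableOn (fun x => fderiv ℝ g x e) Ω :=
    (hce.continuousOn.integrableOn_compact hcpt).mono_set subset_closure
  have hind : Integrable (Ω.indicator (fun x => fderiv ℝ g x e)) := (integrable_indicator_iff ho.measurableSet).2 hint
  have hcomp : Integrable (fun p => Ω.indicator (fun x => fderiv ℝ g x e) (Φ p)) ((volume : Measure ℝ).prod (volume : Measure (Fin m → ℝ))) :=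
    (S.mp.integrable_comp_emb S.emb).2 hind
  rw [← integral_indicator ho.measurableSet, ← S.mp.integral_comp S.emb]
  have := integral_prod_symm _ hcomp
  rw [show (volume : Measure (ℝ × (Fin m → ℝ))) = (volume : Measure ℝ).prod (volume : Measure (Fin m → ℝ)) from rfl, this]
  have hJ := hcomp.integral_prod_right
  set J : (Fin m → ℝ) → ℝ := fun y => ∫ t, Ω.indicator (fun x => fderiv ℝ g x e) (Φ (t, y)) with hJd
  set Y : Set (Fin m → ℝ) := {y | ∃ t, Φ (t, y) ∈ Ω} with hY
  have hYm : MeasurableSet Y := by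
    have : Y = ⋃ t, {y | Φ (t, y) ∈ Ω} := by
      ext y; simp [hY]
    rw [this]
    exact (isOpen_iUnion fun t => ho.preimage (S.cont.comp (by fun_prop))).measurableSet
  have hgm : Measurable (fun x => ‖g x‖ₑ) := hg.continuous.measurable.enorm
  have mt : Measurable (fun y => ‖g (Φ (topf Ω Φ y, y))‖ₑ) :=
    hgm.comp (S.cont.measurable.comp ((S.measurable_top ho hb).prodMk measurable_id))
  have Y2 : {y | ∃ t, Φ (-t, y) ∈ Ω} = Y := by
    ext y
    exact ⟨fun ⟨t, ht⟩ => ⟨-t, ht⟩, fun ⟨t, ht⟩ => ⟨-t, by simpa using ht⟩⟩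
  have key : ∫⁻ y, ‖J y‖ₑ ≤ ∫⁻ x in frontier Ω, ‖g x‖ₑ ∂(μH[(m : ℝ)]) := by
    calc ∫⁻ y, ‖J y‖ₑ ≤ ∫⁻ y in Y, (‖g (Φ (topf Ω Φ y, y))‖ₑ + ‖g (Φ (-topf Ω (fun p => Φ (-p.1, p.2)) y, y))‖ₑ) := by
          rw [← lintegral_indicator hYm]
          refine lintegral_mono fun y => ?_
          by_cases hy : y ∈ Y
          · rw [Set.indicator_of_mem hy]
            dsimp only [J]
            rw [S.inner ho hb hc y hy g hg]
            exact enorm_sub_le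
          · have : J y = 0 := by
              rw [hJd]
              refine integral_eq_zero_of_ae (Eventually.of_forall fun t => ?_)
              exact Set.indicator_of_notMem (fun h => hy ⟨t, h⟩) _
            rw [this]; simp
      _ = (∫⁻ y in Y, ‖g (Φ (topf Ω Φ y, y))‖ₑ) + ∫⁻ y in Y, ‖g (Φ (-topf Ω (fun p => Φ (-p.1, p.2)) y, y))‖ₑ :=
          lintegral_add_left mt _
      _ ≤ (∫⁻ x in upb Ω e, ‖g x‖ₑ ∂(μH[(m : ℝ)])) + ∫⁻ x in upb Ω (-e), ‖g x‖ₑ ∂(μH[(m : ℝ)]) := by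
          refine add_le_add (S.half ho hb _ hgm) ?_
          have := S.neg.half ho hb _ hgm
          dsimp only at this
          rwa [Y2] at this
      _ = ∫⁻ x in upb Ω e ∪ upb Ω (-e), ‖g x‖ₑ ∂(μH[(m : ℝ)]) :=
          (lintegral_union (measurableSet_upb ho _) (disjoint_upb ho hc e)).symm
      _ ≤ _ := lintegral_mono_set (by
          rintro x (h | h) <;> exact h.1)
  have hgi : IntegrableOn g (frontier Ω) (μH[(m : ℝ)]) := by
    have : IsFiniteMeasure ((μH[(m : ℝ)] : Measure (Eu (m+1))).restrict (frontier Ω)) := ⟨by simpa using hfin⟩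
    obtain ⟨C, hC⟩ := hfc.exists_bound_of_continuousOn hg.continuous.continuousOn
    refine Integrable.of_bound hg.continuous.aestronglyMeasurable C ?_
    exact (ae_restrict_iff' isClosed_frontier.measurableSet).2 (Eventually.of_forall hC)
  calc ∫ y, J y ≤ ∫ y, ‖J y‖ := integral_mono hJ hJ.norm fun y => le_abs_self _
    _ = (∫⁻ y, ‖J y‖ₑ).toReal := integral_norm_eq_lintegral_enorm hJ.1
    _ ≤ (∫⁻ x in frontier Ω, ‖g x‖ₑ ∂(μH[(m : ℝ)])).toReal := ENNReal.toReal_mono hgi.2.ne key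
    _ = ∫ x in frontier Ω, ‖g x‖ ∂(μH[(m : ℝ)]) := (integral_norm_eq_lintegral_enorm hgi.1).symm

theorem flux_dir (ho : IsOpen Ω) (hb : Bornology.IsBounded Ω) (hc : Convex ℝ Ω)
    (hfin : (μH[(m : ℝ)] : Measure (Eu (m+1))) (frontier Ω) < ⊤) (e : Eu (m+1)) (he : ‖e‖ = 1) (g : Eu (m+1) → ℝ) (hg : ContDiff ℝ 1 g) :
    ∫ x in Ω, fderiv ℝ g x e ≤ ∫ x in frontier Ω, |g x| ∂(μH[(m : ℝ)]) := by
  obtain ⟨Φ, π, S⟩ := slc_exists e he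
  exact S.flux ho hb hc hfin g hg

end Flux


section Flux
open Filter Topology
open scoped ENNReal
variable {m : ℕ} {Ω : Set (Eu (m+1))}

/-- divergence -/
noncomputable def dvg {n : ℕ} (X : Eu n → Eu n) (x : Eu n) : ℝ := ∑ i, fderiv ℝ (fun y => X y i) x (bas i)

theorem contDiff_coord {n : ℕ} {X : Eu n → Eu n} (hX : ContDiff ℝ 1 X) (i : Fin n) : ContDiff ℝ 1 (fun y => X y i) :=
  (contDiff_euclidean.1 hX) i

theorem int_pd {n : ℕ} {Ω : Set (Eu n)} (hb : Bornology.IsBounded Ω) {g : Eu n → ℝ} (hg : Continuous g) :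
    IntegrableOn g Ω :=
  (hg.continuousOn.integrableOn_compact hb.isCompact_closure).mono_set subset_closure

theorem int_fr {n : ℕ} {Ω : Set (Eu n)} (hb : Bornology.IsBounded Ω) {d : ℝ}
    (hfin : (μH[d] : Measure (Eu n)) (frontier Ω) < ⊤) {g : Eu n → ℝ} (hg : ContinuousOn g (frontier Ω)) :
    IntegrableOn g (frontier Ω) (μH[d]) := by
  have hfc : IsCompact (frontier Ω) := hb.isCompact_closure.of_isClosed_subset isClosed_frontier frontier_subset_closure
  have : IsFiniteMeasure ((μH[d] : Measure (Eu n)).restrict (frontier Ω)) := ⟨by simpa using hfin⟩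
  obtain ⟨C, hC⟩ := hfc.exists_bound_of_continuousOn hg
  refine Integrable.of_bound (hg.aestronglyMeasurable isClosed_frontier.measurableSet) C ?_
  exact (ae_restrict_iff' isClosed_frontier.measurableSet).2 (Eventually.of_forall hC)

theorem sum_coord {n : ℕ} (L : Eu n →L[ℝ] ℝ) (e : Eu n) : L e = ∑ i, e i * L (bas i) := by
  have h : e = ∑ i, e i • (bas i : Eu n) := by
    ext j
    simp [bas, Finset.sum_apply, EuclideanSpace.single_apply, Pi.single_apply]
  conv_lhs => rw [h]
  rw [map_sum]
  simp

theorem flux_local (ho : IsOpen Ω) (hb : Bornology.IsBounded Ω) (hc : Convex ℝ Ω)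
    (hfin : (μH[(m : ℝ)] : Measure (Eu (m+1))) (frontier Ω) < ⊤)
    {X : Eu (m+1) → Eu (m+1)} (hX : ContDiff ℝ 1 X) {ψ : Eu (m+1) → ℝ} (hψ : ContDiff ℝ 1 ψ) (h0 : ∀ x, 0 ≤ ψ x)
    (c : Eu (m+1)) (η : ℝ) (hη : ∀ x, ψ x ≠ 0 → ‖X x - c‖ ≤ η) :
    ∫ x in Ω, dvg (fun y => ψ y • X y) x ≤ ∫ x in frontier Ω, ψ x * (‖X x‖ + 2 * (m+1) * η) ∂(μH[(m : ℝ)]) := by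
  obtain ⟨e, he, hce⟩ : ∃ e : Eu (m+1), ‖e‖ = 1 ∧ c = ‖c‖ • e := by
    by_cases h : c = 0
    · exact ⟨bas 0, norm_bas _, by simp [h]⟩
    · refine ⟨‖c‖⁻¹ • c, norm_smul_inv_norm h, ?_⟩
      rw [smul_smul, mul_inv_cancel₀ (norm_ne_zero_iff.2 h), one_smul]
  set G : Eu (m+1) → ℝ := fun x => ψ x * inner ℝ e (X x) with hG
  have hGc : ContDiff ℝ 1 G := hψ.mul (contDiff_const.inner ℝ hX)
  set A : Fin (m+1) → Eu (m+1) → ℝ := fun i x => ψ x * X x i with hA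
  have hAc : ∀ i, ContDiff ℝ 1 (A i) := fun i => hψ.mul (contDiff_coord hX i)
  have hBc : ∀ i, ContDiff ℝ 1 (fun x => A i x - e i * G x) := fun i => (hAc i).sub (contDiff_const.mul hGc)
  have id1 : ∀ x, dvg (fun y => ψ y • X y) x = fderiv ℝ G x e + ∑ i, fderiv ℝ (fun x => A i x - e i * G x) x (bas i) := by
    intro x
    rw [sum_coord (fderiv ℝ G x) e, ← Finset.sum_add_distrib]
    refine Finset.sum_congr rfl fun i _ => ?_
    have d1 := (hAc i).differentiable (by norm_num) x
    have d2 := hGc.differentiable (by norm_num) x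
    rw [fderiv_fun_sub d1 (d2.const_mul _), fderiv_const_mul d2]
    simp only [ContinuousLinearMap.sub_apply, ContinuousLinearMap.smul_apply, smul_eq_mul]
    rw [add_sub_cancel]
    rfl
  have cpd : ∀ (g : Eu (m+1) → ℝ) (e : Eu (m+1)), ContDiff ℝ 1 g → Continuous (fun x => fderiv ℝ g x e) := fun g e hg =>
    (hg.continuous_fderiv (by norm_num)).clm_apply continuous_const
  have ints : ∀ i ∈ Finset.univ, IntegrableOn (fun x => fderiv ℝ (fun x => A i x - e i * G x) x (bas i)) Ω :=
    fun i _ => int_pd hb (cpd _ _ (hBc i))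
  simp only [id1]
  rw [integral_add (int_pd hb (cpd _ _ hGc)) (integrable_finset_sum _ ints), integral_finset_sum _ ints]
  have b1 := flux_dir ho hb hc hfin e he G hGc
  have b2 := fun i => flux_dir ho hb hc hfin (bas i) (norm_bas i) _ (hBc i)
  have p1 : ∀ x, |G x| ≤ ψ x * ‖X x‖ := by
    intro x
    rw [hG, abs_mul, abs_of_nonneg (h0 x)]
    refine mul_le_mul_of_nonneg_left ?_ (h0 x)
    have := abs_real_inner_le_norm e (X x)
    rwa [he, one_mul] at this
  have p2 : ∀ i x, |A i x - e i * G x| ≤ ψ x * (2 * η) := by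
    intro i x
    by_cases hx : ψ x = 0
    · simp [hA, hG, hx]
    have e1 : A i x - e i * G x = ψ x * ((X x - (inner ℝ e (X x) : ℝ) • e) i) := by
      simp [hA, hG]; ring
    rw [e1, abs_mul, abs_of_nonneg (h0 x)]
    refine mul_le_mul_of_nonneg_left ?_ (h0 x)
    have e2 : X x - (inner ℝ e (X x) : ℝ) • e = (X x - c) - (inner ℝ e (X x - c) : ℝ) • e := by
      have : (inner ℝ e c : ℝ) = ‖c‖ := by
        conv_lhs => rw [hce]
        rw [inner_smul_right, real_inner_self_eq_norm_sq, he]; simp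
      rw [inner_sub_right, this, sub_smul, ← hce]; abel
    have h1 := PiLp.norm_apply_le (p := 2) (X x - (inner ℝ e (X x) : ℝ) • e) i
    have h2 : ‖X x - (inner ℝ e (X x) : ℝ) • e‖ ≤ 2 * η := by
      rw [e2]
      refine (norm_sub_le _ _).trans ?_
      rw [norm_smul, he, mul_one]
      have := abs_real_inner_le_norm e (X x - c)
      rw [he, one_mul] at this
      have := hη x hx
      rw [Real.norm_eq_abs]; linarith
    exact h1.trans h2
  have c1 : IntegrableOn (fun x => |G x|) (frontier Ω) (μH[(m : ℝ)]) := int_fr hb hfin hGc.continuous.abs.continuousOn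
  have c2 : ∀ i ∈ Finset.univ, IntegrableOn (fun x => |A i x - e i * G x|) (frontier Ω) (μH[(m : ℝ)]) :=
    fun i _ => int_fr hb hfin (hBc i).continuous.abs.continuousOn
  have c3 : IntegrableOn (fun x => ψ x * (‖X x‖ + 2 * (m+1) * η)) (frontier Ω) (μH[(m : ℝ)]) :=
    int_fr hb hfin (hψ.continuous.mul (hX.continuous.norm.add continuous_const)).continuousOn
  calc _ ≤ (∫ x in frontier Ω, |G x| ∂(μH[(m : ℝ)])) + ∑ i, ∫ x in frontier Ω, |A i x - e i * G x| ∂(μH[(m : ℝ)]) :=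
        add_le_add b1 (Finset.sum_le_sum fun i _ => b2 i)
    _ = ∫ x in frontier Ω, (|G x| + ∑ i, |A i x - e i * G x|) ∂(μH[(m : ℝ)]) := by
        rw [integral_add c1 (integrable_finset_sum _ c2), integral_finset_sum _ c2]
    _ ≤ _ := by
        refine integral_mono (c1.add (integrable_finset_sum _ c2)) c3 fun x => ?_
        have := Finset.sum_le_sum fun i (_ : i ∈ Finset.univ) => p2 i x
        simp only [Finset.sum_const, Finset.card_univ, Fintype.card_fin, nsmul_eq_mul] at this
        have := p1 x
        push_cast at *
        nlinarith

theorem flux_full (ho : IsOpen Ω) (hb : Bornology.IsBounded Ω) (hc : Convex ℝ Ω)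
    (hfin : (μH[(m : ℝ)] : Measure (Eu (m+1))) (frontier Ω) < ⊤)
    {X : Eu (m+1) → Eu (m+1)} (hX : ContDiff ℝ 1 X) :
    ∫ x in Ω, dvg X x ≤ ∫ x in frontier Ω, ‖X x‖ ∂(μH[(m : ℝ)]) := by
  have cdv : ∀ Z : Eu (m+1) → Eu (m+1), ContDiff ℝ 1 Z → Continuous (dvg Z) := fun Z hZ => by
    unfold dvg
    exact continuous_finset_sum _ fun i _ =>
      (((contDiff_coord hZ i).continuous_fderiv (by norm_num)).clm_apply continuous_const)
  have main : ∀ η : ℝ, 0 < η → ∫ x in Ω, dvg X x ≤ ∫ x in frontier Ω, (‖X x‖ + 2 * (m+1) * η) ∂(μH[(m : ℝ)]) := by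
    intro η hη
    have hloc : ∀ x : Eu (m+1), ∃ b : ContDiffBump x, ∀ y, b y ≠ 0 → ‖X y - X x‖ ≤ η := by
      intro x
      obtain ⟨δ, hδ, h⟩ := Metric.continuous_iff.1 hX.continuous x η hη
      refine ⟨⟨δ/2, δ, by positivity, by linarith⟩, fun y hy => ?_⟩
      have : y ∈ Function.support (⟨δ/2, δ, by positivity, by linarith⟩ : ContDiffBump x) := hy
      rw [ContDiffBump.support_eq] at this
      rw [← dist_eq_norm]
      exact (h y this).le
    choose b hbn using hloc
    have hbc : ∀ x, ContDiff ℝ 1 (b x) := fun x => (b x).contDiff (n := 1)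
    have good : ∀ t : Finset (Eu (m+1)), ContDiff ℝ 1 (fun y => ∏ k ∈ t, (1 - b k y)) ∧ (∀ y, 0 ≤ ∏ k ∈ t, (1 - b k y)) ∧
        ∫ x in Ω, dvg (fun y => (1 - ∏ k ∈ t, (1 - b k y)) • X y) x ≤
          ∫ x in frontier Ω, (1 - ∏ k ∈ t, (1 - b k x)) * (‖X x‖ + 2 * (m+1) * η) ∂(μH[(m : ℝ)]) := by
      classical
      intro t
      induction t using Finset.induction_on with
      | empty => simpa [dvg] using contDiff_const
      | insert a t hat ih =>
        obtain ⟨i1, i2, i3⟩ := ih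
        simp only [Finset.prod_insert hat]
        have j1 : ContDiff ℝ 1 (fun y => 1 - b a y) := contDiff_const.sub (hbc a)
        refine ⟨j1.mul i1, fun y => mul_nonneg (by linarith [(b a).le_one (x := y)]) (i2 y), ?_⟩
        have fl := flux_local ho hb hc hfin hX ((hbc a).mul i1) (fun x => mul_nonneg (b a).nonneg (i2 x)) (X a) η
          (fun x hx => hbn a x (left_ne_zero_of_mul hx))
        have hZ1 : ContDiff ℝ 1 (fun y => (1 - ∏ k ∈ t, (1 - b k y)) • X y) := (contDiff_const.sub i1).smul hX
        have hZ2 : ContDiff ℝ 1 (fun y => (b a y * ∏ k ∈ t, (1 - b k y)) • X y) := ((hbc a).mul i1).smul hX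
        have e1 : ∀ x, dvg (fun y => (1 - (1 - b a y) * ∏ k ∈ t, (1 - b k y)) • X y) x =
            dvg (fun y => (1 - ∏ k ∈ t, (1 - b k y)) • X y) x + dvg (fun y => (b a y * ∏ k ∈ t, (1 - b k y)) • X y) x := by
          intro x
          unfold dvg
          rw [← Finset.sum_add_distrib]
          refine Finset.sum_congr rfl fun i _ => ?_
          rw [← ContinuousLinearMap.add_apply, ← fderiv_fun_add ((contDiff_coord hZ1 i).differentiable (by norm_num) x)
            ((contDiff_coord hZ2 i).differentiable (by norm_num) x)]
          congr 2
          ext y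
          simp; ring
        simp only [e1]
        rw [integral_add (int_pd hb (cdv _ hZ1)) (int_pd hb (cdv _ hZ2))]
        refine (add_le_add i3 fl).trans (le_of_eq ?_)
        rw [← integral_add]
        · congr 1; ext x; ring
        · exact int_fr hb hfin ((continuous_const.sub i1.continuous).mul (hX.continuous.norm.add continuous_const)).continuousOn
        · exact int_fr hb hfin (((hbc a).mul i1).continuous.mul (hX.continuous.norm.add continuous_const)).continuousOn
    obtain ⟨t, _, ht⟩ := hb.isCompact_closure.elim_nhds_subcover (fun x => Metric.closedBall x (b x).rIn)
      (fun x _ => Metric.closedBall_mem_nhds x (b x).rIn_pos)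
    have hP : ∀ x ∈ closure Ω, 1 - ∏ k ∈ t, (1 - b k x) = 1 := by
      intro x hx
      obtain ⟨k, hk, hxk⟩ := Set.mem_iUnion₂.1 (ht hx)
      rw [Finset.prod_eq_zero hk (by rw [(b k).one_of_mem_closedBall hxk, sub_self]), sub_zero]
    have fin := (good t).2.2
    have eL : ∫ x in Ω, dvg (fun y => (1 - ∏ k ∈ t, (1 - b k y)) • X y) x = ∫ x in Ω, dvg X x := by
      refine setIntegral_congr_fun ho.measurableSet fun x hx => ?_
      unfold dvg
      refine Finset.sum_congr rfl fun i _ => ?_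
      have : (fun y => ((1 - ∏ k ∈ t, (1 - b k y)) • X y) i) =ᶠ[𝓝 x] fun y => X y i := by
        filter_upwards [ho.mem_nhds hx] with y hy
        rw [hP y (subset_closure hy), one_smul]
      rw [this.fderiv_eq]
    have eR : ∫ x in frontier Ω, (1 - ∏ k ∈ t, (1 - b k x)) * (‖X x‖ + 2 * (m+1) * η) ∂(μH[(m : ℝ)]) =
        ∫ x in frontier Ω, (‖X x‖ + 2 * (m+1) * η) ∂(μH[(m : ℝ)]) := by
      refine setIntegral_congr_fun isClosed_frontier.measurableSet fun x hx => ?_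
      rw [hP x (frontier_subset_closure hx), one_mul]
    rw [← eL, ← eR]; exact fin
  have hXi : IntegrableOn (fun x => ‖X x‖) (frontier Ω) (μH[(m : ℝ)]) := int_fr hb hfin hX.continuous.norm.continuousOn
  refine ge_of_tendsto (x := 𝓝[>] (0:ℝ)) (f := fun η => (∫ x in frontier Ω, ‖X x‖ ∂(μH[(m : ℝ)])) + ((μH[(m : ℝ)] : Measure (Eu (m+1))) (frontier Ω)).toReal * (2 * (m+1) * η)) ?_ ?_
  · have : Continuous (fun η : ℝ => (∫ x in frontier Ω, ‖X x‖ ∂(μH[(m : ℝ)])) + ((μH[(m : ℝ)] : Measure (Eu (m+1))) (frontier Ω)).toReal * (2 * (m+1) * η)) := by fun_prop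
    have := this.tendsto 0
    simp only [mul_zero, add_zero] at this
    exact this.mono_left nhdsWithin_le_nhds
  · filter_upwards [self_mem_nhdsWithin] with η hη
    refine (main η hη).trans (le_of_eq ?_)
    rw [integral_add hXi (integrableOn_const hfin.ne), setIntegral_const, smul_eq_mul]
    rfl

end Flux


section Fin
open Filter Topology
open scoped ENNReal NNReal
variable {m : ℕ} {Ω : Set (Eu (m+1))}

theorem face_finite (i : Fin (m+1)) (c R : ℝ) :
    (μH[(m : ℝ)] : Measure (Eu (m+1))) {x : Eu (m+1) | x i = c ∧ ∀ j, |x j| ≤ R} < ⊤ := by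
  let f : (Fin m → ℝ) → Eu (m+1) := fun z => WithLp.toLp 2 (Fin.insertNth (α := fun _ => ℝ) i c z)
  have h1 : LipschitzWith 1 (fun z : Fin m → ℝ => Fin.insertNth (α := fun _ => ℝ) i c z) := by
    refine LipschitzWith.of_dist_le_mul fun z w => ?_
    rw [NNReal.coe_one, one_mul, dist_pi_le_iff dist_nonneg]
    intro j
    refine Fin.succAboveCases i ?_ (fun k => ?_) j
    · simp
    · simpa using dist_le_pi_dist z w k
  have h2 := (PiLp.lipschitzWith_toLp 2 (fun _ : Fin (m+1) => ℝ)).comp h1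
  have hsub : {x : Eu (m+1) | x i = c ∧ ∀ j, |x j| ≤ R} ⊆ f '' (Metric.closedBall 0 |R|) := by
    rintro x ⟨hx, hR⟩
    refine ⟨fun k => x (i.succAbove k), ?_, ?_⟩
    · rw [mem_closedBall_zero_iff, pi_norm_le_iff_of_nonneg (abs_nonneg _)]
      intro k
      exact (hR _).trans (le_abs_self _)
    · ext j
      refine Fin.succAboveCases i ?_ (fun k => ?_) j
      · simp [f, hx]
      · simp [f]
  refine (measure_mono hsub).trans_lt ?_
  refine (h2.lipschitzOnWith.hausdorffMeasure_image_le (Nat.cast_nonneg m)).trans_lt ?_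
  refine ENNReal.mul_lt_top ?_ ?_
  · exact ENNReal.rpow_lt_top_of_nonneg (Nat.cast_nonneg m) ENNReal.coe_ne_top
  · have : (μH[(m:ℝ)] : Measure (Fin m → ℝ)) = volume := by
      have := hausdorffMeasure_pi_real (ι := Fin m)
      simpa using this
    rw [this]
    exact Metric.isBounded_closedBall.measure_lt_top

theorem frontier_finite (ho : IsOpen Ω) (hb : Bornology.IsBounded Ω) (hc : Convex ℝ Ω) :
    (μH[(m : ℝ)] : Measure (Eu (m+1))) (frontier Ω) < ⊤ := by
  obtain ⟨R, hR0, hR⟩ : ∃ R, 0 < R ∧ ∀ x ∈ closure Ω, ‖x‖ ≤ R := by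
    obtain ⟨R, h⟩ := hb.isCompact_closure.isBounded.exists_norm_le
    exact ⟨max R 1, by positivity, fun x hx => (h x hx).trans (le_max_left _ _)⟩
  have sup_le : ∀ x : Eu (m+1), ‖WithLp.ofLp x‖ ≤ ‖x‖ := fun x => by
    rw [pi_norm_le_iff_of_nonneg (norm_nonneg _)]; exact fun i => PiLp.norm_apply_le x i
  have ex : ∀ y : frontier Ω, ∃ z : Eu (m+1), ‖WithLp.ofLp z‖ = R ∧ ∀ w ∈ closure Ω, inner ℝ (w - y.1) (z - y.1) ≤ (0:ℝ) := by
    intro y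
    have hy : y.1 ∉ Ω := (ho.frontier_eq ▸ y.2 : _ ∈ closure Ω \ Ω).2
    obtain ⟨y0, hy0⟩ : Ω.Nonempty := by
      rw [← closure_nonempty_iff]
      exact ⟨y.1, frontier_subset_closure y.2⟩
    obtain ⟨ν, hν, hpos⟩ := support_normal ho hc hy hy0
    have hpos' : ∀ q ∈ closure Ω, 0 ≤ inner ℝ ν (q - y.1) := by
      have hcl : IsClosed {q : Eu (m+1) | 0 ≤ inner ℝ ν (q - y.1)} :=
        isClosed_le continuous_const (by fun_prop)
      exact fun q hq => closure_minimal (fun q hq => (hpos q hq).le) hcl hq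
    obtain ⟨i, hi⟩ : ∃ i, ν i ≠ 0 := by
      by_contra h
      push Not at h
      have : ν = 0 := by ext i; simpa using h i
      simp [this] at hν
    have hi' : 0 < |ν i| := abs_pos.2 hi
    have hφ : Continuous (fun t : ℝ => ‖WithLp.ofLp (y.1 - t • ν)‖) := by fun_prop
    have hT : (0:ℝ) ≤ 2 * R / |ν i| := by positivity
    have key := intermediate_value_Icc hT hφ.continuousOn
    have hm : R ∈ Set.Icc ‖WithLp.ofLp (y.1 - (0:ℝ) • ν)‖ ‖WithLp.ofLp (y.1 - (2 * R / |ν i|) • ν)‖ := by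
      have hyR := hR y.1 (frontier_subset_closure y.2)
      constructor
      · simpa using (sup_le y.1).trans hyR
      · refine le_trans ?_ (norm_le_pi_norm (WithLp.ofLp (y.1 - (2 * R / |ν i|) • ν)) i)
        have a1 : |y.1 i| ≤ R := (PiLp.norm_apply_le y.1 i).trans hyR
        have a2 : |(2 * R / |ν i|) * ν i| = 2 * R := by
          rw [abs_mul, abs_of_nonneg hT]; field_simp
        have a3 := abs_sub_abs_le_abs_sub ((2 * R / |ν i|) * ν i) (y.1 i)
        rw [abs_sub_comm] at a3
        simp only [PiLp.sub_apply, PiLp.smul_apply, smul_eq_mul, Real.norm_eq_abs]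
        linarith
    obtain ⟨t, ht, hte⟩ := key hm
    refine ⟨y.1 - t • ν, hte, fun w hw => ?_⟩
    rw [sub_sub_cancel_left, inner_neg_right, inner_smul_right, real_inner_comm]
    have := mul_nonneg ht.1 (hpos' w hw)
    linarith
  choose g g1 g2 using ex
  have anti : AntilipschitzWith 1 g := by
    refine AntilipschitzWith.of_le_mul_dist fun y w => ?_
    rw [NNReal.coe_one, one_mul, Subtype.dist_eq, dist_eq_norm, dist_eq_norm]
    have a1 := g2 y w (frontier_subset_closure w.2)
    have a2 := g2 w y (frontier_subset_closure y.2)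
    have : ‖y.1 - w.1‖^2 ≤ inner ℝ (y.1 - w.1) (g y - g w) := by
      have e : g y - g w = (y.1 - w.1) + (g y - y.1) - (g w - w.1) := by abel
      rw [e, inner_sub_right, inner_add_right, real_inner_self_eq_norm_sq]
      have : inner ℝ (y.1 - w.1) (g y - y.1) = - inner ℝ (w.1 - y.1) (g y - y.1) := by
        rw [← inner_neg_left, neg_sub]
      linarith
    have := this.trans (real_inner_le_norm _ _)
    by_contra h
    push Not at h
    nlinarith [norm_nonneg (y.1-w.1), norm_nonneg (g y - g w)]
  have e1 : (μH[(m : ℝ)] : Measure (Eu (m+1))) (frontier Ω) = (μH[(m : ℝ)] : Measure (frontier Ω)) Set.univ := by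
    have := (isometry_subtype_coe (s := frontier Ω)).hausdorffMeasure_image (d := (m:ℝ)) (Or.inl (Nat.cast_nonneg m)) Set.univ
    rw [← this]
    simp
  rw [e1]
  refine (anti.le_hausdorffMeasure_image (Nat.cast_nonneg m) _).trans_lt ?_
  simp only [ENNReal.coe_one, ENNReal.one_rpow, one_mul]
  have hsub : g '' Set.univ ⊆ ⋃ i : Fin (m+1), ({x : Eu (m+1) | x i = R ∧ ∀ j, |x j| ≤ R} ∪ {x : Eu (m+1) | x i = -R ∧ ∀ j, |x j| ≤ R}) := by
    rintro _ ⟨y, -, rfl⟩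
    have a : ∀ j, |g y j| ≤ R := fun j => (norm_le_pi_norm (WithLp.ofLp (g y)) j).trans (g1 y).le
    have : ∃ j, |g y j| = R := by
      by_contra h
      push Not at h
      have : ‖WithLp.ofLp (g y)‖ < R := (pi_norm_lt_iff hR0).2 fun j => lt_of_le_of_ne (a j) (h j)
      exact this.ne (g1 y)
    obtain ⟨j, hj⟩ := this
    refine Set.mem_iUnion.2 ⟨j, ?_⟩
    rcases (abs_eq hR0.le).1 hj with h | h
    · exact Or.inl ⟨h, a⟩
    · exact Or.inr ⟨h, a⟩
  refine (measure_mono hsub).trans_lt ((measure_iUnion_le _).trans_lt ?_)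
  rw [tsum_fintype]
  refine ENNReal.sum_lt_top.2 fun i _ => ?_
  exact (measure_union_le _ _).trans_lt (ENNReal.add_lt_top.2 ⟨face_finite i R R, face_finite i (-R) R⟩)
end Fin


section Maj
open Filter Topology
variable {n : ℕ}

theorem parts_pd {p φ : Eu n → ℝ} (hp : ContDiff ℝ 2 p) (hφ : ContDiff ℝ 2 φ) (hc : HasCompactSupport φ) (e : Eu n) :
    ∫ x, p x * pd2 φ e x = ∫ x, pd2 p e x * φ x := by
  have p1 : ContDiff ℝ 1 (fun y => fderiv ℝ p y e) := contDiff_pd1 hp (by norm_num) e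
  have f1 : ContDiff ℝ 1 (fun y => fderiv ℝ φ y e) := contDiff_pd1 hφ (by norm_num) e
  have c1 := hasCompactSupport_pd1 hc e
  have i1 : Integrable (fun x => fderiv ℝ p x e * fderiv ℝ φ x e) :=
    (p1.continuous.mul f1.continuous).integrable_of_hasCompactSupport c1.mul_left
  have i2 : Integrable (fun x => p x * pd2 φ e x) :=
    (hp.continuous.mul (continuous_pd2 hφ e)).integrable_of_hasCompactSupport (hasCompactSupport_pd2 hc e).mul_left
  have i3 : Integrable (fun x => p x * fderiv ℝ φ x e) :=
    (hp.continuous.mul f1.continuous).integrable_of_hasCompactSupport c1.mul_left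
  have i4 : Integrable (fun x => pd2 p e x * φ x) :=
    ((continuous_pd2 hp e).mul hφ.continuous).integrable_of_hasCompactSupport hc.mul_left
  have i5 : Integrable (fun x => fderiv ℝ p x e * φ x) :=
    (p1.continuous.mul hφ.continuous).integrable_of_hasCompactSupport hc.mul_left
  have e1 := integral_mul_fderiv_eq_neg_fderiv_mul_of_integrable (μ := (volume : Measure (Eu n)))
      (f := p) (g := fun y => fderiv ℝ φ y e) (v := e) i1 i2 i3
      (fun x _ => hp.differentiable (by norm_num) x) (fun x _ => f1.differentiable (by norm_num) x)
  have e2 := integral_mul_fderiv_eq_neg_fderiv_mul_of_integrable (μ := (volume : Measure (Eu n)))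
      (f := fun y => fderiv ℝ p y e) (g := φ) (v := e) i4 i1 i5
      (fun x _ => p1.differentiable (by norm_num) x) (fun x _ => hφ.differentiable (by norm_num) x)
  have e3 : ∫ x, p x * pd2 φ e x = - ∫ x, fderiv ℝ p x e * fderiv ℝ φ x e := e1
  have e4 : ∫ x, fderiv ℝ p x e * fderiv ℝ φ x e = - ∫ x, pd2 p e x * φ x := e2
  rw [e3, e4, neg_neg]

theorem parts_lap {p φ : Eu n → ℝ} (hp : ContDiff ℝ 2 p) (hφ : ContDiff ℝ 2 φ) (hc : HasCompactSupport φ) :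
    ∫ x, p x * laplacian φ x = ∫ x, φ x * laplacian p x := by
  simp only [laplacian_eq_pd2, Finset.mul_sum]
  rw [integral_finset_sum, integral_finset_sum]
  · refine Finset.sum_congr rfl fun i _ => ?_
    rw [parts_pd hp hφ hc]
    simp only [mul_comm]
  · exact fun i _ => (hφ.continuous.mul (continuous_pd2 hp _)).integrable_of_hasCompactSupport hc.mul_right
  · exact fun i _ => (hp.continuous.mul (continuous_pd2 hφ _)).integrable_of_hasCompactSupport (hasCompactSupport_pd2 hc _).mul_left

theorem smooth_approx {S : Set (Eu n)} (hS : IsCompact S) {f : Eu n → ℝ} (hf : ContinuousOn f S) {κ : ℝ} (hκ : 0 < κ) :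
    ∃ p : Eu n → ℝ, ContDiff ℝ 3 p ∧ HasCompactSupport p ∧ ∀ x ∈ S, |p x - f x| ≤ κ := by
  obtain ⟨g, hg⟩ := ContinuousMap.exists_restrict_eq (s := S) hS.isClosed ⟨S.restrict f, hf.restrict⟩
  obtain ⟨q, hq, hqa, -⟩ := g.continuous.exists_contDiff_approx 3 (ε := fun _ => κ) continuous_const (fun _ => hκ)
  obtain ⟨R, hR0, hR⟩ : ∃ R, 0 < R ∧ ∀ x ∈ S, ‖x‖ ≤ R := by
    obtain ⟨R, h⟩ := hS.isBounded.exists_norm_le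
    exact ⟨max R 1, by positivity, fun x hx => (h x hx).trans (le_max_left _ _)⟩
  let b : ContDiffBump (0 : Eu n) := ⟨R, R + 1, hR0, by linarith⟩
  refine ⟨fun x => b x * q x, b.contDiff.mul hq, b.hasCompactSupport.mul_right, fun x hx => ?_⟩
  have h1 : b x = 1 := b.one_of_mem_closedBall (by simpa [b] using hR x hx)
  have h2 : g x = f x := by
    exact congrArg (fun h => h ⟨x, hx⟩) hg
  have h3 := hqa x
  rw [Real.dist_eq, h2] at h3
  change |b x * q x - f x| ≤ κ
  rw [h1, one_mul]
  exact h3.le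

theorem pd2_nonpos_of_max {g : Eu n → ℝ} {x : Eu n} (e : Eu n) (hm : IsLocalMax g x)
    (h1 : ∀ᶠ y in 𝓝 x, DifferentiableAt ℝ g y) (h2 : DifferentiableAt ℝ (fun y => fderiv ℝ g y e) x) :
    pd2 g e x ≤ 0 := by
  by_contra hpos
  push Not at hpos
  let ℓ : ℝ → Eu n := fun t => x + t • e
  have hℓd : ∀ t, HasDerivAt ℓ e t := fun t => by
    have := ((hasDerivAt_id t).smul_const e).const_add x
    rw [one_smul] at this
    exact this
  have hℓ0 : ℓ 0 = x := by simp [ℓ]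
  have hℓc : Tendsto ℓ (𝓝 0) (𝓝 x) := by
    have := (hℓd 0).continuousAt.tendsto
    rwa [hℓ0] at this
  let φ : ℝ → ℝ := fun t => g (ℓ t)
  have hd : ∀ᶠ t in 𝓝 (0:ℝ), HasDerivAt φ (fderiv ℝ g (ℓ t) e) t := by
    filter_upwards [hℓc.eventually h1] with t ht
    exact ht.hasFDerivAt.comp_hasDerivAt t (hℓd t)
  have hde : deriv φ =ᶠ[𝓝 0] fun t => fderiv ℝ g (ℓ t) e := hd.mono fun t ht => ht.deriv
  have hdd : deriv (deriv φ) 0 = pd2 g e x := by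
    rw [hde.deriv_eq]
    have : HasFDerivAt (fun y => fderiv ℝ g y e) (fderiv ℝ (fun y => fderiv ℝ g y e) x) (ℓ 0) := by
      rw [hℓ0]; exact h2.hasFDerivAt
    exact (this.comp_hasDerivAt (0:ℝ) (hℓd 0)).deriv
  have hmax : IsLocalMax φ 0 := by
    have : ∀ᶠ t in 𝓝 (0:ℝ), g (ℓ t) ≤ g x := hℓc.eventually hm
    filter_upwards [this] with t ht
    simpa [φ, hℓ0] using ht
  have hd0 : deriv φ 0 = 0 := hmax.deriv_eq_zero
  have hmin := isLocalMin_of_deriv_deriv_pos (by rw [hdd]; exact hpos) hd0 hd.self_of_nhds.continuousAt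
  have hconst : φ =ᶠ[𝓝 0] fun _ => φ 0 := by
    filter_upwards [hmin, hmax] with t a b using le_antisymm b a
  have z1 : deriv φ =ᶠ[𝓝 0] fun _ => 0 := by
    have := hconst.deriv
    simpa using this
  have : deriv (deriv φ) 0 = 0 := by rw [z1.deriv_eq]; simp
  rw [hdd] at this
  exact hpos.ne' this

theorem max_principle (hn : 0 < n) {Ω : Set (Eu n)} (ho : IsOpen Ω) (hb : Bornology.IsBounded Ω)
    {f H : Eu n → ℝ} (hfc : ContinuousOn f (closure Ω))
    (hf1 : ∀ x ∈ Ω, DifferentiableAt ℝ f x)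
    (hf2 : ∀ x ∈ Ω, DifferentiableAt ℝ (fun y => fderiv ℝ f y) x)
    (hsub : ∀ x ∈ Ω, 0 ≤ laplacian f x) (hH : ContDiff ℝ 2 H) (hH0 : ∀ x ∈ Ω, laplacian H x = 0)
    (c : ℝ) (hfr : ∀ x ∈ frontier Ω, f x ≤ H x + c) : ∀ x ∈ Ω, f x ≤ H x + c := by
  intro z hz
  obtain ⟨R, hR⟩ := hb.isCompact_closure.isBounded.exists_norm_le
  have R0 : 0 ≤ R := (norm_nonneg z).trans (hR z (subset_closure hz))
  have key : ∀ δ > 0, f z - H z ≤ c + δ * R ^ 2 := by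
    intro δ hδ
    let g : Eu n → ℝ := fun x => f x - H x + δ * ‖x‖ ^ 2
    have hgc : ContinuousOn g (closure Ω) := by
      refine (hfc.sub hH.continuous.continuousOn).add ?_
      fun_prop
    obtain ⟨x, hx, hmax⟩ := hb.isCompact_closure.exists_isMaxOn ⟨z, subset_closure hz⟩ hgc
    have hzx : g z ≤ g x := hmax (subset_closure hz)
    have hxR : ‖x‖ ^ 2 ≤ R ^ 2 := pow_le_pow_left₀ (norm_nonneg _) (hR x hx) 2
    have hz2 : 0 ≤ δ * ‖z‖ ^ 2 := by positivity
    by_cases hxΩ : x ∈ Ω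
    · exfalso
      have hlm : IsLocalMax g x := by
        filter_upwards [ho.mem_nhds hxΩ] with y hy using hmax (subset_closure hy)
      have hgd : ∀ y ∈ Ω, HasFDerivAt g (fderiv ℝ f y - fderiv ℝ H y + δ • ((2:ℝ) • innerSL ℝ y)) y := by
        intro y hy
        have q := (hasStrictFDerivAt_norm_sq y).hasFDerivAt
        have q' : HasFDerivAt (fun x : Eu n => ‖x‖ ^ 2) ((2:ℝ) • innerSL ℝ y) y := by
          refine q.congr_fderiv ?_
          rw [two_smul, two_smul]
        exact ((hf1 y hy).hasFDerivAt.sub (hH.differentiable (by norm_num) y).hasFDerivAt).add (q'.const_mul δ)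
      have hev : ∀ e : Eu n, (fun y => fderiv ℝ g y e) =ᶠ[𝓝 x]
          fun y => fderiv ℝ f y e - fderiv ℝ H y e + δ * (2 * inner ℝ y e) := by
        intro e
        filter_upwards [ho.mem_nhds hxΩ] with y hy
        rw [(hgd y hy).fderiv]
        simp
      have hd2 : ∀ e : Eu n, HasFDerivAt (fun y => fderiv ℝ g y e)
          (fderiv ℝ (fun y => fderiv ℝ f y e) x - fderiv ℝ (fun y => fderiv ℝ H y e) x
            + δ • ((2:ℝ) • (innerSL ℝ e : Eu n →L[ℝ] ℝ))) x := by
        intro e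
        refine HasFDerivAt.congr_of_eventuallyEq ?_ (hev e)
        have a1 : DifferentiableAt ℝ (fun y => fderiv ℝ f y e) x := (hf2 x hxΩ).clm_apply (differentiableAt_const e)
        have a2 : DifferentiableAt ℝ (fun y => fderiv ℝ H y e) x :=
          (contDiff_pd1 (m := 1) hH (by norm_num) e).differentiable (by norm_num) x
        have a3 : HasFDerivAt (fun y : Eu n => inner ℝ y e) (innerSL ℝ e : Eu n →L[ℝ] ℝ) x := by
          have := (innerSL ℝ e : Eu n →L[ℝ] ℝ).hasFDerivAt (x := x)
          refine this.congr_of_eventuallyEq (Eventually.of_forall fun y => ?_)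
          simp [real_inner_comm]
        exact (a1.hasFDerivAt.sub a2.hasFDerivAt).add ((a3.const_mul 2).const_mul δ)
      have hle : ∀ i, pd2 g (bas i) x ≤ 0 := fun i =>
        pd2_nonpos_of_max _ hlm ((ho.eventually_mem hxΩ).mono fun y hy => (hgd y hy).differentiableAt)
          (hd2 _).differentiableAt
      have heq : ∀ i, pd2 g (bas i) x = pd2 f (bas i) x - pd2 H (bas i) x + δ * 2 := by
        intro i
        rw [pd2, (hd2 _).fderiv]
        simp [pd2, norm_bas]
      have s1 : ∑ i : Fin n, (pd2 f (bas i) x - pd2 H (bas i) x + δ * 2) ≤ 0 :=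
        Finset.sum_nonpos fun i _ => by rw [← heq]; exact hle i
      rw [Finset.sum_add_distrib, Finset.sum_sub_distrib, ← laplacian_eq_pd2, ← laplacian_eq_pd2, hH0 x hxΩ] at s1
      simp only [Finset.sum_const, Finset.card_univ, Fintype.card_fin, nsmul_eq_mul] at s1
      have := hsub x hxΩ
      have hn' : (0:ℝ) < n := by exact_mod_cast hn
      have : 0 < (n:ℝ) * (δ * 2) := by positivity
      linarith
    · have hxf : x ∈ frontier Ω := by rw [ho.frontier_eq]; exact ⟨hx, hxΩ⟩
      have := hfr x hxf
      have : δ * ‖x‖ ^ 2 ≤ δ * R ^ 2 := mul_le_mul_of_nonneg_left hxR hδ.le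
      simp only [g] at hzx
      linarith
  have lim : f z - H z ≤ c := by
    refine ge_of_tendsto (x := 𝓝[>] (0:ℝ)) (f := fun δ => c + δ * R ^ 2) ?_ ?_
    · have : Continuous (fun δ : ℝ => c + δ * R ^ 2) := by fun_prop
      have := this.tendsto 0
      simp only [zero_mul, add_zero] at this
      exact this.mono_left nhdsWithin_le_nhds
    · filter_upwards [self_mem_nhdsWithin] with δ hδ using key δ hδ
  linarith
end Maj


section Maj2
open Filter Topology
variable {n : ℕ} {Ω : Set (Eu n)} {D : ℝ} {x0 : Eu n}

noncomputable def dil (x0 : Eu n) (μ : ℝ) (Ω : Set (Eu n)) : Set (Eu n) := AffineMap.homothety x0 μ '' Ω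

theorem hom_sub (μ : ℝ) (x : Eu n) : AffineMap.homothety x0 μ x - x0 = μ • (x - x0) := by
  simp [AffineMap.homothety_apply]

theorem dil_setup (hn : 0 < n) (ho : IsOpen Ω) (hc : Convex ℝ Ω) (hD0 : 0 ≤ D) (hD : ∀ x ∈ Ω, ‖x - x0‖ ≤ D)
    {μ : ℝ} (h1 : 1 < μ) (h2 : μ ≤ 2) : PSetup n (dil x0 μ Ω) (2 * D) := by
  refine ⟨hn, ?_, ?_, by positivity, x0, ?_⟩
  · exact AffineMap.homothety_isOpenMap x0 μ (by linarith) _ ho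
  · exact hc.affine_image _
  · rintro _ ⟨x, hx, rfl⟩
    rw [hom_sub, norm_smul, Real.norm_of_nonneg (by linarith)]
    exact mul_le_mul h2 (hD x hx) (norm_nonneg _) (by norm_num)

theorem dil_closure (ho : IsOpen Ω) (hc : Convex ℝ Ω) (hx0 : x0 ∈ Ω) {μ : ℝ} (h1 : 1 < μ) :
    closure Ω ⊆ dil x0 μ Ω := by
  have := hc.closure_subset_image_homothety_interior_of_one_lt (x := x0) (by rwa [ho.interior_eq]) μ h1
  rwa [ho.interior_eq] at this

theorem dil_vol {μ : ℝ} (h1 : 1 < μ) : (volume (dil x0 μ Ω)).toReal = μ ^ n * (volume Ω).toReal := by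
  rw [dil, Measure.addHaar_image_homothety, ENNReal.toReal_mul]
  rw [ENNReal.toReal_ofReal (abs_nonneg _), abs_of_nonneg (by positivity)]
  simp

theorem tcon_dil (hn : 0 < n) {μ V : ℝ} (h1 : 1 < μ) (hV : 0 ≤ V) : tcon n (μ ^ n * V) = μ * tcon n V := by
  have hμ : 0 ≤ μ := by linarith
  rw [tcon, tcon, Real.mul_rpow (by positivity) hV, Real.pow_rpow_inv_natCast hμ hn.ne', mul_div_assoc]

theorem dil_out (ho : IsOpen Ω) (hD : ∀ x ∈ Ω, ‖x - x0‖ ≤ D) {μ : ℝ} (h1 : 1 < μ) {x : Eu n}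
    (hx : x ∈ frontier Ω) : ∃ y, y ∉ dil x0 μ Ω ∧ ‖x - y‖ ≤ (μ - 1) * D := by
  have hD' : ‖x - x0‖ ≤ D := by
    have hcl : IsClosed {q : Eu n | ‖q - x0‖ ≤ D} := isClosed_le (by fun_prop) continuous_const
    exact closure_minimal hD hcl (frontier_subset_closure hx)
  refine ⟨AffineMap.homothety x0 μ x, ?_, ?_⟩
  · rintro ⟨z, hz, hzx⟩
    have e : μ • (z - x0) = μ • (x - x0) := by rw [← hom_sub, ← hom_sub, hzx]
    have e2 : z = x := by
      have := smul_right_injective (Eu n) (by linarith : μ ≠ 0) e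
      simpa using this
    rw [ho.frontier_eq] at hx
    exact hx.2 (e2 ▸ hz)
  · have : x - AffineMap.homothety x0 μ x = -((μ - 1) • (x - x0)) := by
      have e : x - AffineMap.homothety x0 μ x = (x - x0) - (AffineMap.homothety x0 μ x - x0) := by abel
      rw [e, hom_sub]; module
    rw [this, norm_neg, norm_smul, Real.norm_of_nonneg (by linarith)]
    exact mul_le_mul_of_nonneg_left hD' (by linarith)

theorem lip_of_lw {g : Eu n → ℝ} {K : NNReal} (h : LipschitzWith K g) (x y : Eu n) : g x - g y ≤ K * ‖x - y‖ := by
  have := h.dist_le_mul x y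
  rw [Real.dist_eq, dist_eq_norm] at this
  exact (le_abs_self _).trans this

theorem majorant (hn : 0 < n) (ho : IsOpen Ω) (hb : Bornology.IsBounded Ω) (hc : Convex ℝ Ω) (hD0 : 0 ≤ D)
    (hD : ∀ x ∈ Ω, ‖x - x0‖ ≤ D) {f : Eu n → ℝ} (hf : ContinuousOn f (closure Ω)) {κ : ℝ} (hκ : 0 < κ) :
    ∃ K, 0 ≤ K ∧ ∀ μ, 1 < μ → μ ≤ 2 → ∃ H : Eu n → ℝ, (∀ x y, H x - H y ≤ K * ‖x - y‖) ∧
      (∀ φ : Eu n → ℝ, ContDiff ℝ 2 φ → HasCompactSupport φ → tsupport φ ⊆ dil x0 μ Ω →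
        ∫ x, H x * laplacian φ x = -∫ x, φ x * 0) ∧
      ∀ x ∈ frontier Ω, |H x - f x| ≤ κ + K * (μ - 1) := by
  obtain ⟨p, hp3, hpc, hpf⟩ := smooth_approx hb.isCompact_closure hf hκ
  have hp2 : ContDiff ℝ 2 p := hp3.of_le (by norm_num)
  obtain ⟨Kp, hKp⟩ := hp3.lipschitzWith_of_hasCompactSupport hpc (by norm_num)
  have hlapc : HasCompactSupport (laplacian p) := hasCompactSupport_laplacian hpc
  have hlap1 : ContDiff ℝ 1 (laplacian p) := by
    have : laplacian p = fun x => ∑ i, pd2 p (bas i) x := funext fun x => rfl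
    rw [this]
    refine ContDiff.sum fun i _ => ?_
    have h1 : ContDiff ℝ 2 (fun y => fderiv ℝ p y (bas i)) := contDiff_pd1 hp3 (by norm_num) _
    exact contDiff_pd1 h1 (by norm_num) _
  obtain ⟨Kl, hKl⟩ := hlap1.lipschitzWith_of_hasCompactSupport hlapc (by norm_num)
  obtain ⟨C, hC0, hC⟩ : ∃ C, 0 < C ∧ ∀ x, |laplacian p x| ≤ C := by
    obtain ⟨C, h⟩ := hlapc.exists_bound_of_continuous hlap1.continuous
    exact ⟨max C 1, by positivity, fun x => (h x).trans (le_max_left _ _)⟩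
  set L : ℝ := Kl / (2 * C) with hL
  have hL0 : 0 ≤ L := by positivity
  set K0 : ℝ := √(2 * (2 * D + 1) ^ 2) + L * (2 * D + 1) ^ 2 with hK0
  set K1 : ℝ := √(2 * (2 * D + 1) ^ 2) + 0 * (2 * D + 1) ^ 2 with hK1
  have K00 : 0 ≤ K0 := by positivity
  have K10 : 0 ≤ K1 := by positivity
  set Kv : ℝ := 2 * C * K0 + C * K1 with hKv
  have Kv0 : 0 ≤ Kv := by positivity
  refine ⟨Kp + Kv + Kv * D, by positivity, fun μ h1 h2 => ?_⟩
  have P := dil_setup (x0 := x0) hn ho hc hD0 hD h1 h2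
  obtain ⟨v, v1, v2, v3, v4, v5⟩ := poisson_exists P (F := fun x => (laplacian p x + C) / (2 * C))
    (fun x => div_nonneg (by linarith [(abs_le.1 (hC x)).1]) (by positivity))
    (fun x => (div_le_one (by positivity)).2 (by linarith [(abs_le.1 (hC x)).2])) L hL0
    (fun x y => by
      have := lip_of_lw hKl x y
      rw [← sub_div, hL, div_mul_eq_mul_div]
      gcongr
      linarith)
  obtain ⟨u, u1, u2, u3, u4, u5⟩ := poisson_exists P (F := fun x => 1)
    (fun x => by norm_num) (fun x => le_refl _) 0 le_rfl (fun x y => by simp)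
  have lv := v4 _ v2
  have lu := u4 _ u2
  have lV : ∀ x y, (2 * C * v x - C * u x) - (2 * C * v y - C * u y) ≤ Kv * ‖x - y‖ := fun x y => by
    have a1 := mul_le_mul_of_nonneg_left (lv x y) (by positivity : 0 ≤ 2 * C)
    have a2 := mul_le_mul_of_nonneg_left (lu y x) (by positivity : 0 ≤ C)
    rw [norm_sub_rev y x] at a2
    rw [← hK0] at a1; rw [← hK1] at a2
    rw [hKv]; linarith
  refine ⟨fun x => p x + (2 * C * v x - C * u x), fun x y => ?_, fun φ hφ hφc hφs => ?_, fun x hx => ?_⟩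
  · have a1 := lip_of_lw hKp x y
    have a2 := lV x y
    have a3 : 0 ≤ Kv * D * ‖x - y‖ := by positivity
    linarith
  · have vc := cont_of_lip lv
    have uc := cont_of_lip lu
    have lc := continuous_laplacian hφ
    have lcs := hasCompactSupport_laplacian hφc
    have i1 : Integrable (fun x => p x * laplacian φ x) :=
      (hp2.continuous.mul lc).integrable_of_hasCompactSupport lcs.mul_left
    have i2 : Integrable (fun x => v x * laplacian φ x) :=
      (vc.mul lc).integrable_of_hasCompactSupport lcs.mul_left
    have i3 : Integrable (fun x => u x * laplacian φ x) :=
      (uc.mul lc).integrable_of_hasCompactSupport lcs.mul_left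
    have i4 : Integrable (fun x => 2 * C * (v x * laplacian φ x) - C * (u x * laplacian φ x)) :=
      (i2.const_mul _).sub (i3.const_mul _)
    have j1 : Integrable (fun x => φ x * laplacian p x) :=
      (hφ.continuous.mul hlap1.continuous).integrable_of_hasCompactSupport hφc.mul_right
    have j2 : Integrable φ := hφ.continuous.integrable_of_hasCompactSupport hφc
    have e1 : ∫ x, (p x + (2 * C * v x - C * u x)) * laplacian φ x =
        (∫ x, p x * laplacian φ x) + (2 * C * (∫ x, v x * laplacian φ x) - C * ∫ x, u x * laplacian φ x) := by
      rw [← integral_const_mul, ← integral_const_mul, ← integral_sub (i2.const_mul _) (i3.const_mul _),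
        ← integral_add i1 i4]
      refine integral_congr_ae (Eventually.of_forall fun x => ?_)
      simp only; ring
    have e2 : ∫ x, φ x * ((laplacian p x + C) / (2 * C)) =
        (2 * C)⁻¹ * ((∫ x, φ x * laplacian p x) + C * ∫ x, φ x) := by
      rw [← integral_const_mul, ← integral_add j1 (j2.const_mul _), ← integral_const_mul]
      refine integral_congr_ae (Eventually.of_forall fun x => ?_)
      simp only; ring
    rw [e1, parts_lap hp2 hφ hφc, v5 φ hφ hφc hφs, u5 φ hφ hφc hφs, e2]
    simp only [mul_one, mul_zero, integral_zero]
    field_simp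
    ring
  · obtain ⟨y, hy, hxy⟩ := dil_out ho hD h1 hx
    have b1 := lV x y
    have b2 := lV y x
    rw [v3 y hy, u3 y hy] at b1 b2
    rw [norm_sub_rev y x] at b2
    have b3 : Kv * ‖x - y‖ ≤ Kv * ((μ - 1) * D) := mul_le_mul_of_nonneg_left hxy Kv0
    have b4 := abs_le.1 (hpf x (frontier_subset_closure hx))
    have b5 : 0 ≤ (Kp + Kv) * (μ - 1) := mul_nonneg (by positivity) (by linarith)
    rw [abs_le]
    constructor
    · linarith [b4.1]
    · linarith [b4.2]
end Maj2


section Final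
open Filter Topology

noncomputable def gr {n : ℕ} (F : Eu n → ℝ) (x : Eu n) : Eu n := WithLp.toLp 2 (fun i => fderiv ℝ F x (bas i))

theorem gr_apply {n : ℕ} (F : Eu n → ℝ) (x : Eu n) (i : Fin n) : gr F x i = fderiv ℝ F x (bas i) := rfl

theorem gr_norm {n : ℕ} (F : Eu n → ℝ) (x : Eu n) : ‖gr F x‖ = ‖fderiv ℝ F x‖ := by
  have h : ‖gr F x‖ ^ 2 = ‖fderiv ℝ F x‖ ^ 2 := by
    rw [clm_norm_sq, EuclideanSpace.norm_sq_eq]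
    simp [gr_apply]
  exact (pow_left_inj₀ (norm_nonneg _) (norm_nonneg _) (by norm_num)).1 h

theorem gr_contDiff {n : ℕ} {F : Eu n → ℝ} (hF : ContDiff ℝ 2 F) : ContDiff ℝ 1 (gr F) :=
  contDiff_euclidean.2 fun i => contDiff_pd1 hF (by norm_num) (bas i)

theorem dvg_X {n : ℕ} {w H : Eu n → ℝ} (hw : ContDiff ℝ 2 w) (hH : ContDiff ℝ 2 H) (c : ℝ) (x : Eu n) :
    dvg (fun y => w y • gr H y - (H y + c) • gr w y) x = w x * laplacian H x - (H x + c) * laplacian w x := by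
  rw [dvg, laplacian_eq_pd2, laplacian_eq_pd2, Finset.mul_sum, Finset.mul_sum, ← Finset.sum_sub_distrib]
  refine Finset.sum_congr rfl fun i _ => ?_
  have hw0 := (hw.differentiable (by norm_num) x).hasFDerivAt
  have hH0 := (hH.differentiable (by norm_num) x).hasFDerivAt
  have hw1 := ((contDiff_pd1 (m := 1) hw (by norm_num) (bas i)).differentiable (by norm_num) x).hasFDerivAt
  have hH1 := ((contDiff_pd1 (m := 1) hH (by norm_num) (bas i)).differentiable (by norm_num) x).hasFDerivAt
  have := (hw0.mul hH1).sub ((hH0.add_const c).mul hw1)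
  have e : (fun y => (w y • gr H y - (H y + c) • gr w y) i) =
      fun y => w y * fderiv ℝ H y (bas i) - (H y + c) * fderiv ℝ w y (bas i) := by
    funext y; simp [gr_apply]
  rw [e]
  have t := this.fderiv
  change fderiv ℝ (fun y => w y * fderiv ℝ H y (bas i) - (H y + c) * fderiv ℝ w y (bas i)) x = _ at t
  rw [t]
  simp [pd2]
  ring

variable {m : ℕ} {Ω : Set (Eu (m+1))} {D : ℝ} {x0 : Eu (m+1)}

theorem key_step (ho : IsOpen Ω) (hb : Bornology.IsBounded Ω) (hc : Convex ℝ Ω) (hx0 : x0 ∈ Ω) (hD0 : 0 ≤ D)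
    (hD : ∀ x ∈ Ω, ‖x - x0‖ ≤ D) {f : Eu (m+1) → ℝ} (hfc : ContinuousOn f (closure Ω))
    (hfpos : ∀ x ∈ Ω, 0 < f x)
    (hf1 : ∀ x ∈ Ω, DifferentiableAt ℝ f x)
    (hf2 : ∀ x ∈ Ω, DifferentiableAt ℝ (fun y => fderiv ℝ f y) x)
    (hsub : ∀ x ∈ Ω, 0 ≤ laplacian f x) {κ : ℝ} (hκ : 0 < κ) {μ K t S : ℝ} (hK0 : 0 ≤ K) (h1 : 1 < μ) (h2 : μ ≤ 2)
    (ht : t = tcon (m+1) (volume Ω).toReal) (hS : S = ((μH[(m:ℝ)] : Measure (Eu (m+1))) (frontier Ω)).toReal)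
    {H0 : Eu (m+1) → ℝ} (hL : ∀ x y, H0 x - H0 y ≤ K * ‖x - y‖)
    (hweak : ∀ φ : Eu (m+1) → ℝ, ContDiff ℝ 2 φ → HasCompactSupport φ → tsupport φ ⊆ dil x0 μ Ω →
        ∫ x, H0 x * laplacian φ x = -∫ x, φ x * 0)
    (hbd : ∀ x ∈ frontier Ω, |H0 x - f x| ≤ κ + K * (μ - 1)) :
    ∫ x in Ω, f x ≤ μ * t * (∫ x in frontier Ω, f x ∂μH[(m:ℝ)]) +
      S * (K * (μ * t * ((μ - 1) * D + (μ - 1))) + 2 * (κ + K * (μ - 1) + K * (μ - 1)) * (μ * t)) := by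
  have hn : 0 < m + 1 := Nat.succ_pos m
  have hfin := frontier_finite ho hb hc
  have P := dil_setup (x0 := x0) hn ho hc hD0 hD h1 h2
  obtain ⟨u, u0, uz, ul, uw⟩ := torsion P
  rw [dil_vol h1, tcon_dil hn h1 ENNReal.toReal_nonneg, ← ht] at ul
  have ht0 : 0 ≤ t := ht ▸ tcon_nonneg _ _ ENNReal.toReal_nonneg
  have hT0 : 0 ≤ μ * t := mul_nonneg (by linarith) ht0
  have hcl := dil_closure ho hc hx0 h1
  obtain ⟨δ, hδ, hδs⟩ := hb.isCompact_closure.exists_cthickening_subset_open P.ho hcl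
  obtain ⟨ε, hε0, hεδ, hεμ⟩ : ∃ ε, 0 < ε ∧ ε ≤ δ ∧ ε ≤ μ - 1 :=
    ⟨min δ (μ - 1), lt_min hδ (by linarith), min_le_left _ _, min_le_right _ _⟩
  have hball : ∀ x ∈ closure Ω, Metric.closedBall x ε ⊆ dil x0 μ Ω := fun x hx =>
    ((Metric.closedBall_subset_closedBall hεδ).trans (Metric.closedBall_subset_cthickening hx δ)).trans hδs
  obtain ⟨ρ, M⟩ := moll_exists (m+1) ε hε0
  have H0c := cont_of_lip hL
  have uc := cont_of_lip ul
  set H := mol H0 ρ with hH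
  set w := mol u ρ with hw
  have Hs : ContDiff ℝ 2 H := contDiff_mol H0c 2 (M.sm 2) M.cs
  have ws : ContDiff ℝ 2 w := contDiff_mol uc 2 (M.sm 2) M.cs
  have Hlap : ∀ x ∈ Ω, laplacian H x = 0 := fun x hx => by
    have := mol_weak M H0c (F := fun _ => 0) (dil x0 μ Ω) hweak x (hball x (subset_closure hx))
    simpa using this
  have wlap : ∀ x ∈ Ω, laplacian w x = -1 := fun x hx => by
    have := mol_weak M uc (F := fun _ => 1) (dil x0 μ Ω) uw x (hball x (subset_closure hx))
    simpa [M.one'] using this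
  have Hd : ∀ x, ‖gr H x‖ ≤ K := fun x => by
    rw [gr_norm]; exact norm_fderiv_le hK0 (fun x y => mol_lip M hL x y) x
  have wd : ∀ x, ‖gr w x‖ ≤ μ * t := fun x => by
    rw [gr_norm]; exact norm_fderiv_le hT0 (fun x y => mol_lip M ul x y) x
  have w0 : ∀ x, 0 ≤ w x := fun x => le_mol M uc x 0 fun s _ => u0 _
  have wb : ∀ x ∈ frontier Ω, w x ≤ μ * t * ((μ - 1) * D + (μ - 1)) := fun x hx => by
    obtain ⟨y, hy, hxy⟩ := dil_out (x0 := x0) ho hD h1 hx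
    refine (near_bdry M hT0 ul uz x y hy).trans ?_
    exact mul_le_mul_of_nonneg_left (by linarith) hT0
  set c := κ + K * (μ - 1) + K * (μ - 1) with hcdef
  have c0 : 0 ≤ c := by
    have : 0 ≤ K * (μ - 1) := mul_nonneg hK0 (by linarith)
    rw [hcdef]; linarith
  have Hf : ∀ x ∈ frontier Ω, |H x - f x| ≤ c := fun x hx => by
    have a1 := hbd x hx
    have a2 := mol_close M hK0 hL x
    have a3 : K * ε ≤ K * (μ - 1) := mul_le_mul_of_nonneg_left hεμ hK0
    have a4 := abs_sub_le (H x) (H0 x) (f x)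
    rw [hcdef]
    rw [← hH] at a2
    linarith
  have fmaj : ∀ x ∈ Ω, f x ≤ H x + c := max_principle hn ho hb hfc hf1 hf2 hsub Hs Hlap c fun x hx => by
    linarith [(abs_le.1 (Hf x hx)).1]
  have f0 : ∀ x ∈ frontier Ω, 0 ≤ f x := fun x hx => by
    have : Set.MapsTo f (closure Ω) (closure (Set.Ici 0)) :=
      Set.MapsTo.closure_of_continuousOn (fun x hx => (hfpos x hx).le) hfc
    have := this (frontier_subset_closure hx)
    rwa [isClosed_Ici.closure_eq] at this
  have Hcont := Hs.continuous
  have wcont := ws.continuous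
  have hX : ContDiff ℝ 1 (fun y => w y • gr H y - (H y + c) • gr w y) := by
    have w1 : ContDiff ℝ 1 w := ws.of_le (by norm_num)
    have H1 : ContDiff ℝ 1 H := Hs.of_le (by norm_num)
    exact (w1.smul (gr_contDiff Hs)).sub ((H1.add contDiff_const).smul (gr_contDiff ws))
  have flux := flux_full ho hb hc hfin hX
  have fint : IntegrableOn f (frontier Ω) (μH[(m:ℝ)]) := int_fr hb hfin (hfc.mono frontier_subset_closure)
  have : IsFiniteMeasure ((μH[(m:ℝ)] : Measure (Eu (m+1))).restrict (frontier Ω)) := ⟨by simpa using hfin⟩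
  have s1 : ∫ x in Ω, f x ≤ ∫ x in Ω, dvg (fun y => w y • gr H y - (H y + c) • gr w y) x := by
    have e : ∫ x in Ω, dvg (fun y => w y • gr H y - (H y + c) • gr w y) x = ∫ x in Ω, (H x + c) := by
      refine setIntegral_congr_fun ho.measurableSet fun x hx => ?_
      rw [dvg_X ws Hs, Hlap x hx, wlap x hx]; ring
    rw [e]
    refine setIntegral_mono_on ?_ (int_pd hb (by fun_prop)) ho.measurableSet fmaj
    exact (hfc.integrableOn_compact hb.isCompact_closure).mono_set subset_closure
  have s2 : ∫ x in frontier Ω, ‖w x • gr H x - (H x + c) • gr w x‖ ∂μH[(m:ℝ)] ≤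
      ∫ x in frontier Ω, (μ * t * f x + (K * (μ * t * ((μ - 1) * D + (μ - 1))) + 2 * c * (μ * t))) ∂μH[(m:ℝ)] := by
    refine setIntegral_mono_on (int_fr hb hfin hX.continuous.norm.continuousOn)
      ((fint.const_mul _).add (integrable_const _)) isClosed_frontier.measurableSet fun x hx => ?_
    refine (norm_sub_le _ _).trans ?_
    rw [norm_smul, norm_smul, Real.norm_of_nonneg (w0 x)]
    have a := abs_le.1 (Hf x hx)
    have a0 : 0 ≤ H x + c := by linarith [f0 x hx]
    rw [Real.norm_of_nonneg a0]
    have b1 : w x * ‖gr H x‖ ≤ μ * t * ((μ - 1) * D + (μ - 1)) * K :=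
      mul_le_mul (wb x hx) (Hd x) (norm_nonneg _) ((w0 x).trans (wb x hx))
    have b2 : (H x + c) * ‖gr w x‖ ≤ (f x + 2 * c) * (μ * t) :=
      mul_le_mul (by linarith) (wd x) (norm_nonneg _) (by linarith)
    linarith
  have s3 : ∫ x in frontier Ω, (μ * t * f x + (K * (μ * t * ((μ - 1) * D + (μ - 1))) + 2 * c * (μ * t))) ∂μH[(m:ℝ)] =
      μ * t * (∫ x in frontier Ω, f x ∂μH[(m:ℝ)]) +
        S * (K * (μ * t * ((μ - 1) * D + (μ - 1))) + 2 * c * (μ * t)) := by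
    rw [integral_add (fint.const_mul _) (integrable_const _), integral_const_mul, integral_const, hS]
    simp [Measure.real]
  linarith

theorem main_bound (ho : IsOpen Ω) (hb : Bornology.IsBounded Ω) (hc : Convex ℝ Ω) (hne : Ω.Nonempty)
    {f : Eu (m+1) → ℝ} (hfc : ContinuousOn f (closure Ω))
    (hfpos : ∀ x ∈ Ω, 0 < f x)
    (hf1 : ∀ x ∈ Ω, DifferentiableAt ℝ f x)
    (hf2 : ∀ x ∈ Ω, DifferentiableAt ℝ (fun y => fderiv ℝ f y) x)
    (hsub : ∀ x ∈ Ω, 0 ≤ laplacian f x) :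
    ∫ x in Ω, f x ≤ tcon (m+1) (volume Ω).toReal * ∫ x in frontier Ω, f x ∂μH[(m:ℝ)] := by
  obtain ⟨x0, hx0⟩ := hne
  obtain ⟨R, hR⟩ := hb.exists_norm_le
  have hD : ∀ x ∈ Ω, ‖x - x0‖ ≤ R + R := fun x hx =>
    (norm_sub_le _ _).trans (add_le_add (hR x hx) (hR x0 hx0))
  have R0 : 0 ≤ R := (norm_nonneg _).trans (hR x0 hx0)
  set D := R + R with hDdef
  have hD0 : 0 ≤ D := by positivity
  set t := tcon (m+1) (volume Ω).toReal with ht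
  set S := ((μH[(m:ℝ)] : Measure (Eu (m+1))) (frontier Ω)).toReal with hS
  set I := ∫ x in frontier Ω, f x ∂μH[(m:ℝ)] with hI
  have step : ∀ κ > 0, ∫ x in Ω, f x ≤ t * I + S * (2 * κ * t) := by
    intro κ hκ
    obtain ⟨K, hK0, hK⟩ := majorant (x0 := x0) (Nat.succ_pos m) ho hb hc hD0 hD hfc hκ
    refine ge_of_tendsto (x := 𝓝[>] (1:ℝ)) (f := fun μ => μ * t * I +
      S * (K * (μ * t * ((μ - 1) * D + (μ - 1))) + 2 * (κ + K * (μ - 1) + K * (μ - 1)) * (μ * t))) ?_ ?_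
    · have : Continuous (fun μ : ℝ => μ * t * I +
        S * (K * (μ * t * ((μ - 1) * D + (μ - 1))) + 2 * (κ + K * (μ - 1) + K * (μ - 1)) * (μ * t))) := by fun_prop
      have := this.tendsto 1
      simp only [sub_self, zero_mul, mul_zero, add_zero, one_mul, zero_add] at this
      exact this.mono_left nhdsWithin_le_nhds
    · have : Set.Ioc (1:ℝ) 2 ∈ 𝓝[>] (1:ℝ) := Ioc_mem_nhdsGT (by norm_num)
      filter_upwards [this] with μ hμ
      obtain ⟨H0, a, b, c⟩ := hK μ hμ.1 hμ.2
      exact key_step ho hb hc hx0 hD0 hD hfc hfpos hf1 hf2 hsub hκ hK0 hμ.1 hμ.2 ht hS a b c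
  refine ge_of_tendsto (x := 𝓝[>] (0:ℝ)) (f := fun κ => t * I + S * (2 * κ * t)) ?_ ?_
  · have : Continuous (fun κ : ℝ => t * I + S * (2 * κ * t)) := by fun_prop
    have := this.tendsto 0
    simp only [zero_mul, mul_zero, add_zero] at this
    exact this.mono_left nhdsWithin_le_nhds
  · filter_upwards [self_mem_nhdsWithin] with κ hκ using step κ hκ
end Final


/-- For a positive subharmonic function `f` on a bounded open convex set `Ω ⊂ ℝⁿ`,
`∫_Ω f ≤ |Ω|^(1/n) / (ω_n^(1/n) √n) ∫_{∂Ω} f`, where `ω_n` is the volume of the unit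
ball in `ℝⁿ`. -/
theorem subharmonic_boundary_bound
    (n : ℕ) (hn : 0 < n)
    (Ω : Set (EuclideanSpace ℝ (Fin n)))
    (hΩo : IsOpen Ω) (hΩb : Bornology.IsBounded Ω)
    (hΩc : Convex ℝ Ω) (hΩne : (interior Ω).Nonempty)
    (f : EuclideanSpace ℝ (Fin n) → ℝ)
    (hfc : ContinuousOn f (closure Ω))
    (hfpos : ∀ x ∈ Ω, 0 < f x)
    (hf1 : ∀ x ∈ Ω, DifferentiableAt ℝ f x)
    (hf2 : ∀ x ∈ Ω, DifferentiableAt ℝ (fun y => fderiv ℝ f y) x)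
    (hsub : ∀ x ∈ Ω, 0 ≤ laplacian f x) :
    ∫ x in Ω, f x ≤
      ((volume Ω).toReal ^ ((n : ℝ)⁻¹) /
          ((volume (Metric.ball (0 : EuclideanSpace ℝ (Fin n)) 1)).toReal ^ ((n : ℝ)⁻¹) *
            Real.sqrt n)) *
        ∫ x in frontier Ω, f x ∂μH[(n : ℝ) - 1] := by
  obtain ⟨m, rfl⟩ : ∃ m, n = m + 1 := ⟨n - 1, by omega⟩
  have hd : ((m + 1 : ℕ) : ℝ) - 1 = m := by push_cast; ring
  rw [hd]
  exact main_bound hΩo hΩb hΩc (hΩne.mono interior_subset) hfc hfpos hf1 hf2 hsub
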